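/- Let p, q, s be distinct primes with p ≡ 5 (mod 8), q ≡ 3 (mod 8), s ≡ 3 (mod 4), (p/q) = (p/s) = 1. Then the 2-Sylow subgroup of the ideal class group of the multiquadratic field F₁ = ℚ(√(pq), √(ps), √2) is isomorphic to ℤ/2ℤ × ℤ/2ℤ. -/

import Mathlib

open NumberField

/-- The multiquadratic field `F₁ = ℚ(√(pq), √(ps), √2)`, realized inside `ℂ`. -/
noncomputable def fieldF1 (p q s : ℕ) : IntermediateField ℚ ℂ :=
  IntermediateField.adjoin ℚ
    {((Real.sqrt (p * q) : ℝ) : ℂ), ((Real.sqrt (p * s) : ℝ) : ℂ),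
     ((Real.sqrt 2 : ℝ) : ℂ)}

/-- G modulo squares -/
abbrev SqQ (G : Type*) [CommGroup G] := G ⧸ (powMonoidHom 2 : G →* G).range

lemma card_SqQ_finite_cyclic {G : Type*} [CommGroup G] [Finite G] :
    Nat.card (SqQ G) = Nat.card (powMonoidHom 2 : G →* G).ker := by
  have h1 := Subgroup.card_eq_card_quotient_mul_card_subgroup (powMonoidHom 2 : G →* G).range
  have h2 := Subgroup.card_eq_card_quotient_mul_card_subgroup (powMonoidHom 2 : G →* G).ker
  have h3 := Nat.card_congr (QuotientGroup.quotientKerEquivRange (powMonoidHom 2 : G →* G)).toEquiv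
  have h4 : 0 < Nat.card (powMonoidHom 2 : G →* G).range := Nat.card_pos
  rw [h3, h1, mul_comm] at h2
  exact Nat.eq_of_mul_eq_mul_left h4 h2

section
variable (K : Type*) [Field K] [NumberField K]

lemma card_SqQ_torsion : Nat.card (SqQ (Units.torsion K)) = 2 := by
  rw [card_SqQ_finite_cyclic]
  have hm1 : (-1 : (𝓞 K)ˣ) ∈ Units.torsion K := by
    rw [Units.torsion, CommGroup.mem_torsion, isOfFinOrder_iff_pow_eq_one]
    exact ⟨2, by norm_num, by simp⟩
  have : ((powMonoidHom 2 : Units.torsion K →* Units.torsion K).ker : Set (Units.torsion K)) = {1, ⟨-1, hm1⟩} := by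
    ext x
    simp only [SetLike.mem_coe, MonoidHom.mem_ker, powMonoidHom_apply, Set.mem_insert_iff,
      Set.mem_singleton_iff]
    rw [Subtype.ext_iff, Subtype.ext_iff, Subtype.ext_iff]
    simp only [SubmonoidClass.coe_pow, OneMemClass.coe_one]
    rw [Units.ext_iff, Units.ext_iff, Units.ext_iff]
    simp
  have h2 := Set.ncard_pair (a := (1 : Units.torsion K)) (b := ⟨-1, hm1⟩) (by
    intro h
    have := congrArg (fun x : Units.torsion K => ((x : (𝓞 K)ˣ) : 𝓞 K)) h
    simp only [OneMemClass.coe_one, Units.val_one, Units.val_neg] at this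
    have h2 : (2 : 𝓞 K) = 0 := by linear_combination this
    exact two_ne_zero h2)
  rw [← this] at h2
  exact h2

lemma card_SqQ_units : Nat.card (SqQ (𝓞 K)ˣ) = 2 ^ (Units.rank K + 1) := by
  classical
  let r := Units.rank K
  -- parametrisation
  let e : Units.torsion K × Multiplicative (Fin r → ℤ) →* (𝓞 K)ˣ :=
    { toFun := fun x => x.1 * ∏ i, (Units.fundSystem K i) ^ (x.2.toAdd i)
      map_one' := by simp
      map_mul' := by
        intro x y
        simp only [Prod.fst_mul, Prod.snd_mul, Subgroup.coe_mul, toAdd_mul, Pi.add_apply, zpow_add,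
          Finset.prod_mul_distrib]
        exact mul_mul_mul_comm _ _ _ _ }
  have he : Function.Bijective e := by
    constructor
    · intro x y hxy
      obtain ⟨z, hz, hu⟩ := Units.exist_unique_eq_mul_prod K (e x)
      have h1 := hu (x.1, x.2.toAdd) rfl
      have h2 := hu (y.1, y.2.toAdd) hxy
      have := h1.trans h2.symm
      rw [Prod.ext_iff] at this ⊢
      exact this
    · intro u
      obtain ⟨z, hz, hu⟩ := Units.exist_unique_eq_mul_prod K u
      exact ⟨(z.1, Multiplicative.ofAdd z.2), hz.symm⟩
  let E := MulEquiv.ofBijective e he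
  let f : Units.torsion K × Multiplicative (Fin r → ℤ) →* SqQ (Units.torsion K) × Multiplicative (Fin r → ZMod 2) :=
    MonoidHom.prodMap (QuotientGroup.mk' _) (AddMonoidHom.toMultiplicative
      ((Int.castAddHom (ZMod 2)).compLeft (Fin r)))
  have hf : Function.Surjective f := by
    rintro ⟨a, b⟩
    obtain ⟨a, rfl⟩ := QuotientGroup.mk_surjective a
    refine ⟨(a, Multiplicative.ofAdd fun i => ((b.toAdd i).val : ℤ)), ?_⟩
    refine Prod.ext rfl ?_
    apply Multiplicative.toAdd.injective
    ext i
    change (((b.toAdd i).val : ℤ) : ZMod 2) = b.toAdd i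
    simp
  have hg : Function.Surjective (f.comp E.symm.toMonoidHom) := hf.comp E.symm.surjective
  have hker : (f.comp E.symm.toMonoidHom).ker = (powMonoidHom 2 : (𝓞 K)ˣ →* (𝓞 K)ˣ).range := by
    ext u
    obtain ⟨⟨a, b⟩, rfl⟩ := E.surjective u
    simp only [MonoidHom.mem_ker, MonoidHom.comp_apply, MulEquiv.toMonoidHom_eq_coe, MonoidHom.coe_coe,
      MulEquiv.symm_apply_apply, MonoidHom.mem_range, powMonoidHom_apply]
    constructor
    · intro h
      have h1 : (QuotientGroup.mk a : SqQ (Units.torsion K)) = 1 := congrArg Prod.fst h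
      rw [QuotientGroup.eq_one_iff] at h1
      obtain ⟨a', ha'⟩ := h1
      have h2 : ∀ i, ((b.toAdd i : ℤ) : ZMod 2) = 0 := fun i => congrFun (congrArg Multiplicative.toAdd (congrArg Prod.snd h)) i
      have h3 : ∀ i, ∃ c : ℤ, b.toAdd i = 2 * c := fun i => by
        have := h2 i
        rw [ZMod.intCast_zmod_eq_zero_iff_dvd] at this
        exact_mod_cast this
      choose c hc using h3
      refine ⟨E (a', Multiplicative.ofAdd c), ?_⟩
      rw [← map_pow]
      congr 1
      refine Prod.ext ha' ?_
      apply Multiplicative.toAdd.injective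
      ext i
      simp [hc]
    · rintro ⟨v, hv⟩
      obtain ⟨⟨a', b'⟩, rfl⟩ := E.surjective v
      rw [← map_pow] at hv
      have := E.injective hv
      rw [← this, map_pow]
      refine Prod.ext ?_ ?_
      · change (QuotientGroup.mk a' : SqQ (Units.torsion K)) ^ 2 = 1
        rw [← QuotientGroup.mk_pow, QuotientGroup.eq_one_iff]
        exact ⟨a', rfl⟩
      · apply Multiplicative.toAdd.injective
        ext i
        change (2 • ((b'.toAdd i : ℤ) : ZMod 2)) = 0
        rw [two_nsmul]
        exact CharTwo.add_self_eq_zero _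
  have := Nat.card_congr (QuotientGroup.quotientKerEquivOfSurjective _ hg).toEquiv
  rw [hker] at this
  rw [this, Nat.card_prod, card_SqQ_torsion]
  have : Nat.card (Multiplicative (Fin r → ZMod 2)) = 2 ^ r := by
    rw [Nat.card_congr Multiplicative.toAdd, Nat.card_pi]; simp
  rw [this, pow_succ, mul_comm]

lemma card_SqQ_units_real [IsTotallyReal K] : Nat.card (SqQ (𝓞 K)ˣ) = 2 ^ (Module.finrank ℚ K) := by
  have h := InfinitePlace.card_eq_nrRealPlaces_add_nrComplexPlaces K
  rw [IsTotallyReal.nrComplexPlaces_eq_zero, add_zero, ← IsTotallyReal.finrank] at h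
  have h0 : 0 < Module.finrank ℚ K := Module.finrank_pos
  rw [card_SqQ_units, Units.rank, h]
  congr 1
  omega
end

section
open IsDedekindDomain HeightOneSpectrum UniqueFactorizationMonoid
variable {R : Type*} [CommRing R] [IsDedekindDomain R] {K : Type*} [Field K] [Algebra R K]
  [IsFractionRing R K]

lemma valMod_eq_one_iff (v : HeightOneSpectrum R) (x : Kˣ) :
    v.valuationOfNeZeroMod 2 (QuotientGroup.mk x : SqQ Kˣ) = 1 ↔
      Even (Multiplicative.toAdd (v.valuationOfNeZero x)) := by
  change (Int.quotientZMultiplesNatEquivZMod 2).toMultiplicative _ = 1 ↔ _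
  rw [MulEquiv.map_eq_one_iff]
  change (QuotientGroup.mk (v.valuationOfNeZero x) : Multiplicative ℤ ⧸ (AddSubgroup.toSubgroup (AddSubgroup.zmultiples ((2 : ℕ) : ℤ)))) = 1 ↔ _
  rw [QuotientGroup.eq_one_iff]
  change Multiplicative.toAdd (v.valuationOfNeZero x) ∈ AddSubgroup.zmultiples ((2 : ℕ) : ℤ) ↔ _
  rw [Int.mem_zmultiples_iff, even_iff_two_dvd]; rfl

lemma valNeZero_algebraMap (v : HeightOneSpectrum R) (x : Kˣ) (a : R) (ha : a ≠ 0)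
    (hx : (x : K) = algebraMap R K a) :
    Multiplicative.toAdd (v.valuationOfNeZero x) = - (multiplicity v.asIdeal (Ideal.span {a}) : ℤ) := by
  have h := valuationOfNeZero_eq v x
  rw [hx, valuation_of_algebraMap, intValuation_eq_exp_neg_multiplicity v ha] at h
  exact WithZero.coe_injective h

lemma ideal_sq_inj {I J : Ideal R} (h : I ^ 2 = J ^ 2) : I = J := by
  classical
  by_cases hI : I = 0
  · subst hI
    rw [zero_pow two_ne_zero] at h
    exact (pow_eq_zero_iff two_ne_zero |>.1 h.symm).symm
  have hJ : J ≠ 0 := by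
    rintro rfl
    rw [zero_pow two_ne_zero] at h
    exact hI (pow_eq_zero_iff two_ne_zero |>.1 h)
  have h1 := congrArg normalizedFactors h
  rw [normalizedFactors_pow, normalizedFactors_pow] at h1
  have h2 : normalizedFactors I = normalizedFactors J := by
    ext P
    have := congrArg (Multiset.count P) h1
    simpa using this
  rw [← Ideal.prod_normalizedFactors_eq_self hI, h2, Ideal.prod_normalizedFactors_eq_self hJ]

lemma exists_sq_of_even {I : Ideal R} (hI : I ≠ 0)
    (h : ∀ v : HeightOneSpectrum R, Even (multiplicity v.asIdeal I)) : ∃ J : Ideal R, I = J ^ 2 := by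
  classical
  obtain ⟨u, hu⟩ := Multiset.exists_smul_of_dvd_count (normalizedFactors I) (k := 2) (by
    intro P hP
    have hp := prime_of_normalized_factor P hP
    have := h ⟨P, Ideal.isPrime_of_prime hp, hp.ne_zero⟩
    rw [even_iff_two_dvd] at this
    have h2 := emultiplicity_eq_count_normalizedFactors hp.irreducible hI
    simp only [normalize_eq] at h2
    rwa [multiplicity_eq_of_emultiplicity_eq_some h2] at this)
  refine ⟨u.prod, ?_⟩
  have := Ideal.prod_normalizedFactors_eq_self hI
  rw [hu, Multiset.prod_nsmul] at this
  exact this.symm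

lemma even_of_sq {I J : Ideal R} (hI : I ≠ 0) (h : I = J ^ 2) (v : HeightOneSpectrum R) :
    Even (multiplicity v.asIdeal I) := by
  subst h
  have hJ : J ≠ 0 := by rintro rfl; simp at hI
  rw [FiniteMultiplicity.multiplicity_pow v.prime (FiniteMultiplicity.of_prime_left v.prime hJ)]
  exact even_two_mul _

/-- the 2-Selmer group -/
abbrev Sel2 (R K : Type*) [CommRing R] [IsDedekindDomain R] [Field K] [Algebra R K]
    [IsFractionRing R K] (S : Set (HeightOneSpectrum R)) : Subgroup (SqQ Kˣ) :=
  selmerGroup (R := R) (K := K) (S := S) (n := 2)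

lemma exists_integral_rep (x : Kˣ) : ∃ (a : R) (y x' : Kˣ), a ≠ 0 ∧ x' = x * y ^ 2 ∧ (x' : K) = algebraMap R K a := by
  obtain ⟨a, b, hb, h⟩ := IsFractionRing.div_surjective (A := R) (x : K)
  have hb0 : algebraMap R K b ≠ 0 := by
    simpa using nonZeroDivisors.ne_zero hb
  have ha0 : a ≠ 0 := by
    rintro rfl
    simp at h
    exact x.ne_zero h.symm
  refine ⟨a * b, Units.mk0 _ hb0, x * (Units.mk0 _ hb0) ^ 2, mul_ne_zero ha0 (nonZeroDivisors.ne_zero hb), rfl, ?_⟩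
  simp only [Units.val_mul, Units.val_pow_eq_pow_val, Units.val_mk0, map_mul, ← h]
  field_simp

lemma mem_Sel2_iff (x : Kˣ) (a : R) (ha : a ≠ 0) (hx : (x : K) = algebraMap R K a) :
    (QuotientGroup.mk x : SqQ Kˣ) ∈ Sel2 R K ∅ ↔ ∃ J : Ideal R, Ideal.span {a} = J ^ 2 := by
  have hs : Ideal.span {a} ≠ (0 : Ideal R) := by simpa using ha
  have key : (QuotientGroup.mk x : SqQ Kˣ) ∈ Sel2 R K ∅ ↔ ∀ v : HeightOneSpectrum R, Even (multiplicity v.asIdeal (Ideal.span {a})) := by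
    constructor
    · intro h v
      have := h v (by simp)
      rw [valMod_eq_one_iff, valNeZero_algebraMap v x a ha hx, even_neg] at this
      exact_mod_cast this
    · intro h v _
      rw [valMod_eq_one_iff, valNeZero_algebraMap v x a ha hx, even_neg]
      exact_mod_cast h v
  rw [key]
  exact ⟨fun h => exists_sq_of_even hs h, fun ⟨J, hJ⟩ v => even_of_sq hs hJ v⟩

lemma mk_mul_sq (x y : Kˣ) : (QuotientGroup.mk (x * y ^ 2) : SqQ Kˣ) = QuotientGroup.mk x := by
  rw [QuotientGroup.eq]
  exact ⟨y⁻¹, by simp⟩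

lemma mk_eq_mk_iff_sq {G : Type*} [CommGroup G] (x y : G) : (QuotientGroup.mk x : SqQ G) = QuotientGroup.mk y ↔ ∃ z, y = x * z ^ 2 := by
  rw [QuotientGroup.eq]
  constructor
  · rintro ⟨z, hz⟩
    refine ⟨z, ?_⟩
    simp only [powMonoidHom_apply] at hz
    rw [hz]; simp
  · rintro ⟨z, rfl⟩
    exact ⟨z, by simp⟩

/-- Elements of the Selmer group have nice representatives. -/
lemma Sel2_rep (X : SqQ Kˣ) (hX : X ∈ Sel2 R K ∅) : ∃ (x : Kˣ) (a : R) (J : Ideal R), X = QuotientGroup.mk x ∧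
    a ≠ 0 ∧ (x : K) = algebraMap R K a ∧ Ideal.span {a} = J ^ 2 := by
  obtain ⟨x, rfl⟩ := QuotientGroup.mk_surjective X
  obtain ⟨a, y, x', ha, h1, h2⟩ := exists_integral_rep (R := R) x
  have e : (QuotientGroup.mk x : SqQ Kˣ) = QuotientGroup.mk x' := by rw [h1, mk_mul_sq]
  rw [e] at hX
  obtain ⟨J, hJ⟩ := (mem_Sel2_iff x' a ha h2).1 hX
  exact ⟨x', a, J, e, ha, h2, hJ⟩

/-- If the class group has no 2-torsion, the Selmer group consists of units. -/
lemma Sel2_units (h : ∀ c : ClassGroup R, c ^ 2 = 1 → c = 1) (X : SqQ Kˣ) (hX : X ∈ Sel2 R K ∅) :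
    ∃ u : Rˣ, X = QuotientGroup.mk (Units.map (algebraMap R K).toMonoidHom u) := by
  obtain ⟨x, a, J, rfl, ha, hx, hJ⟩ := Sel2_rep X hX
  have hJ0 : J ≠ 0 := by
    rintro rfl
    simp at hJ
    exact ha hJ
  have hc := h (ClassGroup.mk0 ⟨J, mem_nonZeroDivisors_iff_ne_zero.2 hJ0⟩) (by
    rw [← map_pow, ClassGroup.mk0_eq_one_iff]
    change (J ^ 2).IsPrincipal
    rw [← hJ]; exact ⟨a, rfl⟩)
  rw [ClassGroup.mk0_eq_one_iff] at hc
  obtain ⟨b, hb⟩ := hc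
  have hb' : J = Ideal.span {b} := hb
  have hb0 : b ≠ 0 := by rintro rfl; simp at hb'; exact hJ0 hb'
  rw [hb', Ideal.span_singleton_pow, Ideal.span_singleton_eq_span_singleton] at hJ
  obtain ⟨u, hu⟩ := hJ
  have hbK : algebraMap R K b ≠ 0 := by simpa using hb0
  refine ⟨u⁻¹, ?_⟩
  rw [mk_eq_mk_iff_sq]
  refine ⟨(Units.mk0 _ hbK)⁻¹, ?_⟩
  rw [inv_pow, eq_mul_inv_iff_mul_eq, map_inv, inv_mul_eq_iff_eq_mul]
  ext
  simp [hx, ← map_pow, ← map_mul, ← hu, mul_comm]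

lemma Sel2_card_lower [Finite (Sel2 R K ∅)] :
    Nat.card {c : ClassGroup R // c ^ 2 = 1} * Nat.card (SqQ Rˣ) ≤ Nat.card (Sel2 R K ∅) := by
  classical
  have h1 : ∀ c : {c : ClassGroup R // c ^ 2 = 1}, ∃ (J : nonZeroDivisors (Ideal R)) (a : R),
      ClassGroup.mk0 J = c.1 ∧ a ≠ 0 ∧ Ideal.span {a} = (J : Ideal R) ^ 2 := by
    rintro ⟨c, hc⟩
    obtain ⟨J, rfl⟩ := ClassGroup.mk0_surjective c
    rw [← map_pow, ClassGroup.mk0_eq_one_iff] at hc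
    obtain ⟨a, ha⟩ := hc
    have ha' : ((J ^ 2 : nonZeroDivisors (Ideal R)) : Ideal R) = Ideal.span {a} := ha
    refine ⟨J, a, rfl, ?_, ?_⟩
    · rintro rfl
      have := nonZeroDivisors.ne_zero (J ^ 2).2
      rw [ha'] at this
      simp at this
    · rw [← ha']; simp
  choose J a hJ ha haJ using h1
  have haK : ∀ c, algebraMap R K (a c) ≠ 0 := fun c => by simpa using ha c
  let g : {c : ClassGroup R // c ^ 2 = 1} × SqQ Rˣ → Sel2 R K ∅ := fun c =>
    ⟨QuotientGroup.mk (Units.mk0 _ (haK c.1) * Units.map (algebraMap R K).toMonoidHom c.2.out), by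
      rw [QuotientGroup.mk_mul]
      apply mul_mem (s := Sel2 R K ∅)
      · exact (mem_Sel2_iff _ (a c.1) (ha c.1) rfl).2 ⟨J c.1, haJ _⟩
      · intro v _
        exact v.valuation_of_unit_mod_eq 2 c.2.out⟩
  rw [← Nat.card_prod]
  apply Nat.card_le_card_of_injective g
  rintro ⟨c, u⟩ ⟨c', u'⟩ h
  have h := congrArg Subtype.val h
  simp only [g] at h
  rw [mk_eq_mk_iff_sq] at h
  obtain ⟨z, hz⟩ := h
  obtain ⟨m, n, hn, hmn⟩ := IsFractionRing.div_surjective (A := R) (z : K)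
  have hn0 : algebraMap R K n ≠ 0 := by simpa using nonZeroDivisors.ne_zero hn
  have hz' := congrArg Units.val hz
  simp only [Units.val_mul, Units.val_mk0, Units.val_pow_eq_pow_val, ← hmn] at hz'
  have hz2 : a c' * u'.out * n ^ 2 = a c * u.out * m ^ 2 := by
    apply IsFractionRing.injective R K
    simp only [map_mul, map_pow]
    rw [div_pow, mul_div_assoc', eq_div_iff (pow_ne_zero _ hn0)] at hz'
    exact hz'
  have hm0 : m ≠ 0 := by
    rintro rfl
    simp at hmn
    exact z.ne_zero hmn.symm
  have hid : ((J c' : Ideal R) * Ideal.span {n}) ^ 2 = ((J c : Ideal R) * Ideal.span {m}) ^ 2 := by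
    rw [mul_pow, mul_pow, ← haJ, ← haJ, Ideal.span_singleton_pow, Ideal.span_singleton_pow,
      Ideal.span_singleton_mul_span_singleton, Ideal.span_singleton_mul_span_singleton,
      Ideal.span_singleton_eq_span_singleton]
    refine ⟨u'.out * u.out⁻¹, ?_⟩
    rw [Units.val_mul]
    have : ((u.out : Rˣ) : R) * ((u.out⁻¹ : Rˣ) : R) = 1 := by simp
    linear_combination ((u.out⁻¹ : Rˣ) : R) * hz2 + a c * m ^ 2 * this
  have hid2 : (J c' : Ideal R) * Ideal.span {n} = (J c : Ideal R) * Ideal.span {m} := by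
    exact ideal_sq_inj hid
  have hcc : c = c' := by
    apply Subtype.ext
    rw [← hJ, ← hJ, ClassGroup.mk0_eq_mk0_iff]
    exact ⟨m, n, hm0, nonZeroDivisors.ne_zero hn, by rw [mul_comm, ← hid2, mul_comm]⟩
  subst hcc
  refine Prod.ext rfl ?_
  have h5 : (u'.out : R) * n ^ 2 = u.out * m ^ 2 := by
    apply mul_left_cancel₀ (ha c)
    linear_combination hz2
  have h6 := mul_left_cancel₀ (nonZeroDivisors.ne_zero (J c).2) hid2
  rw [Ideal.span_singleton_eq_span_singleton] at h6
  obtain ⟨w, hw⟩ := h6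
  have h7 : (u'.out : R) = u.out * (w : R) ^ 2 := by
    apply mul_right_cancel₀ (pow_ne_zero 2 (nonZeroDivisors.ne_zero hn))
    rw [h5, ← hw]; ring
  have h8 : u'.out = u.out * w ^ 2 := by ext; simpa using h7
  have := (mk_eq_mk_iff_sq u.out u'.out).2 ⟨w, h8⟩
  simpa using this

lemma Sel2_card_S (h : ∀ c : ClassGroup R, c ^ 2 = 1 → c = 1) [Finite (SqQ Rˣ)] (S : Set (HeightOneSpectrum R))
    (hS : S.Finite) : Finite (Sel2 R K S) ∧ Nat.card (Sel2 R K S) ≤ 2 ^ S.ncard * Nat.card (SqQ Rˣ) := by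
  classical
  have : Finite S := hS
  let f : SqQ Rˣ → SqQ Kˣ := fun u => QuotientGroup.mk (Units.map (algebraMap R K).toMonoidHom u.out)
  have hf : ((Sel2 R K ∅ : Subgroup (SqQ Kˣ)) : Set (SqQ Kˣ)) ⊆ Set.range f := by
    intro X hX
    obtain ⟨u, rfl⟩ := Sel2_units h X hX
    refine ⟨QuotientGroup.mk u, ?_⟩
    obtain ⟨w, hw⟩ := (mk_eq_mk_iff_sq (QuotientGroup.mk u : SqQ Rˣ).out u).1 (by simp)
    simp only [f]
    rw [mk_eq_mk_iff_sq]
    refine ⟨Units.map (algebraMap R K).toMonoidHom w, ?_⟩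
    conv_lhs => rw [hw]
    simp
  have hfin : Finite (Sel2 R K ∅) := (Set.finite_range f).subset hf
  have hcard : Nat.card (Sel2 R K ∅) ≤ Nat.card (SqQ Rˣ) := by
    calc Nat.card (Sel2 R K ∅) = (((Sel2 R K ∅ : Subgroup (SqQ Kˣ)) : Set (SqQ Kˣ))).ncard := rfl
      _ ≤ (Set.range f).ncard := Set.ncard_le_ncard hf (Set.finite_range f)
      _ ≤ Nat.card (SqQ Rˣ) := by
        rw [← Set.image_univ, ← Set.ncard_univ]
        exact Set.ncard_image_le
  let v := selmerGroup.valuation (R := R) (K := K) (S := S) (n := 2)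
  have hker : v.ker = (Sel2 R K ∅).subgroupOf (Sel2 R K S) := selmerGroup.valuation_ker_eq
  have hle : Sel2 R K ∅ ≤ Sel2 R K S := selmerGroup.monotone (by simp)
  have e := Subgroup.subgroupOfEquivOfLe hle
  have hk : Finite v.ker := by rw [hker]; exact Finite.of_equiv _ e.symm.toEquiv
  have hkc : Nat.card v.ker = Nat.card (Sel2 R K ∅) := by rw [hker]; exact Nat.card_congr e.toEquiv
  have hr : Nat.card v.range ≤ 2 ^ S.ncard := by
    calc Nat.card v.range ≤ Nat.card (S → Multiplicative (ZMod 2)) := Nat.card_le_card_of_injective _ Subtype.val_injective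
      _ = 2 ^ S.ncard := by
        rw [Nat.card_fun, Nat.card_coe_set_eq]; congr 1; simp
  have hq : Nat.card (Sel2 R K S ⧸ v.ker) = Nat.card v.range := Nat.card_congr (QuotientGroup.quotientKerEquivRange v).toEquiv
  have hqf : Finite (Sel2 R K S ⧸ v.ker) := Finite.of_equiv _ (QuotientGroup.quotientKerEquivRange v).symm.toEquiv
  have htot := Subgroup.card_eq_card_quotient_mul_card_subgroup v.ker
  constructor
  · exact Finite.of_equiv _ (Subgroup.groupEquivQuotientProdSubgroup (s := v.ker)).symm
  · rw [htot, hq, hkc]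
    exact Nat.mul_le_mul hr hcard

end

section quad
variable {k K : Type*} [Field k] [Field K] [Algebra k K]

/-- a quadratic extension given by a square root -/
lemma quad_basis (h2 : Module.finrank k K = 2) (θ : K) (d : k) (hθ : θ ^ 2 = algebraMap k K d)
    (hd : ¬ IsSquare d) : ∃ b : Module.Basis (Fin 2) k K, b 0 = 1 ∧ b 1 = θ := by
  have hli : LinearIndependent k ![(1 : K), θ] := by
    rw [LinearIndependent.pair_iff]
    intro s t hst
    have ht : t = 0 := by
      by_contra ht
      apply hd
      refine ⟨s / t, ?_⟩
      apply (algebraMap k K).injective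
      have ht' : algebraMap k K t ≠ 0 := by simpa using ht
      rw [← hθ, map_mul, map_div₀]
      rw [Algebra.smul_def, Algebra.smul_def, mul_one] at hst
      have : θ = - (algebraMap k K s / algebraMap k K t) := by
        field_simp
        linear_combination hst
      rw [this]; ring
    subst ht
    simpa using hst
  have hc : Fintype.card (Fin 2) = Module.finrank k K := by simp [h2]
  have : FiniteDimensional k K := Module.finite_of_finrank_pos (by omega)
  refine ⟨basisOfLinearIndependentOfCardEqFinrank hli hc, ?_, ?_⟩
  · simp [coe_basisOfLinearIndependentOfCardEqFinrank]
  · simp [coe_basisOfLinearIndependentOfCardEqFinrank]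

lemma quad_rep (h2 : Module.finrank k K = 2) (θ : K) (d : k) (hθ : θ ^ 2 = algebraMap k K d)
    (hd : ¬ IsSquare d) (x : K) : ∃ u v : k, x = algebraMap k K u + algebraMap k K v * θ := by
  obtain ⟨b, h0, h1⟩ := quad_basis h2 θ d hθ hd
  refine ⟨b.repr x 0, b.repr x 1, ?_⟩
  have := b.sum_repr x
  rw [Fin.sum_univ_two, h0, h1, Algebra.smul_def, Algebra.smul_def, mul_one] at this
  exact this.symm

lemma quad_norm (h2 : Module.finrank k K = 2) (θ : K) (d : k) (hθ : θ ^ 2 = algebraMap k K d)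
    (hd : ¬ IsSquare d) (u v : k) :
    Algebra.norm k (algebraMap k K u + algebraMap k K v * θ) = u ^ 2 - d * v ^ 2 := by
  obtain ⟨b, h0, h1⟩ := quad_basis h2 θ d hθ hd
  rw [Algebra.norm_eq_matrix_det b, Matrix.det_fin_two]
  have e0 : (algebraMap k K u + algebraMap k K v * θ) * b 0 = u • b 0 + v • b 1 := by
    rw [h0, h1, Algebra.smul_def, Algebra.smul_def]; ring
  have e1 : (algebraMap k K u + algebraMap k K v * θ) * b 1 = (d * v) • b 0 + u • b 1 := by
    rw [h0, h1, Algebra.smul_def, Algebra.smul_def, map_mul, ← hθ]; ring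
  simp only [Algebra.leftMulMatrix_eq_repr_mul, e0, e1]
  simp
  ring

/-- elements whose norm is a square come from below modulo squares -/
lemma quad_norm_sq [CharZero k] (h2 : Module.finrank k K = 2) (θ : K) (d : k) (hθ : θ ^ 2 = algebraMap k K d)
    (hd : ¬ IsSquare d) (a : K) (ha : a ≠ 0) (c : k) (hc : Algebra.norm k a = c ^ 2) :
    ∃ (b : k) (z : K), b ≠ 0 ∧ z ≠ 0 ∧ a * z ^ 2 = algebraMap k K b := by
  obtain ⟨u, v, rfl⟩ := quad_rep h2 θ d hθ hd a
  rw [quad_norm h2 θ d hθ hd] at hc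
  by_cases huc : u + c = 0
  · have hc' : c = -u := by linear_combination huc
    have hdv : d * v ^ 2 = 0 := by rw [hc'] at hc; linear_combination -hc
    have hv : v = 0 := by
      rcases mul_eq_zero.1 hdv with h | h
      · exact (hd (h ▸ IsSquare.zero)).elim
      · simpa using h
    subst hv
    refine ⟨u, 1, ?_, one_ne_zero, by simp⟩
    rintro rfl
    simp at ha
  · have h20 : (2 : k) ≠ 0 := two_ne_zero
    have hne : algebraMap k K (2 * (u + c)) ≠ 0 := by
      rw [Ne, map_eq_zero_iff _ (algebraMap k K).injective]
      exact mul_ne_zero h20 huc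
    have hsq : (algebraMap k K (u + c) + algebraMap k K v * θ) ^ 2 =
        algebraMap k K (2 * (u + c)) * (algebraMap k K u + algebraMap k K v * θ) := by
      have hc' := congrArg (algebraMap k K) hc
      simp only [map_sub, map_mul, map_pow, map_add, map_ofNat] at hc' ⊢
      linear_combination (algebraMap k K v) ^ 2 * hθ - hc'
    refine ⟨2 * (u + c), algebraMap k K (2 * (u + c)) * (algebraMap k K (u + c) + algebraMap k K v * θ)⁻¹,
      mul_ne_zero h20 huc, ?_, ?_⟩
    · apply mul_ne_zero hne
      apply inv_ne_zero
      intro h0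
      rw [h0] at hsq
      exact mul_ne_zero hne ha (by rw [← hsq]; simp)
    · have h0 : (algebraMap k K (u + c) + algebraMap k K v * θ) ≠ 0 := by
        intro h0
        rw [h0] at hsq
        exact mul_ne_zero hne ha (by rw [← hsq]; simp)
      field_simp
      rw [hsq]
      ring

end quad

section
open IsDedekindDomain HeightOneSpectrum

/-- e = 1 at some prime above `v` -/
def UnramAt (k K : Type*) [Field k] [Field K] [Algebra k K]
    (v : HeightOneSpectrum (𝓞 k)) : Prop :=
  ∃ w : HeightOneSpectrum (𝓞 K), w.asIdeal.LiesOver v.asIdeal ∧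
    v.asIdeal.ramificationIdx' w.asIdeal = 1

variable {k K : Type*} [Field k] [Field K] [NumberField k] [NumberField K] [Algebra k K]

/-- base change on square classes -/
noncomputable def jSq (k K : Type*) [Field k] [Field K] [Algebra k K] : SqQ kˣ →* SqQ Kˣ :=
  QuotientGroup.map _ _ (Units.map (algebraMap k K).toMonoidHom) (by
    rintro _ ⟨x, rfl⟩
    exact ⟨Units.map (algebraMap k K).toMonoidHom x, by simp⟩)

/-- norm on square classes -/
noncomputable def nSq (k K : Type*) [Field k] [Field K] [Algebra k K] : SqQ Kˣ →* SqQ kˣ :=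
  QuotientGroup.map _ _ (Units.map (Algebra.norm k : K →* k)) (by
    rintro _ ⟨x, rfl⟩
    exact ⟨Units.map (Algebra.norm k : K →* k) x, by simp⟩)

lemma jSq_mem (S : Set (HeightOneSpectrum (𝓞 k))) (hS : ∀ v ∉ S, UnramAt k K v) (X : SqQ kˣ)
    (hX : jSq k K X ∈ Sel2 (𝓞 K) K ∅) : X ∈ Sel2 (𝓞 k) k S := by
  obtain ⟨x, rfl⟩ := QuotientGroup.mk_surjective X
  intro v hv
  obtain ⟨w, hw, he⟩ := hS v hv
  have h1 := hX w (by simp)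
  change w.valuationOfNeZeroMod 2 (QuotientGroup.mk (Units.map (algebraMap k K).toMonoidHom x) : SqQ Kˣ) = 1 at h1
  rw [valMod_eq_one_iff] at h1 ⊢
  have h2 := valuation_liesOver K v w (x : k)
  rw [he, pow_one] at h2
  have h3 := valuationOfNeZero_eq v x
  have h4 := valuationOfNeZero_eq w (Units.map (algebraMap k K).toMonoidHom x)
  have h5 : v.valuationOfNeZero x = w.valuationOfNeZero (Units.map (algebraMap k K).toMonoidHom x) := by
    apply WithZero.coe_injective
    rw [h3, h4, h2]; rfl
  rw [h5]; exact h1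

lemma nSq_mem (X : SqQ Kˣ)
    (hX : X ∈ Sel2 (𝓞 K) K ∅) : nSq k K X ∈ Sel2 (𝓞 k) k ∅ := by
  obtain ⟨x, a, J, rfl, ha, hx, hJ⟩ := Sel2_rep X hX
  change (QuotientGroup.mk (Units.map (Algebra.norm k : K →* k) x) : SqQ kˣ) ∈ _
  have hN : ((Units.map (Algebra.norm k : K →* k) x : kˣ) : k) = algebraMap (𝓞 k) k (Algebra.intNorm (𝓞 k) (𝓞 K) a) := by
    rw [Algebra.algebraMap_intNorm (L := K), ← hx]; rfl
  rw [mem_Sel2_iff _ (Algebra.intNorm (𝓞 k) (𝓞 K) a) _ hN]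
  · refine ⟨Ideal.relNorm (𝓞 k) J, ?_⟩
    rw [← Ideal.relNorm_singleton, hJ, map_pow]
  · intro h
    rw [h, map_zero] at hN
    exact (Units.ne_zero _) hN

theorem ambiguous_bound [IsTotallyReal K] (h2 : Module.finrank k K = 2) (θ : K) (d : k)
    (hθ : θ ^ 2 = algebraMap k K d) (hd : ¬ IsSquare d)
    (hcl : ∀ c : ClassGroup (𝓞 k), c ^ 2 = 1 → c = 1)
    (S : Set (HeightOneSpectrum (𝓞 k))) (hSf : S.Finite) (hS : ∀ v ∉ S, UnramAt k K v)
    (U : Subgroup (𝓞 k)ˣ) (hU : ∀ u : (𝓞 k)ˣ, (∃ a : K, Algebra.norm k a = (u : 𝓞 k)) → u ∈ U) :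
    2 * U.index * Nat.card {c : ClassGroup (𝓞 K) // c ^ 2 = 1} ≤ 2 ^ S.ncard := by
  classical
  have : IsTotallyReal k := IsTotallyReal.of_algebra k K
  set r := Module.finrank ℚ k with hr
  have hrpos : 0 < r := Module.finrank_pos
  have hK : Module.finrank ℚ K = r * 2 := by rw [hr, ← h2, Module.finrank_mul_finrank]
  have cK := card_SqQ_units_real K
  have ck := card_SqQ_units_real k
  rw [hK] at cK
  rw [← hr] at ck
  have : Finite (SqQ (𝓞 k)ˣ) := Nat.finite_of_card_ne_zero (by rw [ck]; positivity)
  have : Finite (SqQ (𝓞 K)ˣ) := Nat.finite_of_card_ne_zero (by rw [cK]; positivity)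
  obtain ⟨hTf, hTc⟩ := Sel2_card_S (K := k) hcl S hSf
  let T := Sel2 (𝓞 k) k S
  let G := Sel2 (𝓞 K) K ∅
  -- the image of units
  let ι : SqQ (𝓞 k)ˣ →* SqQ kˣ := QuotientGroup.map _ _ (Units.map (algebraMap (𝓞 k) k).toMonoidHom) (by
    rintro _ ⟨x, rfl⟩
    exact ⟨Units.map (algebraMap (𝓞 k) k).toMonoidHom x, by simp⟩)
  let V : Subgroup (SqQ (𝓞 k)ˣ) := U.map (QuotientGroup.mk' _)
  have hVi : V.index = U.index := by
    apply Subgroup.index_map_eq _ (QuotientGroup.mk'_surjective _)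
    rw [QuotientGroup.ker_mk']
    rintro _ ⟨x, rfl⟩
    apply hU
    refine ⟨algebraMap k K x, ?_⟩
    rw [Algebra.norm_algebraMap, h2]
    simp
  have hVc : Nat.card V * U.index = 2 ^ r := by
    rw [← hVi, Subgroup.card_mul_index, ck]
  let f : G →* SqQ kˣ := (nSq k K).comp G.subtype
  have hfr : f.range ≤ V.map ι := by
    rintro _ ⟨⟨X, hX⟩, rfl⟩
    obtain ⟨u, hu⟩ := Sel2_units hcl (nSq k K X) (nSq_mem X hX)
    refine ⟨QuotientGroup.mk u, ⟨u, ?_, rfl⟩, ?_⟩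
    · apply hU
      obtain ⟨x, rfl⟩ := QuotientGroup.mk_surjective X
      change (QuotientGroup.mk (Units.map (Algebra.norm k : K →* k) x) : SqQ kˣ) = _ at hu
      rw [mk_eq_mk_iff_sq] at hu
      obtain ⟨z, hz⟩ := hu
      refine ⟨x * algebraMap k K z, ?_⟩
      rw [map_mul, Algebra.norm_algebraMap, h2]
      have := congrArg Units.val hz
      simpa using this.symm
    · exact hu.symm
  have : Finite (V.map ι) := Set.Finite.image ι (Set.toFinite (V : Set (SqQ (𝓞 k)ˣ)))
  have : Finite f.range := Set.Finite.subset (Set.toFinite (V.map ι : Set (SqQ kˣ))) hfr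
  have hfrc : Nat.card f.range * U.index ≤ 2 ^ r := by
    rw [← hVc]
    apply Nat.mul_le_mul_right
    calc Nat.card f.range ≤ Nat.card (V.map ι) := Subgroup.card_le_of_le hfr
      _ ≤ Nat.card V := Nat.card_le_card_of_surjective (fun x : V => (⟨ι x, ⟨x, x.2, rfl⟩⟩ : V.map ι)) (by
        rintro ⟨_, ⟨x, hx, rfl⟩⟩; exact ⟨⟨x, hx⟩, rfl⟩)
  -- the kernel
  let g : T →* SqQ Kˣ := (jSq k K).comp T.subtype
  have hd0 : d ≠ 0 := by rintro rfl; exact hd IsSquare.zero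
  have hθ0 : θ ≠ 0 := by rintro rfl; apply hd0; apply (algebraMap k K).injective; rw [← hθ]; simp
  have hD1 : jSq k K (QuotientGroup.mk (Units.mk0 d hd0)) = 1 := by
    change (QuotientGroup.mk (Units.map (algebraMap k K).toMonoidHom (Units.mk0 d hd0)) : SqQ Kˣ) = 1
    rw [QuotientGroup.eq_one_iff]
    exact ⟨Units.mk0 θ hθ0, by ext; simpa using hθ⟩
  have hD2 : (QuotientGroup.mk (Units.mk0 d hd0) : SqQ kˣ) ≠ 1 := by
    rw [Ne, QuotientGroup.eq_one_iff]
    rintro ⟨z, hz⟩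
    apply hd
    refine ⟨z, ?_⟩
    have := congrArg Units.val hz
    simp at this
    rw [← this]; ring
  have hDT : (QuotientGroup.mk (Units.mk0 d hd0) : SqQ kˣ) ∈ T := by
    apply jSq_mem S hS
    rw [hD1]; exact one_mem _
  have hgk : 2 ≤ Nat.card g.ker := by
    have : Nontrivial g.ker := ⟨1, ⟨⟨_, hDT⟩, hD1⟩, fun h => hD2 (congrArg (fun x : g.ker => ((x : T) : SqQ kˣ)) h).symm⟩
    exact Finite.one_lt_card
  have hTt := Subgroup.card_eq_card_quotient_mul_card_subgroup g.ker
  rw [Nat.card_congr (QuotientGroup.quotientKerEquivRange g).toEquiv] at hTt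
  have hkle : f.ker.map G.subtype ≤ g.range := by
    rintro _ ⟨⟨X, hX⟩, hX1, rfl⟩
    obtain ⟨x, rfl⟩ := QuotientGroup.mk_surjective X
    have hX1 : (QuotientGroup.mk (Units.map (Algebra.norm k : K →* k) x) : SqQ kˣ) = 1 := hX1
    rw [QuotientGroup.eq_one_iff] at hX1
    obtain ⟨c, hc⟩ := hX1
    have hc' := congrArg Units.val hc
    simp at hc'
    obtain ⟨b, z, hb, hz, hbz⟩ := quad_norm_sq h2 θ d hθ hd x x.ne_zero c hc'.symm
    have hjb : jSq k K (QuotientGroup.mk (Units.mk0 b hb)) = QuotientGroup.mk x := by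
      change (QuotientGroup.mk (Units.map (algebraMap k K).toMonoidHom (Units.mk0 b hb)) : SqQ Kˣ) = _
      symm
      rw [mk_eq_mk_iff_sq]
      exact ⟨Units.mk0 z hz, by ext; simpa using hbz.symm⟩
    refine ⟨⟨QuotientGroup.mk (Units.mk0 b hb), ?_⟩, hjb⟩
    apply jSq_mem S hS
    rw [hjb]; exact hX
  have : Finite g.range := Set.finite_range g
  have : Finite (f.ker.map G.subtype) := Set.Finite.subset (Set.toFinite (g.range : Set (SqQ Kˣ))) hkle
  have hkc : Nat.card f.ker = Nat.card (f.ker.map G.subtype) :=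
    Nat.card_congr (f.ker.equivMapOfInjective G.subtype G.subtype_injective).toEquiv
  have : Finite f.ker := Finite.of_equiv _ (f.ker.equivMapOfInjective G.subtype G.subtype_injective).symm.toEquiv
  have hkc2 : Nat.card f.ker * 2 ≤ 2 ^ S.ncard * 2 ^ r := by
    rw [hkc, ← ck]
    calc _ ≤ Nat.card g.range * 2 := Nat.mul_le_mul_right _ (Subgroup.card_le_of_le hkle)
      _ ≤ Nat.card g.range * Nat.card g.ker := Nat.mul_le_mul_left _ hgk
      _ = Nat.card T := hTt.symm
      _ ≤ _ := hTc
  have : Finite (G ⧸ f.ker) := Finite.of_equiv _ (QuotientGroup.quotientKerEquivRange f).symm.toEquiv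
  have : Finite G := Finite.of_equiv _ (Subgroup.groupEquivQuotientProdSubgroup (s := f.ker)).symm
  have hGt := Subgroup.card_eq_card_quotient_mul_card_subgroup f.ker
  rw [Nat.card_congr (QuotientGroup.quotientKerEquivRange f).toEquiv] at hGt
  have hlow := Sel2_card_lower (R := 𝓞 K) (K := K)
  rw [cK] at hlow
  have hlow' : Nat.card {c : ClassGroup (𝓞 K) // c ^ 2 = 1} * 2 ^ (r * 2) ≤ Nat.card f.range * Nat.card f.ker := by
    rw [← hGt]; exact hlow
  have hpos : 0 < 2 ^ (r * 2) := by positivity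
  apply Nat.le_of_mul_le_mul_right _ hpos
  calc 2 * U.index * Nat.card {c : ClassGroup (𝓞 K) // c ^ 2 = 1} * 2 ^ (r * 2)
      = 2 * U.index * (Nat.card {c : ClassGroup (𝓞 K) // c ^ 2 = 1} * 2 ^ (r * 2)) := by ring
    _ ≤ 2 * U.index * (Nat.card f.range * Nat.card f.ker) := Nat.mul_le_mul_left _ hlow'
    _ = (Nat.card f.range * U.index) * (Nat.card f.ker * 2) := by ring
    _ ≤ 2 ^ r * (2 ^ S.ncard * 2 ^ r) := Nat.mul_le_mul hfrc hkc2
    _ = 2 ^ S.ncard * 2 ^ (r * 2) := by rw [pow_mul]; ring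

end

section
open IsDedekindDomain HeightOneSpectrum

lemma unram_of_disc {k K : Type*} [Field k] [Field K] [NumberField k] [NumberField K] [Algebra k K]
    (h2 : Module.finrank k K = 2) (θ : 𝓞 K) (t n : 𝓞 k)
    (hθ : θ ^ 2 - algebraMap (𝓞 k) (𝓞 K) t * θ + algebraMap (𝓞 k) (𝓞 K) n = 0)
    (hnot : ∀ x : k, algebraMap k K x ≠ θ) (v : HeightOneSpectrum (𝓞 k))
    (hv : t ^ 2 - 4 * n ∉ v.asIdeal) : UnramAt k K v := by
  obtain ⟨⟨P, hP, hPv⟩⟩ := v.asIdeal.nonempty_primesOver (S := 𝓞 K)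
  have hPne : P ≠ ⊥ := Ideal.ne_bot_of_liesOver_of_ne_bot v.ne_bot P
  refine ⟨⟨P, hP, hPne⟩, hPv, ?_⟩
  by_contra he
  change v.asIdeal.ramificationIdx' P ≠ 1 at he
  have hle : Ideal.map (algebraMap (𝓞 k) (𝓞 K)) v.asIdeal ≤ P :=
    Ideal.map_le_iff_le_comap.2 (by rw [hPv.over])
  rw [Ideal.ramificationIdx'_ne_one_iff hle] at he
  have hInt : IsIntegral (𝓞 k) θ := Algebra.IsIntegral.isIntegral θ
  have hintk : IsIntegral k (θ : K) := Algebra.IsIntegral.isIntegral (θ : K)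
  have hmap := minpoly.isIntegrallyClosed_eq_field_fractions k K hInt
  have hdeg : (minpoly k (θ : K)).natDegree = 2 := by
    have h1 : (minpoly k (θ : K)).natDegree ∣ 2 := by rw [← h2]; exact minpoly.degree_dvd hintk
    rcases (Nat.dvd_prime Nat.prime_two).1 h1 with h | h
    · exfalso
      rw [minpoly.natDegree_eq_one_iff] at h
      obtain ⟨x, hx⟩ := h
      exact hnot x hx
    · exact h
  have hdegA : (minpoly (𝓞 k) θ).natDegree = 2 := by
    rw [← hdeg]
    change _ = (minpoly k (algebraMap (𝓞 K) K θ)).natDegree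
    rw [hmap, (minpoly.monic hInt).natDegree_map]
  let f : Polynomial (𝓞 k) := Polynomial.X ^ 2 + (Polynomial.C (-t) * Polynomial.X + Polynomial.C n)
  have hlow : (Polynomial.C (-t) * Polynomial.X + Polynomial.C n).degree < 2 := by
    refine lt_of_le_of_lt Polynomial.degree_linear_le ?_
    norm_num
  have hfm : f.Monic := Polynomial.monic_X_pow_add (n := 2) hlow
  have hfd : f.natDegree = 2 := by
    apply Polynomial.natDegree_eq_of_degree_eq_some
    simp only [f]
    rw [Polynomial.degree_add_eq_left_of_degree_lt]
    · simp
    · simpa using hlow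
  have hf0 : Polynomial.aeval θ f = 0 := by
    simp only [f, map_add, map_mul, map_pow, Polynomial.aeval_X, Polynomial.aeval_C, map_neg]
    linear_combination hθ
  have hmf : minpoly (𝓞 k) θ = f := (Polynomial.eq_of_monic_of_dvd_of_natDegree_le
    (minpoly.monic hInt) hfm (minpoly.isIntegrallyClosed_dvd hInt hf0) (by rw [hdegA, hfd])).symm
  have hadj : Algebra.adjoin k {algebraMap (𝓞 K) K θ} = ⊤ := by
    rw [← IntermediateField.adjoin_simple_toSubalgebra_of_isAlgebraic hintk.isAlgebraic]
    have : IntermediateField.adjoin k {(θ : K)} = ⊤ := by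
      apply IntermediateField.eq_of_le_of_finrank_le le_top
      rw [IntermediateField.adjoin.finrank hintk, hdeg, IntermediateField.finrank_top', h2]
    rw [this]; rfl
  have hD := aeval_derivative_mem_differentIdeal (𝓞 k) k K θ hadj
  have hPm : v.asIdeal.IsMaximal := v.isMaximal
  have hPD := pow_sub_one_dvd_differentIdeal (𝓞 k) P 2 v.ne_bot (Ideal.dvd_iff_le.2 he)
  have hmem : Polynomial.aeval θ (Polynomial.derivative (minpoly (𝓞 k) θ)) ∈ P := by
    have := Ideal.dvd_iff_le.1 hPD hD
    simpa using this
  rw [hmf] at hmem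
  have e1 : Polynomial.aeval θ (Polynomial.derivative f) = 2 * θ - algebraMap (𝓞 k) (𝓞 K) t := by
    simp [f]; ring
  rw [e1] at hmem
  apply hv
  rw [hPv.over, Ideal.under, Ideal.mem_comap]
  have : algebraMap (𝓞 k) (𝓞 K) (t ^ 2 - 4 * n) = (2 * θ - algebraMap (𝓞 k) (𝓞 K) t) * (2 * θ - algebraMap (𝓞 k) (𝓞 K) t) := by
    simp only [map_sub, map_mul, map_pow, map_ofNat]
    linear_combination -4 * hθ
  rw [this]
  exact P.mul_mem_left _ hmem

variable {K : Type*} [Field K] [NumberField K]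

lemma finite_over (ℓ : ℕ) (hℓ : ℓ ≠ 0) : {v : HeightOneSpectrum (𝓞 K) | (ℓ : 𝓞 K) ∈ v.asIdeal}.Finite := by
  have h := Ideal.finite_factors (I := Ideal.span {(ℓ : 𝓞 K)}) (by simpa using hℓ)
  refine h.subset ?_
  intro v hv
  exact Ideal.dvd_span_singleton.2 hv

/-- counting primes -/
lemma count_primes (ℓ : ℕ) (hℓ : ℓ.Prime) (T : Set (HeightOneSpectrum (𝓞 K))) (e f : ℕ)
    (he0 : e ≠ 0)
    (he : ∀ v ∈ T, v.asIdeal ^ e ∣ Ideal.span {(ℓ : 𝓞 K)})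
    (hf : ∀ v ∈ T, ℓ ^ f ≤ Ideal.absNorm v.asIdeal) :
    T.Finite ∧ T.ncard * (f * e) ≤ Module.finrank ℚ K := by
  classical
  have hfin : T.Finite := (finite_over (K := K) ℓ hℓ.ne_zero).subset (by
    intro v hv
    exact Ideal.dvd_span_singleton.1 ((dvd_pow_self _ he0).trans (he v hv)))
  refine ⟨hfin, ?_⟩
  have hprod : ∏ v ∈ hfin.toFinset, v.asIdeal ^ e ∣ Ideal.span {(ℓ : 𝓞 K)} := by
    apply Finset.prod_dvd_of_coprime
    · intro v hv w hw hvw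
      apply IsCoprime.pow
      rw [Ideal.isCoprime_iff_sup_eq]
      apply Ideal.IsMaximal.coprime_of_ne v.isMaximal w.isMaximal
      intro h; exact hvw (HeightOneSpectrum.ext h)
    · intro v hv
      exact he v (by simpa using hv)
  have h1 := map_dvd (Ideal.absNorm (S := 𝓞 K)) hprod
  have h2 : Ideal.absNorm (Ideal.span {(ℓ : 𝓞 K)}) = ℓ ^ Module.finrank ℚ K := by
    rw [Ideal.absNorm_span_singleton, ← Int.cast_natCast, ← eq_intCast (algebraMap ℤ (𝓞 K)),
      Algebra.norm_algebraMap, RingOfIntegers.rank]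
    simp
  rw [h2, map_prod] at h1
  have h3 := Nat.le_of_dvd (by have := hℓ.pos; positivity) h1
  have h4 : ℓ ^ (T.ncard * (f * e)) ≤ ∏ v ∈ hfin.toFinset, Ideal.absNorm (v.asIdeal ^ e) := by
    rw [mul_comm, pow_mul, Set.ncard_eq_toFinset_card T hfin]
    apply Finset.pow_card_le_prod
    intro v hv
    rw [map_pow, pow_mul]
    exact Nat.pow_le_pow_left (hf v (by simpa using hv)) e
  exact (Nat.pow_le_pow_iff_right hℓ.one_lt).1 (h4.trans h3)

lemma absNorm_over (ℓ : ℕ) (hℓ : ℓ.Prime) (v : HeightOneSpectrum (𝓞 K)) (hv : (ℓ : 𝓞 K) ∈ v.asIdeal) :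
    ℓ ^ 1 ≤ Ideal.absNorm v.asIdeal ∧ ((ℓ ^ 2 ≤ Ideal.absNorm v.asIdeal) ∨ Nonempty (𝓞 K →+* ZMod ℓ)) := by
  have h2 : Ideal.absNorm (Ideal.span {(ℓ : 𝓞 K)}) = ℓ ^ Module.finrank ℚ K := by
    rw [Ideal.absNorm_span_singleton, ← Int.cast_natCast, ← eq_intCast (algebraMap ℤ (𝓞 K)),
      Algebra.norm_algebraMap, RingOfIntegers.rank]
    simp
  have h1 := Ideal.absNorm_dvd_absNorm_of_le ((Ideal.span_singleton_le_iff_mem _).2 hv)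
  rw [h2, Nat.dvd_prime_pow hℓ] at h1
  obtain ⟨j, -, hj⟩ := h1
  have hj0 : j ≠ 0 := by
    rintro rfl
    rw [pow_zero, Ideal.absNorm_eq_one_iff] at hj
    exact v.isPrime.ne_top hj
  constructor
  · rw [hj]; exact Nat.pow_le_pow_right hℓ.pos (by omega)
  by_cases hj1 : j = 1
  · right
    subst hj1
    rw [pow_one] at hj
    have hc : Nat.card (𝓞 K ⧸ v.asIdeal) = ℓ := by
      rw [← hj]; rfl
    have : Finite (𝓞 K ⧸ v.asIdeal) := Nat.finite_of_card_ne_zero (by rw [hc]; exact hℓ.ne_zero)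
    have := Fintype.ofFinite (𝓞 K ⧸ v.asIdeal)
    rw [Nat.card_eq_fintype_card] at hc
    exact ⟨(ZMod.ringEquivOfPrime _ hℓ hc).symm.toRingHom.comp (Ideal.Quotient.mk _)⟩
  · left
    rw [hj]; exact Nat.pow_le_pow_right hℓ.pos (by omega)

end

section loc

lemma padic_hensel_one (p : ℕ) [Fact p.Prime] (hp2 : p ≠ 2) (ε : ℚ_[p]) (hε : ‖ε‖ < 1) : IsSquare (1 + ε) := by
  let e : ℤ_[p] := ⟨ε, hε.le⟩
  let F : Polynomial ℤ_[p] := Polynomial.X ^ 2 - Polynomial.C (1 + e)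
  have h2 : ‖(2 : ℤ_[p])‖ = 1 := by
    have := (PadicInt.norm_natCast_eq_one_iff (p := p) (n := 2)).2
      ((Nat.coprime_primes (Fact.out) Nat.prime_two).2 hp2)
    simpa using this
  obtain ⟨z, hz, -⟩ := hensels_lemma (p := p) (F := F) (a := 1) (by
    have e1 : (Polynomial.aeval (1 : ℤ_[p])) F = -e := by simp [F]
    have e2 : (Polynomial.aeval (1 : ℤ_[p])) F.derivative = 2 := by simp [F]; norm_num
    rw [e1, e2, h2, norm_neg]
    rw [one_pow]; exact hε)
  have hz2 : z ^ 2 = 1 + e := by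
    have : (Polynomial.aeval z) F = z ^ 2 - (1 + e) := by simp [F]
    rw [this] at hz
    linear_combination hz
  refine ⟨z, ?_⟩
  have := congrArg (fun x : ℤ_[p] => (x : ℚ_[p])) hz2
  simp only [PadicInt.coe_pow, PadicInt.coe_add, PadicInt.coe_one] at this
  rw [← sq, this]

lemma padic_sq_of_res (p : ℕ) [Fact p.Prime] (hp2 : p ≠ 2) (u : ℤ) (hu : ¬ (p : ℤ) ∣ u)
    (hs : IsSquare (u : ZMod p)) : IsSquare (u : ℚ_[p]) := by
  obtain ⟨b, hb⟩ := hs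
  obtain ⟨b, rfl⟩ := ZMod.intCast_surjective b
  have h1 : (p : ℤ) ∣ u - b * b := by
    rw [← ZMod.intCast_zmod_eq_zero_iff_dvd]; push_cast; rw [hb]; ring
  obtain ⟨c, hc⟩ := h1
  have hbp : ¬ (p : ℤ) ∣ b := by
    intro h
    exact hu ((dvd_sub_right (dvd_mul_of_dvd_left h b)).1 (by
      have : u - b * b = p * c := hc
      exact (dvd_sub_comm).1 ⟨c, this⟩))
  have hbn : ‖(b : ℚ_[p])‖ = 1 := by
    have h1 := Padic.norm_int_le_one (p := p) b
    have h2 := Padic.norm_intCast_lt_one_iff (p := p) (k := b)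
    exact le_antisymm h1 (not_lt.1 (fun h => hbp (h2.1 h)))
  have hb0 : (b : ℚ_[p]) ≠ 0 := by
    intro h; rw [h] at hbn; simp at hbn
  obtain ⟨z, hz⟩ := padic_hensel_one p hp2 (p * c / b ^ 2) (by
    rw [norm_div, norm_pow, hbn, norm_mul]
    have h1 := Padic.norm_int_le_one (p := p) c
    have h2 := Padic.norm_p_lt_one (p := p)
    have h3 := norm_nonneg (p : ℚ_[p])
    simp only [one_pow, div_one]
    nlinarith [norm_nonneg (c : ℚ_[p])])
  refine ⟨z * b, ?_⟩
  have : (u : ℚ_[p]) = b * b + p * c := by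
    have h : u = b * b + p * c := by linear_combination hc
    rw [h]; push_cast; ring
  rw [this]
  field_simp at hz
  linear_combination hz

/-- `qs ≡ 1 mod 8` is a square in `ℚ_2` -/
lemma padic_two_sq (n : ℕ) (hn : n % 8 = 1) : IsSquare (n : ℚ_[2]) := by
  obtain ⟨c, hc⟩ : ∃ c : ℕ, n = 8 * c + 1 := ⟨n / 8, by omega⟩
  let F : Polynomial ℤ_[2] := Polynomial.X ^ 2 + Polynomial.X - Polynomial.C (2 * (c : ℤ_[2]))
  obtain ⟨z, hz, -⟩ := hensels_lemma (p := 2) (F := F) (a := 0) (by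
    have e1 : (Polynomial.aeval (0 : ℤ_[2])) F = -(2 * (c : ℤ_[2])) := by simp [F]
    have e2 : (Polynomial.aeval (0 : ℤ_[2])) F.derivative = 1 := by simp [F]
    rw [e1, e2, norm_neg, norm_mul]
    have h1 := PadicInt.norm_le_one (c : ℤ_[2])
    have h2 : ‖(2 : ℤ_[2])‖ < 1 := by
      have := PadicInt.norm_p (p := 2)
      rw [Nat.cast_ofNat] at this
      rw [this]; norm_num
    simp only [norm_one, one_pow]
    nlinarith [norm_nonneg (c : ℤ_[2]), norm_nonneg (2 : ℤ_[2])])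
  have hz2 : z ^ 2 + z - 2 * c = 0 := by
    have : (Polynomial.aeval z) F = z ^ 2 + z - 2 * c := by simp [F]
    rw [this] at hz
    exact hz
  refine ⟨2 * z + 1, ?_⟩
  have := congrArg (fun x : ℤ_[2] => (x : ℚ_[2])) hz2
  have this : (z : ℚ_[2]) ^ 2 + z - 2 * c = 0 := this
  rw [hc]; push_cast
  linear_combination (-4) * this

/-- no solution in `ℚ_2` -/
lemma padic_two_no (d : ℕ) (hd : d % 4 = 3) (x y : ℚ_[2]) : x ^ 2 - d * y ^ 2 ≠ -1 := by
  intro h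
  have hd4 : ((d : ℕ) : ZMod (2 ^ 2)) = 3 := by
    have : ((d : ℕ) : ZMod 4) = ((3 : ℕ) : ZMod 4) := by
      rw [ZMod.natCast_eq_natCast_iff]; exact hd
    exact this
  let φ := PadicInt.toZModPow (p := 2) 2
  have D : ∀ a b c : ZMod (2 ^ 2), a ^ 2 - 3 * b ^ 2 = - c ^ 2 → a ≠ 1 ∧ b ≠ 1 ∧ c ≠ 1 := by
    change ∀ a b c : ZMod 4, _
    decide
  have red : ∀ a b c : ℤ_[2], a ^ 2 - d * b ^ 2 = - c ^ 2 → a ≠ 1 ∧ b ≠ 1 ∧ c ≠ 1 := by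
    intro a b c habc
    have h1 := congrArg φ habc
    simp only [map_sub, map_mul, map_pow, map_neg, map_natCast] at h1
    rw [hd4] at h1
    have := D _ _ _ h1
    refine ⟨?_, ?_, ?_⟩
    · rintro rfl; exact this.1 (map_one φ)
    · rintro rfl; exact this.2.1 (map_one φ)
    · rintro rfl; exact this.2.2 (map_one φ)
  by_cases hx : ‖x‖ ≤ 1
  · by_cases hy : ‖y‖ ≤ 1
    · refine (red ⟨x, hx⟩ ⟨y, hy⟩ 1 ?_).2.2 rfl
      apply PadicInt.ext
      change x ^ 2 - d * y ^ 2 = - 1 ^ 2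
      rw [h]; norm_num
    · by_cases hxy : ‖x‖ ≤ ‖y‖
      · have hy0 : y ≠ 0 := by rintro rfl; simp at hy
        refine (red ⟨x / y, ?_⟩ 1 ⟨1 / y, ?_⟩ ?_).2.1 rfl
        · rw [norm_div]; exact div_le_one_of_le₀ hxy (norm_nonneg _)
        · rw [norm_div, norm_one]; exact div_le_one_of_le₀ (by linarith) (norm_nonneg _)
        · apply PadicInt.ext
          change (x / y) ^ 2 - d * 1 ^ 2 = - (1 / y) ^ 2
          field_simp
          linear_combination h
      · linarith
  · have hx0 : x ≠ 0 := by rintro rfl; simp at hx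
    by_cases hxy : ‖x‖ ≤ ‖y‖
    · have hy0 : y ≠ 0 := by rintro rfl; simp at hxy; exact hx0 hxy
      refine (red ⟨x / y, ?_⟩ 1 ⟨1 / y, ?_⟩ ?_).2.1 rfl
      · rw [norm_div]; exact div_le_one_of_le₀ hxy (norm_nonneg _)
      · rw [norm_div, norm_one]; exact div_le_one_of_le₀ (by linarith) (norm_nonneg _)
      · apply PadicInt.ext
        change (x / y) ^ 2 - d * 1 ^ 2 = - (1 / y) ^ 2
        field_simp
        linear_combination h
    · refine (red 1 ⟨y / x, ?_⟩ ⟨1 / x, ?_⟩ ?_).1 rfl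
      · rw [norm_div]; exact div_le_one_of_le₀ (by linarith) (norm_nonneg _)
      · rw [norm_div, norm_one]; exact div_le_one_of_le₀ (by linarith) (norm_nonneg _)
      · apply PadicInt.ext
        change 1 ^ 2 - d * (y / x) ^ 2 = - (1 / x) ^ 2
        field_simp
        linear_combination h

lemma padic_norm_parity (p : ℕ) [Fact p.Prime] (x y : ℚ_[p]) (hy : y ≠ 0) (hx : x ≠ 0) : ‖x ^ 2‖ ≠ ‖(p : ℚ_[p]) * y ^ 2‖ := by
  intro h
  have hp : (p : ℚ_[p]) ≠ 0 := by
    have := (Fact.out : p.Prime).ne_zero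
    exact_mod_cast this
  have hx2 : x ^ 2 ≠ 0 := pow_ne_zero _ hx
  have hy2 : (p : ℚ_[p]) * y ^ 2 ≠ 0 := mul_ne_zero hp (pow_ne_zero _ hy)
  rw [Padic.norm_eq_zpow_neg_valuation hx2, Padic.norm_eq_zpow_neg_valuation hy2] at h
  have hp1 : (1 : ℝ) < p := by exact_mod_cast (Fact.out : p.Prime).one_lt
  have := zpow_right_injective₀ (by linarith) hp1.ne' h
  rw [Padic.valuation_pow, Padic.valuation_mul hp (pow_ne_zero _ hy), Padic.valuation_pow, Padic.valuation_p] at this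
  push_cast at this
  omega

/-- the group generated by `p` and squares -/
def NmP (p : ℕ) [Fact p.Prime] : Subgroup ℚ_[p]ˣ where
  carrier := {t | ∃ (n : ℤ) (z : ℚ_[p]), (t : ℚ_[p]) = (p : ℚ_[p]) ^ n * z ^ 2}
  one_mem' := ⟨0, 1, by simp⟩
  mul_mem' := by
    rintro a b ⟨n, z, h⟩ ⟨n', z', h'⟩
    refine ⟨n + n', z * z', ?_⟩
    have hp : (p : ℚ_[p]) ≠ 0 := by
      have := (Fact.out : p.Prime).ne_zero
      exact_mod_cast this
    rw [Units.val_mul, h, h', zpow_add₀ hp]; ring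
  inv_mem' := by
    rintro a ⟨n, z, h⟩
    refine ⟨-n, z⁻¹, ?_⟩
    rw [Units.val_inv_eq_inv_val, h, mul_inv, zpow_neg, inv_pow]

lemma NmP_of_norm (p : ℕ) [Fact p.Prime] (hp4 : p % 4 = 1) (r : ℚ_[p]) (hr : IsSquare r)
    (x y : ℚ_[p]) (t : ℚ_[p]ˣ) (ht : (t : ℚ_[p]) = x ^ 2 - p * r * y ^ 2) : t ∈ NmP p := by
  have hpp : p.Prime := Fact.out
  have hp : (p : ℚ_[p]) ≠ 0 := by exact_mod_cast hpp.ne_zero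
  have hp2 : p ≠ 2 := by rintro rfl; simp at hp4
  obtain ⟨ρ, rfl⟩ := hr
  obtain ⟨i, hi⟩ := padic_sq_of_res p hp2 (-1) (by
    intro h
    rw [dvd_neg] at h
    exact hpp.one_lt.ne' (Nat.dvd_one.1 (by exact_mod_cast h))) (by
      rw [show ((-1 : ℤ) : ZMod p) = -1 by simp]
      rw [ZMod.exists_sq_eq_neg_one_iff]; omega)
  push_cast at hi
  have ht' : (t : ℚ_[p]) = x ^ 2 - p * (ρ * y) ^ 2 := by rw [ht]; ring
  generalize ρ * y = w at ht'
  by_cases hw : w = 0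
  · exact ⟨0, x, by rw [ht', hw]; simp⟩
  by_cases hx : x = 0
  · exact ⟨1, w * i, by rw [ht', hx, zpow_one, mul_pow, sq i, ← hi]; ring⟩
  rcases lt_or_gt_of_ne (padic_norm_parity p x w hw hx) with h | h
  · obtain ⟨z, hz⟩ := padic_hensel_one p hp2 (- (x ^ 2 / (p * w ^ 2))) (by
      rw [norm_neg, norm_div, div_lt_one]
      · exact h
      · exact lt_of_le_of_lt (norm_nonneg _) h)
    refine ⟨1, w * i * z, ?_⟩
    have e : w * i * z * (w * i * z) = w ^ 2 * (i * i) * (z * z) := by ring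
    rw [ht', zpow_one, sq (w * i * z), e, ← hi, ← hz]
    field_simp
    ring
  · obtain ⟨z, hz⟩ := padic_hensel_one p hp2 (- (p * w ^ 2 / x ^ 2)) (by
      rw [norm_neg, norm_div, div_lt_one]
      · exact h
      · exact lt_of_le_of_lt (norm_nonneg _) h)
    refine ⟨0, x * z, ?_⟩
    rw [ht', zpow_zero, mul_pow, sq z, ← hz]
    field_simp
    ring

lemma toZMod_eq_of_norm_lt {p : ℕ} [Fact p.Prime] (x : ℤ_[p]) (h : ‖x‖ < 1) : PadicInt.toZMod x = 0 := by
  have : x ∈ RingHom.ker (PadicInt.toZMod (p := p)) := by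
    rw [PadicInt.ker_toZMod, IsLocalRing.mem_maximalIdeal, PadicInt.mem_nonunits]
    exact h
  exact this

lemma res_of_NmP (p : ℕ) [Fact p.Prime] (m : ℤ) (hm : ¬ (p : ℤ) ∣ m) (t : ℚ_[p]ˣ) (ht : (t : ℚ_[p]) = m)
    (h : t ∈ NmP p) : IsSquare (m : ZMod p) := by
  have hpp : p.Prime := Fact.out
  have hp : (p : ℚ_[p]) ≠ 0 := by exact_mod_cast hpp.ne_zero
  obtain ⟨n, z, hz⟩ := h
  have hz0 : z ≠ 0 := by rintro rfl; exact t.ne_zero (by rw [hz]; simp)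
  have hmn : ‖(m : ℚ_[p])‖ = 1 := by
    have h1 := Padic.norm_int_le_one (p := p) m
    have h2 := Padic.norm_intCast_lt_one_iff (p := p) (k := m)
    exact le_antisymm h1 (not_lt.1 (fun h => hm (h2.1 h)))
  have hm0 : (m : ℚ_[p]) ≠ 0 := by
    intro h; rw [h] at hmn; simp at hmn
  rw [ht] at hz
  have hn : n = -2 * z.valuation := by
    have h1 : (m : ℚ_[p]).valuation = 0 := by
      rw [Padic.norm_eq_zpow_neg_valuation hm0] at hmn
      have hp1 : (1 : ℝ) < p := by exact_mod_cast hpp.one_lt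
      have := (zpow_eq_one_iff_right₀ (by linarith) hp1.ne').1 hmn
      omega
    rw [hz, Padic.valuation_mul (zpow_ne_zero _ hp) (pow_ne_zero _ hz0), Padic.valuation_pow,
      Padic.valuation_zpow, Padic.valuation_p] at h1
    push_cast at h1
    linarith
  set y := (p : ℚ_[p]) ^ (-z.valuation) * z with hy
  have hy2 : (m : ℚ_[p]) = y ^ 2 := by
    have e2 : (p : ℚ_[p]) ^ (-2 * z.valuation) = ((p : ℚ_[p]) ^ (-z.valuation)) ^ 2 := by
      rw [sq, ← zpow_add₀ hp]; congr 1; ring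
    rw [hz, hy, mul_pow, hn, e2]
  have hyn : ‖y‖ ≤ 1 := by
    rw [hy2, norm_pow] at hmn
    have := norm_nonneg y
    nlinarith
  obtain ⟨Y, hY⟩ : ∃ Y : ℤ_[p], (Y : ℚ_[p]) = y := ⟨⟨y, hyn⟩, rfl⟩
  have e : (m : ℤ_[p]) = Y * Y := by
    apply PadicInt.ext
    rw [PadicInt.coe_intCast, PadicInt.coe_mul, hY, hy2, sq]
  have := congrArg PadicInt.toZMod e
  rw [map_intCast, map_mul] at this
  exact ⟨_, this⟩

/-- `-1` is not a norm from a ramified quadratic extension when `r ≡ 3 mod 4` -/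
lemma padic_neg_one_no (r : ℕ) [Fact r.Prime] (hr4 : r % 4 = 3) (d : ℕ) (hd : ¬ r ∣ d) (x y : ℚ_[r]) :
    x ^ 2 - (r * d) * y ^ 2 ≠ -1 := by
  intro h
  have hrp : r.Prime := Fact.out
  have hdn : ‖(d : ℚ_[r])‖ = 1 := by
    have := (Padic.norm_natCast_eq_one_iff (p := r) (n := d)).2 ((Nat.Prime.coprime_iff_not_dvd hrp).2 hd)
    exact this
  have hne : ∀ z : ℤ_[r], ‖z ^ 2 + 1‖ < 1 → False := by
    intro z hz
    have := toZMod_eq_of_norm_lt _ hz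
    rw [map_add, map_pow, map_one] at this
    have h3 : IsSquare (-1 : ZMod r) := ⟨PadicInt.toZMod z, by linear_combination -this⟩
    rw [ZMod.exists_sq_eq_neg_one_iff] at h3
    omega
  have hlt : ‖((r : ℚ_[r]) * d) * y ^ 2‖ < 1 := by
    by_contra hge
    rw [not_lt] at hge
    by_cases hx : x = 0
    · rw [hx] at h
      have h1 : ((r : ℚ_[r]) * d) * y ^ 2 = 1 := by linear_combination -h
      have h2 := congrArg norm h1
      have hy : y ≠ 0 := by rintro rfl; simp at h1
      have := padic_norm_parity r 1 y hy one_ne_zero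
      rw [norm_mul, norm_mul, hdn, mul_one, ← norm_mul] at h2
      rw [h2] at this
      simp at this
    · have hy : y ≠ 0 := by rintro rfl; simp at hge; linarith
      have hpar := padic_norm_parity r x y hy hx
      have e : ‖((r : ℚ_[r]) * d) * y ^ 2‖ = ‖(r : ℚ_[r]) * y ^ 2‖ := by
        rw [norm_mul, norm_mul, norm_mul, hdn, mul_one]
      rw [← e] at hpar
      have hmax := Padic.add_eq_max_of_ne (p := r) (q := x ^ 2) (r := -(((r : ℚ_[r]) * d) * y ^ 2)) (by rwa [norm_neg])
      rw [← sub_eq_add_neg, h, norm_neg, norm_neg, norm_one] at hmax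
      have h1 : ‖((r : ℚ_[r]) * d) * y ^ 2‖ = 1 := le_antisymm (by rw [hmax]; exact le_max_right _ _) hge
      have := padic_norm_parity r 1 y hy one_ne_zero
      rw [← e, h1] at this
      simp at this
  have hx2 : ‖x ^ 2 + 1‖ < 1 := by
    rw [show x ^ 2 + 1 = ((r : ℚ_[r]) * d) * y ^ 2 by linear_combination h]; exact hlt
  have hxn : ‖x‖ ≤ 1 := by
    have h1 : ‖x ^ 2‖ ≤ max ‖x ^ 2 + 1‖ ‖(-1 : ℚ_[r])‖ := by
      have := Padic.nonarchimedean (p := r) (x ^ 2 + 1) (-1)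
      simpa using this
    rw [norm_neg, norm_one, max_eq_right hx2.le, norm_pow] at h1
    have := norm_nonneg x
    nlinarith
  exact hne ⟨x, hxn⟩ hx2

end loc

section fld
open IsDedekindDomain

lemma finrank_adjoin_sq {k K : Type*} [Field k] [Field K] [Algebra k K] (x : K) (d : k)
    (hx : x ^ 2 = algebraMap k K d) (hd : ¬ IsSquare d) :
    Module.finrank k (IntermediateField.adjoin k {x}) = 2 := by
  have hirr : Irreducible (Polynomial.X ^ 2 - Polynomial.C d) :=
    X_pow_sub_C_irreducible_of_prime Nat.prime_two (fun b hb => hd ⟨b, by rw [← hb, sq]⟩)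
  have hm : minpoly k x = Polynomial.X ^ 2 - Polynomial.C d := by
    symm
    apply minpoly.eq_of_irreducible_of_monic hirr
    · simp [hx]
    · exact Polynomial.monic_X_pow_sub_C d two_ne_zero
  have hInt : IsIntegral k x := by
    refine ⟨Polynomial.X ^ 2 - Polynomial.C d, Polynomial.monic_X_pow_sub_C d two_ne_zero, ?_⟩
    simp [hx]
  rw [IntermediateField.adjoin.finrank hInt, hm, Polynomial.natDegree_X_pow_sub_C]

lemma nonsq_ext {k K : Type*} [Field k] [Field K] [Algebra k K] [CharZero k]
    (h2 : Module.finrank k K = 2) (θ : K) (d : k) (hθ : θ ^ 2 = algebraMap k K d)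
    (hd : ¬ IsSquare d) (e : k) (he : ¬ IsSquare e) (hde : ¬ IsSquare (d * e)) :
    ¬ IsSquare (algebraMap k K e) := by
  rintro ⟨z, hz⟩
  obtain ⟨u, v, rfl⟩ := quad_rep h2 θ d hθ hd z
  obtain ⟨b, h0, h1⟩ := quad_basis h2 θ d hθ hd
  have h : (u ^ 2 + d * v ^ 2 - e) • b 0 + (2 * u * v) • b 1 = 0 := by
    rw [h0, h1, Algebra.smul_def, Algebra.smul_def]
    simp only [map_sub, map_add, map_mul, map_pow, map_ofNat]
    rw [hz, ← hθ]; ring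
  have hli := LinearIndependent.pair_iff.1 (show LinearIndependent k ![b 0, b 1] by
    have e : ![b 0, b 1] = b := by ext i; fin_cases i <;> rfl
    rw [e]; exact b.linearIndependent) _ _ h
  obtain ⟨h3, h4⟩ := hli
  have : u = 0 ∨ v = 0 := by
    rcases mul_eq_zero.1 h4 with h | h
    · left; simpa using h
    · right; exact h
  rcases this with rfl | rfl
  · exact hde ⟨d * v, by linear_combination (-d) * h3⟩
  · exact he ⟨u, by linear_combination -h3⟩

lemma not_mem_of_nonsq {k K : Type*} [Field k] [Field K] [Algebra k K] (θ : K) (d : k)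
    (hθ : θ ^ 2 = algebraMap k K d) (hd : ¬ IsSquare d) (x : k) : algebraMap k K x ≠ θ := by
  rintro rfl
  exact hd ⟨x, by rw [← sq]; exact (algebraMap k K).injective (by rw [map_pow, hθ])⟩

lemma algHom_of_sq {k E F : Type*} [Field k] [Field E] [Field F] [Algebra k E] [Algebra k F]
    (S : Set E) (hS : IntermediateField.adjoin k S = ⊤)
    (h : ∀ x ∈ S, ∃ d : k, x ^ 2 = algebraMap k E d ∧ IsSquare (algebraMap k F d)) :
    Nonempty (E →ₐ[k] F) := by
  apply IntermediateField.nonempty_algHom_of_adjoin_splits _ hS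
  intro x hx
  obtain ⟨d, h1, t, ht⟩ := h x hx
  have hx0 : Polynomial.aeval x (Polynomial.X ^ 2 - Polynomial.C d) = 0 := by simp [h1]
  have hmon := Polynomial.monic_X_pow_sub_C d two_ne_zero
  refine ⟨⟨_, hmon, by simpa [Polynomial.aeval_def] using hx0⟩, ?_⟩
  refine Polynomial.Splits.of_dvd (g := (Polynomial.X ^ 2 - Polynomial.C d).map (algebraMap k F)) ?_ ?_
    (Polynomial.map_dvd _ (minpoly.dvd k x hx0))
  · have : (Polynomial.X ^ 2 - Polynomial.C d).map (algebraMap k F) =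
      (Polynomial.X - Polynomial.C t) * (Polynomial.X - Polynomial.C (-t)) := by
      simp only [Polynomial.map_sub, Polynomial.map_pow, Polynomial.map_X, Polynomial.map_C, ht, map_mul, map_neg]
      ring
    rw [this]
    exact (Polynomial.Splits.X_sub_C _).mul (Polynomial.Splits.X_sub_C _)
  · exact (hmon.map _).ne_zero

/-- norms to `E` from a field containing `√B` -/
lemma norm_form {E K : Type*} [Field E] [Field K] [Algebra E K] [FiniteDimensional E K]
    [CharZero E] (y : K) (B : E) (hy : y ^ 2 = algebraMap E K B) (hB : ¬ IsSquare B) (z : K) :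
    ∃ X Y : E, Algebra.norm E z = X ^ 2 - B * Y ^ 2 := by
  let M := IntermediateField.adjoin E {y}
  let y' : M := ⟨y, IntermediateField.mem_adjoin_simple_self E y⟩
  have hy' : y' ^ 2 = algebraMap E M B := Subtype.ext hy
  have h2 := finrank_adjoin_sq y B hy hB
  obtain ⟨X, Y, h⟩ := quad_rep h2 y' B hy' hB (Algebra.norm M z)
  refine ⟨X, Y, ?_⟩
  rw [← Algebra.norm_norm (R := E) (S := M), h, quad_norm h2 y' B hy' hB]

end fld

section amb
open IsDedekindDomain
variable {k K : Type*} [Field k] [Field K] [NumberField k] [NumberField K] [Algebra k K]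

/-- the units of `k` that are norms from `K` -/
def normUnits (k K : Type*) [Field k] [Field K] [NumberField k] [NumberField K] [Algebra k K] :
    Subgroup (𝓞 k)ˣ where
  carrier := {u | ∃ a : K, Algebra.norm k a = ((u : 𝓞 k) : k)}
  one_mem' := ⟨1, by simp⟩
  mul_mem' := by
    rintro a b ⟨x, hx⟩ ⟨y, hy⟩
    exact ⟨x * y, by rw [map_mul, hx, hy]; simp⟩
  inv_mem' := by
    rintro a ⟨x, hx⟩
    refine ⟨x⁻¹, ?_⟩
    have h1 : ((a : 𝓞 k) : k) * ((a⁻¹ : (𝓞 k)ˣ) : 𝓞 k) = 1 := by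
      rw [← map_mul, Units.mul_inv, map_one]
    have hx0 : x ≠ 0 := by
      rintro rfl
      rw [Algebra.norm_zero] at hx
      rw [← hx, zero_mul] at h1
      exact zero_ne_one h1
    have h2 : Algebra.norm k x * Algebra.norm k x⁻¹ = 1 := by
      rw [← map_mul, mul_inv_cancel₀ hx0, map_one]
    rw [hx] at h2
    exact mul_left_cancel₀ (left_ne_zero_of_mul_eq_one h1) (h2.trans h1.symm)

lemma normUnits_index_ne_zero [IsTotallyReal K] (h2 : Module.finrank k K = 2) : (normUnits k K).index ≠ 0 := by
  have : IsTotallyReal k := IsTotallyReal.of_algebra k K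
  have hle : (powMonoidHom 2 : (𝓞 k)ˣ →* (𝓞 k)ˣ).range ≤ normUnits k K := by
    rintro _ ⟨u, rfl⟩
    refine ⟨algebraMap k K ((u : 𝓞 k) : k), ?_⟩
    rw [Algebra.norm_algebraMap, h2]; simp
  have h1 := Subgroup.index_dvd_of_le hle
  intro h
  rw [h, zero_dvd_iff] at h1
  have := card_SqQ_units_real (K := k)
  have h3 : Nat.card (SqQ (𝓞 k)ˣ) = 0 := h1
  rw [h3] at this
  exact absurd this.symm (by positivity)

lemma index_ge_two {G : Type*} [CommGroup G] (U : Subgroup G) (h0 : U.index ≠ 0) (x : G) (hx : x ∉ U) :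
    2 ≤ U.index := by
  have : U.index ≠ 1 := by
    intro h; rw [Subgroup.index_eq_one] at h; rw [h] at hx; exact hx trivial
  omega

lemma four_le {Q : Type*} [CommGroup Q] [Finite Q] (x y : Q) (hx : x ≠ 1) (hy : y ≠ 1)
    (hxy : x * y ≠ 1) (hx2 : x * x = 1) : 4 ≤ Nat.card Q := by
  classical
  have := Fintype.ofFinite Q
  have hne : x ≠ y := by rintro rfl; exact hxy hx2
  have h4 : ({1, x, y, x * y} : Finset Q).card = 4 := by
    rw [Finset.card_insert_of_notMem, Finset.card_insert_of_notMem, Finset.card_pair]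
    · intro h; exact hx (by simpa using h.symm)
    · simp only [Finset.mem_insert, Finset.mem_singleton, not_or]
      exact ⟨hne, fun h => hy (by simpa using h.symm)⟩
    · simp only [Finset.mem_insert, Finset.mem_singleton, not_or]
      exact ⟨hx.symm, hy.symm, hxy.symm⟩
  rw [← h4, Nat.card_eq_fintype_card]
  exact Finset.card_le_univ _

lemma index_ge_four {G : Type*} [CommGroup G] (U : Subgroup G) (h0 : U.index ≠ 0) (hsq : ∀ x, x ^ 2 ∈ U)
    (x y : G) (hx : x ∉ U) (hy : y ∉ U) (hxy : x * y ∉ U) :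
    4 ≤ U.index := by
  have : Finite (G ⧸ U) := Nat.finite_of_card_ne_zero h0
  have e : ∀ z : G, (z : G ⧸ U) = 1 ↔ z ∈ U := fun z => QuotientGroup.eq_one_iff z
  exact four_le (x : G ⧸ U) (y : G ⧸ U) ((e x).not.2 hx) ((e y).not.2 hy) ((e (x * y)).not.2 hxy)
    ((e (x * x)).2 (by rw [← sq]; exact hsq x))

lemma normUnits_sq (h2 : Module.finrank k K = 2) (u : (𝓞 k)ˣ) : u ^ 2 ∈ normUnits k K := by
  refine ⟨algebraMap k K ((u : 𝓞 k) : k), ?_⟩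
  rw [Algebra.norm_algebraMap, h2]; simp

end amb

section cnt
open IsDedekindDomain
variable {K : Type*} [Field K] [NumberField K]

/-- primes above `ℓ` -/
def ov (K : Type*) [Field K] [NumberField K] (ℓ : ℕ) : Set (HeightOneSpectrum (𝓞 K)) :=
  {v | (ℓ : 𝓞 K) ∈ v.asIdeal}

lemma ov_finite (ℓ : ℕ) (hℓ : ℓ.Prime) : (ov K ℓ).Finite := finite_over ℓ hℓ.ne_zero

lemma ov_card (ℓ : ℕ) (hℓ : ℓ.Prime) : (ov K ℓ).ncard ≤ Module.finrank ℚ K := by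
  have := (count_primes (K := K) ℓ hℓ (ov K ℓ) 1 1 one_ne_zero
    (fun v hv => by rw [pow_one]; exact Ideal.dvd_span_singleton.2 hv)
    (fun v hv => (absNorm_over ℓ hℓ v hv).1)).2
  omega

lemma ov_card_two (ℓ : ℕ) (hℓ : ℓ.Prime) (h : ¬ Nonempty (𝓞 K →+* ZMod ℓ)) :
    (ov K ℓ).ncard * 2 ≤ Module.finrank ℚ K := by
  have := (count_primes (K := K) ℓ hℓ (ov K ℓ) 1 2 one_ne_zero
    (fun v hv => by rw [pow_one]; exact Ideal.dvd_span_singleton.2 hv)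
    (fun v hv => ((absNorm_over ℓ hℓ v hv).2.resolve_right h))).2
  omega

lemma sqrtTwo_dvd (a : 𝓞 K) (ha : a ^ 2 = 2) (v : HeightOneSpectrum (𝓞 K)) (hv : v ∈ ov K 2) :
    v.asIdeal ^ 2 ∣ Ideal.span {((2 : ℕ) : 𝓞 K)} := by
  have h1 : a ∈ v.asIdeal := by
    apply v.isPrime.mem_of_pow_mem 2
    rw [ha]; exact_mod_cast hv
  rw [Nat.cast_ofNat, ← ha, ← Ideal.span_singleton_pow]
  exact pow_dvd_pow_of_dvd (Ideal.dvd_span_singleton.2 h1) 2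

lemma ov_two_card (a : 𝓞 K) (ha : a ^ 2 = 2) : (ov K 2).ncard * 2 ≤ Module.finrank ℚ K := by
  have := (count_primes (K := K) 2 Nat.prime_two (ov K 2) 2 1 two_ne_zero
    (fun v hv => sqrtTwo_dvd a ha v hv)
    (fun v hv => (absNorm_over 2 Nat.prime_two v hv).1)).2
  omega

lemma ov_two_card_four (a : 𝓞 K) (ha : a ^ 2 = 2) (h : ¬ Nonempty (𝓞 K →+* ZMod 2)) :
    (ov K 2).ncard * 4 ≤ Module.finrank ℚ K := by
  have := (count_primes (K := K) 2 Nat.prime_two (ov K 2) 2 2 two_ne_zero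
    (fun v hv => sqrtTwo_dvd a ha v hv)
    (fun v hv => ((absNorm_over 2 Nat.prime_two v hv).2.resolve_right h))).2
  omega

lemma no_hom_of_two (ℓ : ℕ) (a : 𝓞 K) (ha : a ^ 2 = 2) (h : ¬ IsSquare (2 : ZMod ℓ)) :
    ¬ Nonempty (𝓞 K →+* ZMod ℓ) := by
  rintro ⟨f⟩
  exact h ⟨f a, by rw [← map_mul, ← sq, ha, map_ofNat]⟩

lemma two_nonres (ℓ : ℕ) (hℓ : ℓ.Prime) (h : ℓ % 8 = 3 ∨ ℓ % 8 = 5) : ¬ IsSquare (2 : ZMod ℓ) := by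
  have : Fact ℓ.Prime := ⟨hℓ⟩
  have h2 : ℓ ≠ 2 := by rintro rfl; simp at h
  rw [ZMod.exists_sq_eq_two_iff h2]
  omega

/-- `√d` as algebraic integer -/
lemma exists_int_sqrt (a : K) (d : ℤ) (ha : a ^ 2 = d) : ∃ a' : 𝓞 K, (a' : K) = a ∧ a' ^ 2 = d := by
  have hInt : IsIntegral ℤ a := by
    refine ⟨Polynomial.X ^ 2 - Polynomial.C d, Polynomial.monic_X_pow_sub_C d two_ne_zero, ?_⟩
    simp only [Polynomial.eval₂_sub, Polynomial.eval₂_pow, Polynomial.eval₂_X, Polynomial.eval₂_C, ha]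
    simp
  obtain ⟨a', rfl⟩ : ∃ a' : 𝓞 K, (a' : K) = a := ⟨⟨a, hInt⟩, rfl⟩
  refine ⟨a', rfl, ?_⟩
  apply FaithfulSMul.algebraMap_injective (𝓞 K) K
  rw [map_pow, map_intCast]
  exact ha

lemma exists_int_quad (x : K) (t n : ℤ) (hx : x ^ 2 - t * x + n = 0) :
    ∃ x' : 𝓞 K, (x' : K) = x ∧ x' ^ 2 - t * x' + n = 0 := by
  have hInt : IsIntegral ℤ x := by
    refine ⟨Polynomial.X ^ 2 + (Polynomial.C (-t) * Polynomial.X + Polynomial.C n), ?_, ?_⟩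
    · apply Polynomial.monic_X_pow_add
      exact lt_of_le_of_lt Polynomial.degree_linear_le (by norm_num)
    · simp only [Polynomial.eval₂_add, Polynomial.eval₂_mul, Polynomial.eval₂_pow, Polynomial.eval₂_X, Polynomial.eval₂_C]
      simp only [eq_intCast]
      push_cast
      linear_combination hx
  obtain ⟨x', rfl⟩ : ∃ x' : 𝓞 K, (x' : K) = x := ⟨⟨x, hInt⟩, rfl⟩
  refine ⟨x', rfl, ?_⟩
  apply FaithfulSMul.algebraMap_injective (𝓞 K) K
  rw [map_add, map_sub, map_pow, map_mul, map_intCast, map_intCast, map_zero]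
  exact hx

end cnt

section deg4
open IsDedekindDomain

lemma nonsq_nat (r m : ℕ) (hr : r.Prime) (hm : ¬ r ∣ m) : ¬ IsSquare (((r * m : ℕ)) : ℚ) := by
  rw [Rat.isSquare_natCast_iff]
  rintro ⟨t, ht⟩
  have h1 : r ∣ t := by
    have : r ∣ t * t := ⟨m, ht.symm⟩
    exact (hr.dvd_mul.1 this).elim id id
  obtain ⟨u, rfl⟩ := h1
  apply hm
  refine ⟨u * u, ?_⟩
  apply Nat.eq_of_mul_eq_mul_left hr.pos
  rw [ht]; ring

lemma two_nonsq : ¬ IsSquare (2 : ℚ) := by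
  have := nonsq_nat 2 1 Nat.prime_two (by norm_num)
  simpa using this

variable {k K : Type*} [Field k] [Field K] [NumberField k] [NumberField K] [Algebra k K]

lemma unram_sqrt (h2 : Module.finrank k K = 2) (b : K) (d : ℕ) (hb : b ^ 2 = d)
    (hd : ¬ IsSquare (d : k)) (v : HeightOneSpectrum (𝓞 k)) (h2v : v ∉ ov k 2)
    (hdv : (d : 𝓞 k) ∉ v.asIdeal) : UnramAt k K v := by
  obtain ⟨θ, hθ, hθ2⟩ := exists_int_sqrt b d (by exact_mod_cast hb)
  have h22 : (2 : 𝓞 k) ∉ v.asIdeal := fun h => h2v (by change ((2 : ℕ) : 𝓞 k) ∈ v.asIdeal; exact_mod_cast h)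
  refine unram_of_disc h2 θ 0 (-d) ?_ ?_ v ?_
  · rw [hθ2]; simp
  · intro x
    rw [hθ]
    exact not_mem_of_nonsq b (d : k) (by rw [hb, map_natCast]) hd x
  · intro h
    have e : (0 : 𝓞 k) ^ 2 - 4 * (-(d : 𝓞 k)) = 2 * (2 * d) := by ring
    rw [e] at h
    have hp := v.isPrime
    rcases hp.mem_or_mem h with h | h
    · exact h22 h
    · rcases hp.mem_or_mem h with h | h
      · exact h22 h
      · exact hdv h

lemma exists_half (b : K) (d : ℕ) (hb : b ^ 2 = d) (hd4 : d % 4 = 1) :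
    ∃ θ : 𝓞 K, (θ : K) = (1 + b) / 2 ∧ ∃ n : ℤ, 1 - 4 * n = d ∧ θ ^ 2 - θ + n = 0 := by
  obtain ⟨c, hc⟩ : ∃ c : ℕ, d = 4 * c + 1 := ⟨d / 4, by omega⟩
  obtain ⟨θ, hθ, h⟩ := exists_int_quad ((1 + b) / 2) 1 (-c) (by
    rw [hc] at hb
    push_cast at hb ⊢
    field_simp
    linear_combination hb)
  refine ⟨θ, hθ, -c, by rw [hc]; push_cast; ring, ?_⟩
  simpa using h

lemma unram_half (h2 : Module.finrank k K = 2) (b : K) (d : ℕ) (hb : b ^ 2 = d) (hd4 : d % 4 = 1)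
    (hd : ¬ IsSquare (d : k)) (v : HeightOneSpectrum (𝓞 k))
    (hdv : (d : 𝓞 k) ∉ v.asIdeal) : UnramAt k K v := by
  obtain ⟨θ, hθ, n, hn, h⟩ := exists_half b d hb hd4
  refine unram_of_disc h2 θ 1 n ?_ ?_ v ?_
  · rw [map_one, one_mul, map_intCast]; exact h
  · intro x hx
    rw [hθ] at hx
    refine not_mem_of_nonsq b (d : k) (by rw [hb, map_natCast]) hd (2 * x - 1) ?_
    rw [map_sub, map_mul, hx, map_one, map_ofNat]; field_simp; ring
  · intro h1
    apply hdv
    have : (d : 𝓞 k) = 1 ^ 2 - 4 * n := by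
      have := congrArg (Int.cast : ℤ → 𝓞 k) hn
      push_cast at this
      rw [← this]; ring
    rw [this]; exact h1

/-- `ℚ(√2)` has odd class number -/
lemma cl_sqrtTwo [IsTotallyReal K] (h2 : Module.finrank ℚ K = 2) (a : K) (ha : a ^ 2 = 2) :
    ∀ c : ClassGroup (𝓞 K), c ^ 2 = 1 → c = 1 := by
  have h := ambiguous_bound h2 a (2 : ℚ) (by rw [ha]; simp) two_nonsq (by
    have : Fintype.card (ClassGroup (𝓞 ℚ)) = 1 := Rat.classNumber_eq
    have := Fintype.card_le_one_iff_subsingleton.1 this.le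
    intro c _; exact Subsingleton.elim _ _) (ov ℚ 2) (ov_finite 2 Nat.prime_two)
    (fun v hv => unram_sqrt h2 a 2 (by rw [ha]; simp) (by simpa using two_nonsq) v hv hv) ⊤
    (fun _ _ => trivial)
  have h1 := ov_card (K := ℚ) 2 Nat.prime_two
  rw [Module.finrank_self] at h1
  have h3 : 2 ^ (ov ℚ 2).ncard ≤ 2 ^ 1 := Nat.pow_le_pow_right (by norm_num) h1
  rw [Subgroup.index_top] at h
  have h4 : Nat.card {c : ClassGroup (𝓞 K) // c ^ 2 = 1} ≤ 1 := by omega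
  have := (Finite.card_le_one_iff_subsingleton).1 h4
  intro c hc
  exact congrArg Subtype.val (Subsingleton.elim (⟨c, hc⟩ : {c : ClassGroup (𝓞 K) // c ^ 2 = 1}) ⟨1, one_pow 2⟩)

lemma four_bound [IsTotallyReal K] (h4 : Module.finrank ℚ K = 4) (a b : K) (ha : a ^ 2 = 2)
    (r m : ℕ) (hr : r.Prime) (hr4 : r % 4 = 3) (hrm : ¬ r ∣ m) (hb : b ^ 2 = (r * m : ℕ))
    (L : IntermediateField ℚ K) (hL : L = IntermediateField.adjoin ℚ {a})
    (S0 : Set (HeightOneSpectrum (𝓞 L))) (hS0 : S0.Finite)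
    (hS : Module.finrank L K = 2 → ¬ IsSquare (((r * m : ℕ)) : L) →
      ∀ v, v ∉ S0 → v ∉ ov L r → UnramAt L K v) :
    2 * Nat.card {c : ClassGroup (𝓞 K) // c ^ 2 = 1} ≤ 2 ^ S0.ncard := by
  have : Fact r.Prime := ⟨hr⟩
  have hL2 : Module.finrank ℚ L = 2 := by
    subst hL
    exact finrank_adjoin_sq a 2 (by rw [ha]; simp) two_nonsq
  have hK2 : Module.finrank L K = 2 := by
    have := Module.finrank_mul_finrank ℚ L K
    rw [hL2, h4] at this
    omega
  have : IsTotallyReal L := IsTotallyReal.of_algebra L K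
  have haL : a ∈ L := by rw [hL]; exact IntermediateField.mem_adjoin_simple_self ℚ a
  obtain ⟨a', ha0⟩ : ∃ a' : L, (a' : K) = a := ⟨⟨a, haL⟩, rfl⟩
  have ha' : a' ^ 2 = 2 := Subtype.ext (by rw [← ha0] at ha; exact ha)
  have ha'' : a' ^ 2 = algebraMap ℚ L 2 := by rw [ha', map_ofNat]
  have hr2 : ¬ r ∣ 2 := by
    intro h
    rw [Nat.prime_dvd_prime_iff_eq hr Nat.prime_two] at h
    omega
  have hdQ := nonsq_nat r m hr hrm
  have hd : ¬ IsSquare ((r * m : ℕ) : L) := by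
    have := nonsq_ext hL2 a' 2 ha'' two_nonsq ((r * m : ℕ) : ℚ) hdQ (by
      have := nonsq_nat r (2 * m) hr (by rw [hr.dvd_mul]; tauto)
      have e : (2 : ℚ) * ((r * m : ℕ) : ℚ) = ((r * (2 * m) : ℕ) : ℚ) := by push_cast; ring
      rw [e]; exact this)
    rwa [map_natCast] at this
  obtain ⟨aI, haI, haI2⟩ := exists_int_sqrt a' 2 (by exact_mod_cast ha')
  have haI2' : aI ^ 2 = 2 := by exact_mod_cast haI2
  -- the unit
  let ε : (𝓞 L)ˣ := ⟨1 + aI, aI - 1, by linear_combination haI2', by linear_combination haI2'⟩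
  have hε : (((ε : (𝓞 L)ˣ) : 𝓞 L) : L) = 1 + a' := by
    change algebraMap (𝓞 L) L (1 + aI) = _
    rw [map_add, map_one]; exact congrArg (1 + ·) haI
  have nrm : ∀ u : L, u = 1 + a' ∨ u = -(1 + a') → ∀ z : K, Algebra.norm L z ≠ u := by
    intro u hu z hz
    have h1 : Algebra.norm ℚ u = -1 := by
      rcases hu with rfl | rfl
      · have := quad_norm hL2 a' 2 ha'' two_nonsq 1 1
        rw [map_one, one_mul] at this
        rw [this]; norm_num
      · have := quad_norm hL2 a' 2 ha'' two_nonsq (-1) (-1)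
        rw [map_neg, map_one] at this
        rw [show -(1 + a') = -1 + -1 * a' by ring, this]; norm_num
    obtain ⟨X, Y, hXY⟩ := norm_form b ((r * m : ℕ) : ℚ) (by rw [hb, map_natCast]) hdQ z
    rw [← Algebra.norm_norm (R := ℚ) (S := L), hz, h1] at hXY
    refine padic_neg_one_no r hr4 m hrm (X : ℚ_[r]) (Y : ℚ_[r]) ?_
    have := congrArg (Rat.cast : ℚ → ℚ_[r]) hXY
    push_cast at this
    exact this.symm
  have hU0 := normUnits_index_ne_zero (k := L) (K := K) hK2
  have hε1 : ε ∉ normUnits L K := by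
    rintro ⟨z, hz⟩
    exact nrm _ (Or.inl rfl) z (by rw [hz, hε])
  have hε2 : (-1) * ε ∉ normUnits L K := by
    rintro ⟨z, hz⟩
    refine nrm _ (Or.inr rfl) z ?_
    rw [hz, ← hε]; simp
  have hT : (S0 ∪ ov L r).Finite := hS0.union (ov_finite r hr)
  have main := ambiguous_bound hK2 b ((r * m : ℕ) : L) (by rw [hb, map_natCast]) hd
    (cl_sqrtTwo hL2 a' ha') (S0 ∪ ov L r) hT
    (fun v hv => hS hK2 hd v (fun h => hv (Or.inl h)) (fun h => hv (Or.inr h)))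
    (normUnits L K) (fun u hu => hu)
  have hcard := Set.ncard_union_le S0 (ov L r)
  have key : 2 * 2 ^ (ov L r).ncard ≤ 2 * (normUnits L K).index := by
    by_cases h7 : r % 8 = 7
    · have h1 := ov_card (K := L) r hr
      rw [hL2] at h1
      have h2 : 4 ≤ (normUnits L K).index := by
        refine index_ge_four _ hU0 (normUnits_sq hK2) (-1) ε ?_ hε1 hε2
        rintro ⟨z, hz⟩
        have hz' : Algebra.norm L z = -1 := by rw [hz]; simp
        obtain ⟨X, Y, hXY⟩ := norm_form b ((r * m : ℕ) : L) (by rw [hb, map_natCast]) hd z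
        rw [hz'] at hXY
        obtain ⟨f⟩ := algHom_of_sq (k := ℚ) (E := L) (F := ℚ_[r]) {a'} (by
          rw [eq_top_iff]
          intro x _
          obtain ⟨u, v, rfl⟩ := quad_rep hL2 a' 2 ha'' two_nonsq x
          refine add_mem (IntermediateField.algebraMap_mem _ _) (mul_mem (IntermediateField.algebraMap_mem _ _) ?_)
          exact IntermediateField.mem_adjoin_simple_self ℚ a') (by
          intro x hx
          refine ⟨2, by rw [Set.mem_singleton_iff.1 hx, ha''], ?_⟩
          have h2 := padic_sq_of_res r (by omega) 2 (by exact_mod_cast hr2) (by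
            have := (ZMod.exists_sq_eq_two_iff (p := r) (by omega)).2 (Or.inr h7)
            exact_mod_cast this)
          rw [map_ofNat]
          exact_mod_cast h2)
        refine padic_neg_one_no r hr4 m hrm (f X) (f Y) ?_
        have := congrArg f hXY
        simp only [map_neg, map_one, map_sub, map_mul, map_pow, map_natCast] at this
        rw [this]; push_cast; ring
      have h3 : 2 ^ (ov L r).ncard ≤ 2 ^ 2 := Nat.pow_le_pow_right (by norm_num) h1
      omega
    · have h3 : r % 8 = 3 := by omega
      have h1 := ov_card_two (K := L) r hr (no_hom_of_two r aI haI2' (two_nonres r hr (Or.inl h3)))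
      rw [hL2] at h1
      have h2 := index_ge_two _ hU0 ε hε1
      have h3 : 2 ^ (ov L r).ncard ≤ 2 ^ 1 := Nat.pow_le_pow_right (by norm_num) (by omega)
      omega
  have h5 : 2 ^ (S0 ∪ ov L r).ncard ≤ 2 ^ S0.ncard * 2 ^ (ov L r).ncard := by
    rw [← pow_add]; exact Nat.pow_le_pow_right (by norm_num) hcard
  have hpos : 0 < 2 ^ (ov L r).ncard := by positivity
  generalize Nat.card {c : ClassGroup (𝓞 K) // c ^ 2 = 1} = N at *
  generalize 2 ^ (ov L r).ncard = A at *
  generalize (normUnits L K).index = I at *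
  have h6 : (2 * A) * N ≤ (2 * I) * N := Nat.mul_le_mul_right _ key
  have h7 : A * (2 * N) ≤ A * 2 ^ S0.ncard := by
    calc A * (2 * N) = (2 * A) * N := by ring
      _ ≤ (2 * I) * N := h6
      _ ≤ _ := main
      _ ≤ _ := h5
      _ = _ := by ring
  exact Nat.le_of_mul_le_mul_left h7 hpos

/-- `ℚ(√2, √(qs))` has odd class number -/
lemma cl_k [IsTotallyReal K] (h4 : Module.finrank ℚ K = 4) (a b : K) (ha : a ^ 2 = 2)
    (q s : ℕ) (hq : q.Prime) (hs : s.Prime) (hqs : q ≠ s) (hq8 : q % 8 = 3) (hs4 : s % 4 = 3)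
    (hb : b ^ 2 = (q * s : ℕ)) : ∀ c : ClassGroup (𝓞 K), c ^ 2 = 1 → c = 1 := by
  have h := four_bound h4 a b ha s q hs hs4 (by
    rw [Nat.prime_dvd_prime_iff_eq hs hq]; exact fun h => hqs h.symm) (by rw [hb, mul_comm])
    (IntermediateField.adjoin ℚ {a}) rfl (ov _ q) (ov_finite q hq) (by
    intro h2 hd v hv1 hv2
    refine unram_half h2 b (s * q) (by rw [hb, mul_comm]) (by
      obtain ⟨x, hx⟩ : ∃ x, q = 4 * x + 3 := ⟨q / 4, by omega⟩
      obtain ⟨y, hy⟩ : ∃ y, s = 4 * y + 3 := ⟨s / 4, by omega⟩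
      rw [hx, hy]
      have : (4 * y + 3) * (4 * x + 3) = 4 * (4 * x * y + 3 * x + 3 * y + 2) + 1 := by ring
      omega) hd v ?_
    intro h
    rw [Nat.cast_mul] at h
    rcases v.isPrime.mem_or_mem h with h | h
    · exact hv2 h
    · exact hv1 h)
  have hL2 : Module.finrank ℚ (IntermediateField.adjoin ℚ {a}) = 2 := finrank_adjoin_sq a 2 (by rw [ha]; simp) two_nonsq
  let a' : (IntermediateField.adjoin ℚ {a}) := ⟨a, IntermediateField.mem_adjoin_simple_self ℚ a⟩
  have ha' : a' ^ 2 = 2 := Subtype.ext ha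
  obtain ⟨aI, haI, haI2⟩ := exists_int_sqrt a' 2 (by exact_mod_cast ha')
  have haI2' : aI ^ 2 = 2 := by exact_mod_cast haI2
  have h1 := ov_card_two (K := (IntermediateField.adjoin ℚ {a})) q hq (no_hom_of_two q aI haI2' (two_nonres q hq (Or.inl hq8)))
  rw [hL2] at h1
  have h3 : 2 ^ (ov (IntermediateField.adjoin ℚ {a}) q).ncard ≤ 2 ^ 1 := Nat.pow_le_pow_right (by norm_num) (by omega)
  have h4 : Nat.card {c : ClassGroup (𝓞 K) // c ^ 2 = 1} ≤ 1 := by omega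
  have := (Finite.card_le_one_iff_subsingleton).1 h4
  intro c hc
  exact congrArg Subtype.val (Subsingleton.elim (⟨c, hc⟩ : {c : ClassGroup (𝓞 K) // c ^ 2 = 1}) ⟨1, one_pow 2⟩)

/-- `ℚ(√2, √(pr))` -/
lemma cl_M [IsTotallyReal K] (h4 : Module.finrank ℚ K = 4) (a b : K) (ha : a ^ 2 = 2)
    (p r : ℕ) (hp : p.Prime) (hr : r.Prime) (hpr : p ≠ r) (hp8 : p % 8 = 5) (hr4 : r % 4 = 3)
    (hb : b ^ 2 = (p * r : ℕ)) : Nat.card {c : ClassGroup (𝓞 K) // c ^ 2 = 1} ≤ 2 := by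
  have h := four_bound h4 a b ha r p hr hr4 (by
    rw [Nat.prime_dvd_prime_iff_eq hr hp]; exact fun h => hpr h.symm) (by rw [hb, mul_comm])
    (IntermediateField.adjoin ℚ {a}) rfl (ov _ 2 ∪ ov _ p) ((ov_finite 2 Nat.prime_two).union (ov_finite p hp)) (by
    intro h2 hd v hv1 hv2
    refine unram_sqrt h2 b (r * p) (by rw [hb, mul_comm]) hd v (fun h => hv1 (Or.inl h)) ?_
    intro h
    rw [Nat.cast_mul] at h
    rcases v.isPrime.mem_or_mem h with h | h
    · exact hv2 h
    · exact hv1 (Or.inr h))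
  have hL2 : Module.finrank ℚ (IntermediateField.adjoin ℚ {a}) = 2 := finrank_adjoin_sq a 2 (by rw [ha]; simp) two_nonsq
  let a' : (IntermediateField.adjoin ℚ {a}) := ⟨a, IntermediateField.mem_adjoin_simple_self ℚ a⟩
  have ha' : a' ^ 2 = 2 := Subtype.ext ha
  obtain ⟨aI, haI, haI2⟩ := exists_int_sqrt a' 2 (by exact_mod_cast ha')
  have haI2' : aI ^ 2 = 2 := by exact_mod_cast haI2
  have h1 := ov_card_two (K := (IntermediateField.adjoin ℚ {a})) p hp (no_hom_of_two p aI haI2' (two_nonres p hp (Or.inr hp8)))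
  have h1' := ov_two_card (K := (IntermediateField.adjoin ℚ {a})) aI haI2'
  rw [hL2] at h1 h1'
  have hcard := Set.ncard_union_le (ov (IntermediateField.adjoin ℚ {a}) 2) (ov (IntermediateField.adjoin ℚ {a}) p)
  have h3 : 2 ^ (ov (IntermediateField.adjoin ℚ {a}) 2 ∪ ov (IntermediateField.adjoin ℚ {a}) p).ncard ≤ 2 ^ 2 := Nat.pow_le_pow_right (by norm_num) (by omega)
  omega

end deg4

section psi
open nonZeroDivisors

/-- hypothesis: norms of elements are local norms -/
def NormHyp (K : Type*) [Field K] [NumberField K] (p : ℕ) [Fact p.Prime] : Prop :=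
  ∀ x : 𝓞 K, x ≠ 0 → ∀ t : ℚ_[p]ˣ, (t : ℚ_[p]) = ((Algebra.norm ℤ x).natAbs : ℕ) → t ∈ NmP p

variable {K : Type*} [Field K] [NumberField K] {p : ℕ} [Fact p.Prime]

/-- absolute norm of ideals as a homomorphism -/
noncomputable def nuP (K : Type*) [Field K] [NumberField K] (p : ℕ) [Fact p.Prime] :
    (Ideal (𝓞 K))⁰ →* ℚ_[p]ˣ ⧸ NmP p where
  toFun I := QuotientGroup.mk (Units.mk0 ((Ideal.absNorm (I : Ideal (𝓞 K)) : ℕ) : ℚ_[p]) (by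
    rw [Nat.cast_ne_zero, Ideal.absNorm_ne_zero_iff_mem_nonZeroDivisors]
    exact I.2))
  map_one' := by
    rw [QuotientGroup.eq_one_iff]
    convert! one_mem (NmP p)
    ext; simp
  map_mul' I J := by
    rw [← QuotientGroup.mk_mul]
    congr 1
    ext; simp

lemma nuP_apply (I : (Ideal (𝓞 K))⁰) (t : ℚ_[p]ˣ) (ht : (t : ℚ_[p]) = (Ideal.absNorm (I : Ideal (𝓞 K)) : ℕ)) :
    nuP K p I = QuotientGroup.mk t := by
  change QuotientGroup.mk _ = _
  congr 1
  ext; rw [ht]; rfl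

lemma nuP_wd (hK : NormHyp K p) (I J : (Ideal (𝓞 K))⁰) (h : ClassGroup.mk0 I = ClassGroup.mk0 J) :
    nuP K p I = nuP K p J := by
  rw [ClassGroup.mk0_eq_mk0_iff] at h
  obtain ⟨x, y, hx, hy, h⟩ := h
  have key : ∀ z : 𝓞 K, ∀ hz : z ≠ 0, nuP K p ⟨Ideal.span {z}, by simpa using hz⟩ = 1 := by
    intro z hz
    change QuotientGroup.mk _ = _
    rw [QuotientGroup.eq_one_iff]
    apply hK z hz
    rw [Units.val_mk0, Ideal.absNorm_span_singleton]
  have h1 : (⟨Ideal.span {x}, by simpa using hx⟩ : (Ideal (𝓞 K))⁰) * I = ⟨Ideal.span {y}, by simpa using hy⟩ * J :=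
    Subtype.ext h
  have h2 := congrArg (nuP K p) h1
  rw [map_mul, map_mul, key x hx, key y hy, ← map_one (nuP K p), ← map_mul, ← map_mul, one_mul, one_mul] at h2
  exact h2

/-- the genus character -/
noncomputable def psi (hK : NormHyp K p) : ClassGroup (𝓞 K) →* ℚ_[p]ˣ ⧸ NmP p where
  toFun c := nuP K p (Function.surjInv ClassGroup.mk0_surjective c)
  map_one' := by
    rw [← map_one (nuP K p)]
    apply nuP_wd hK
    rw [Function.surjInv_eq ClassGroup.mk0_surjective, map_one]
  map_mul' a b := by
    rw [← map_mul]
    apply nuP_wd hK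
    rw [map_mul, Function.surjInv_eq ClassGroup.mk0_surjective, Function.surjInv_eq ClassGroup.mk0_surjective, Function.surjInv_eq ClassGroup.mk0_surjective]

lemma psi_mk0 (hK : NormHyp K p) (I : (Ideal (𝓞 K))⁰) : psi hK (ClassGroup.mk0 I) = nuP K p I := by
  apply nuP_wd hK
  rw [Function.surjInv_eq ClassGroup.mk0_surjective]

lemma quotNmP_sq (x : ℚ_[p]ˣ ⧸ NmP p) : x ^ 2 = 1 := by
  obtain ⟨t, rfl⟩ := QuotientGroup.mk_surjective x
  rw [← QuotientGroup.mk_pow, QuotientGroup.eq_one_iff]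
  exact ⟨0, t, by simp⟩

lemma neg_one_NmP (hp4 : p % 4 = 1) : (-1 : ℚ_[p]ˣ) ∈ NmP p := by
  have hpp : p.Prime := Fact.out
  obtain ⟨i, hi⟩ := padic_sq_of_res p (by omega) (-1) (by
    intro h
    rw [dvd_neg] at h
    exact hpp.one_lt.ne' (Nat.dvd_one.1 (by exact_mod_cast h))) (by
      rw [show ((-1 : ℤ) : ZMod p) = -1 by simp]
      rw [ZMod.exists_sq_eq_neg_one_iff]; omega)
  refine ⟨0, i, ?_⟩
  push_cast at hi
  rw [zpow_zero, one_mul, sq, ← hi]; simp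

lemma normHyp_of_sqrt (hp4 : p % 4 = 1) (r : ℕ) (hr : ¬ p ∣ r) (hres : IsSquare (r : ZMod p)) (b : K)
    (hb : b ^ 2 = (p * r : ℕ)) : NormHyp K p := by
  have hpp : p.Prime := Fact.out
  intro x hx t ht
  obtain ⟨X, Y, hXY⟩ := norm_form b ((p * r : ℕ) : ℚ) (by rw [hb, map_natCast]) (nonsq_nat p r hpp hr) (x : K)
  have hn : ((Algebra.norm ℤ x : ℤ) : ℚ) = Algebra.norm ℚ (x : K) := Algebra.coe_norm_int x
  rw [← hn] at hXY
  have hXY' : ((Algebra.norm ℤ x : ℤ) : ℚ_[p]) = (X : ℚ_[p]) ^ 2 - p * r * (Y : ℚ_[p]) ^ 2 := by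
    have := congrArg (Rat.cast : ℚ → ℚ_[p]) hXY
    push_cast at this
    exact this
  have hrs : IsSquare (r : ℚ_[p]) := by
    have := padic_sq_of_res p (by omega) r (by exact_mod_cast hr) (by exact_mod_cast hres)
    exact_mod_cast this
  rcases Int.natAbs_eq (Algebra.norm ℤ x) with h | h
  · apply NmP_of_norm p hp4 r hrs X Y t
    rw [ht, ← hXY', ← Int.cast_natCast, ← h]
  · have := NmP_of_norm p hp4 r hrs X Y (-t) (by
      rw [Units.val_neg, ht, ← hXY', ← Int.cast_natCast]
      conv_rhs => rw [h]
      push_cast; ring)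
    have h2 := mul_mem (neg_one_NmP hp4) this
    simpa using h2

end psi

section idealD

variable {K : Type*} [Field K] [NumberField K]

lemma exists_D (a b : K) (d : ℕ) (ha : a ^ 2 = 2) (hb : b ^ 2 = d) (hd : d % 4 = 3) (aI : 𝓞 K) (haI : (aI : K) = a) :
    ∃ D : Ideal (𝓞 K), D ^ 2 = Ideal.span {aI} := by
  have ha0 : a ≠ 0 := by rintro rfl; norm_num at ha
  obtain ⟨m, hm⟩ : ∃ m : ℕ, d + 1 = 4 * m := ⟨(d + 1) / 4, by omega⟩
  have hdm : (d : K) + 1 = 4 * m := by exact_mod_cast hm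
  obtain ⟨bI, hbI, hbI2⟩ := exists_int_sqrt b d (by exact_mod_cast hb)
  replace hbI : algebraMap (𝓞 K) K bI = b := hbI
  replace haI : algebraMap (𝓞 K) K aI = a := haI
  have haI2 : aI ^ 2 = 2 := by
    apply FaithfulSMul.algebraMap_injective (𝓞 K) K
    rw [map_pow, map_ofNat, ← ha, ← haI]
  obtain ⟨y, hy⟩ : ∃ y : 𝓞 K, algebraMap (𝓞 K) K y = (1 + b) / a := by
    have h1 : IsIntegral ℤ (((1 + b) / a) ^ 2) := by
      have : ((1 + b) / a) ^ 2 = algebraMap (𝓞 K) K (2 * m + bI) := by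
        rw [map_add, map_mul, map_ofNat, map_natCast, hbI, div_pow, ha]
        field_simp
        linear_combination hb + hdm
      rw [this]
      exact RingOfIntegers.isIntegral_coe _
    exact ⟨⟨_, IsIntegral.of_pow two_pos h1⟩, rfl⟩
  have hay : aI * y = 1 + bI := by
    apply FaithfulSMul.algebraMap_injective (𝓞 K) K
    rw [map_mul, map_add, map_one, haI, hy, hbI]
    field_simp
  have hy2 : y ^ 2 = 2 * m + aI * y - 1 := by
    apply FaithfulSMul.algebraMap_injective (𝓞 K) K
    rw [map_pow, map_sub, map_add, map_mul, map_mul, map_one, map_ofNat, map_natCast, haI, hy]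
    field_simp
    rw [ha]
    linear_combination hb + hdm
  have hz : (y + 1) ^ 2 = aI * (y + aI * (y + m)) := by
    linear_combination hy2 - (y + m) * haI2
  refine ⟨Ideal.span {y + 1, aI}, ?_⟩
  apply le_antisymm
  · rw [sq, Ideal.span_pair_mul_span_pair, Ideal.span_le]
    have h0 := Ideal.mem_span_singleton_self aI
    intro x hx
    simp only [Set.mem_insert_iff, Set.mem_singleton_iff] at hx
    rcases hx with rfl | rfl | rfl | rfl
    · rw [← sq, hz]; exact Ideal.mul_mem_right _ _ h0
    · exact Ideal.mul_mem_left _ _ h0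
    · exact Ideal.mul_mem_right _ _ h0
    · exact Ideal.mul_mem_right _ _ h0
  · rw [Ideal.span_singleton_le_iff_mem, sq]
    have hz1 : y + 1 ∈ Ideal.span {y + 1, aI} := Ideal.subset_span (by simp)
    have ha1 : aI ∈ Ideal.span {y + 1, aI} := Ideal.subset_span (by simp)
    have e : aI = (y + 1) * aI - ((y + 1) * (y + 1) - (y + m) * (aI * aI)) := by
      linear_combination hz
    have := sub_mem (Ideal.mul_mem_mul hz1 ha1) (sub_mem (Ideal.mul_mem_mul hz1 hz1)
      (Ideal.mul_mem_left _ (y + m) (Ideal.mul_mem_mul ha1 ha1)))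
    rw [← e] at this
    exact this

lemma absNorm_D (aI : 𝓞 K) (haI2 : aI ^ 2 = 2) (D : Ideal (𝓞 K)) (hD : D ^ 2 = Ideal.span {aI}) :
    (Ideal.absNorm D) ^ 4 = 2 ^ (Module.finrank ℚ K) := by
  have h1 : D ^ 4 = Ideal.span {((2 : ℤ) : 𝓞 K)} := by
    rw [show 4 = 2 * 2 by rfl, pow_mul, hD, Ideal.span_singleton_pow, haI2]; simp
  rw [← map_pow, h1, Ideal.absNorm_span_singleton, ← eq_intCast (algebraMap ℤ (𝓞 K)),
      Algebra.norm_algebraMap, RingOfIntegers.rank]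
  simp

end idealD

section grp

lemma two_part {G Q : Type*} [CommGroup G] [Finite G] [CommGroup Q] (hQ : ∀ x : Q, x ^ 2 = 1)
    (χ : G →* Q) (h2 : Nat.card {c : G // c ^ 2 = 1} ≤ 2) (d : G) (hd : d ^ 2 = 1) (hχ : χ d ≠ 1) (c : G) :
    ∃ m, Odd m ∧ ((χ c = 1 → c ^ m = 1) ∧ (χ c ≠ 1 → c ^ m = d)) := by
  have hd1 : d ≠ 1 := by rintro rfl; simp at hχ
  have only : ∀ x : G, x ^ 2 = 1 → x = 1 ∨ x = d := by
    intro x hx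
    by_contra hne
    push Not at hne
    have := Fintype.ofFinite {c : G // c ^ 2 = 1}
    classical
    have h3 : ({⟨1, one_pow 2⟩, ⟨d, hd⟩, ⟨x, hx⟩} : Finset {c : G // c ^ 2 = 1}).card = 3 := by
      rw [Finset.card_eq_three]
      refine ⟨_, _, _, ?_, ?_, ?_, rfl⟩
      · intro h; exact hd1 (congrArg Subtype.val h).symm
      · intro h; exact hne.1 (congrArg Subtype.val h).symm
      · intro h; exact hne.2 (congrArg Subtype.val h).symm
    have h4 := Finset.card_le_univ ({⟨1, one_pow 2⟩, ⟨d, hd⟩, ⟨x, hx⟩} : Finset {c : G // c ^ 2 = 1})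
    rw [h3, ← Nat.card_eq_fintype_card] at h4
    omega
  have hodd : ∀ (x : Q) (m : ℕ), Odd m → x ^ m = x := by
    rintro x m ⟨j, rfl⟩
    rw [pow_add, pow_mul, hQ, one_pow, one_mul, pow_one]
  obtain ⟨e, m, hm, hem⟩ := Nat.exists_eq_two_pow_mul_odd (orderOf_pos c).ne'
  have hpow : (c ^ m) ^ 2 ^ e = 1 := by rw [← pow_mul, mul_comm, ← hem, pow_orderOf_eq_one]
  have claim : ∀ e (x : G), x ^ 2 ^ e = 1 → x = 1 ∨ x = d := by
    intro e
    induction e with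
    | zero => intro x hx; left; simpa using hx
    | succ e ih =>
      intro x hx
      rw [pow_succ, mul_comm, pow_mul] at hx
      rcases ih (x ^ 2) hx with h | h
      · exact only x h
      · exfalso; apply hχ; rw [← h, map_pow, hQ]
  refine ⟨m, hm, ?_, ?_⟩
  · intro h
    rcases claim e _ hpow with h1 | h1
    · exact h1
    · exfalso; apply hχ; rw [← h1, map_pow, h, one_pow]
  · intro h
    rcases claim e _ hpow with h1 | h1
    · exfalso; apply h; rw [← hodd (χ c) m hm, ← map_pow, h1, map_one]
    · exact h1

lemma odd_part {G : Type*} [CommGroup G] [Finite G] (h : ∀ c : G, c ^ 2 = 1 → c = 1) (c : G) :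
    ∃ m, Odd m ∧ c ^ m = 1 := by
  obtain ⟨e, m, hm, hem⟩ := Nat.exists_eq_two_pow_mul_odd (orderOf_pos c).ne'
  have hpow : (c ^ m) ^ 2 ^ e = 1 := by rw [← pow_mul, mul_comm, ← hem, pow_orderOf_eq_one]
  refine ⟨m, hm, ?_⟩
  have claim : ∀ e (x : G), x ^ 2 ^ e = 1 → x = 1 := by
    intro e
    induction e with
    | zero => intro x hx; simpa using hx
    | succ e ih =>
      intro x hx
      rw [pow_succ, mul_comm, pow_mul] at hx
      exact h x (ih (x ^ 2) hx)
  exact claim e _ hpow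

end grp

section sigma

variable {K : Type*} [Field K] [NumberField K]

/-- action of a field automorphism on ideals -/
noncomputable def sig (σ : K ≃+* K) (A : Ideal (𝓞 K)) : Ideal (𝓞 K) :=
  A.map (RingOfIntegers.mapRingEquiv σ : 𝓞 K →+* 𝓞 K)

lemma sig_mul (σ : K ≃+* K) (A B : Ideal (𝓞 K)) : sig σ (A * B) = sig σ A * sig σ B := Ideal.map_mul _ _ _

lemma sig_pow (σ : K ≃+* K) (A : Ideal (𝓞 K)) (n : ℕ) : sig σ (A ^ n) = sig σ A ^ n := Ideal.map_pow _ _ _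

lemma sig_sig (σ τ : K ≃+* K) (A : Ideal (𝓞 K)) : sig σ (sig τ A) = sig (τ.trans σ) A := by
  unfold sig
  rw [Ideal.map_map]
  rfl

lemma sig_span (σ : K ≃+* K) (x : 𝓞 K) : sig σ (Ideal.span {x}) = Ideal.span {RingOfIntegers.mapRingEquiv σ x} := by
  unfold sig
  rw [Ideal.map_span]
  simp

lemma absNorm_sig (σ : K ≃+* K) (A : Ideal (𝓞 K)) : Ideal.absNorm (sig σ A) = Ideal.absNorm A := by
  rw [Ideal.absNorm_apply, Ideal.absNorm_apply, Submodule.cardQuot_apply, Submodule.cardQuot_apply]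
  exact (Nat.card_congr (Ideal.quotientEquiv A (sig σ A) (RingOfIntegers.mapRingEquiv σ) rfl).toEquiv).symm

lemma ideal_eq_of_le {I J : Ideal (𝓞 K)} (hI : I ≠ ⊥) (h : I ≤ J) (hn : Ideal.absNorm I = Ideal.absNorm J) : I = J := by
  obtain ⟨C, rfl⟩ := Ideal.dvd_iff_le.2 h
  have hJ : Ideal.absNorm J ≠ 0 := by
    rw [← hn]; rwa [Ne, Ideal.absNorm_eq_zero_iff]
  rw [map_mul] at hn
  have : Ideal.absNorm C = 1 := by
    apply Nat.eq_of_mul_eq_mul_left (Nat.pos_of_ne_zero hJ)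
    rw [hn, mul_one]
  rw [Ideal.absNorm_eq_one_iff] at this
  rw [this, Ideal.mul_top]

variable {k : Type*} [Field k] [NumberField k] [Algebra k K]

lemma map_relNorm_quad (h2 : Module.finrank k K = 2) (θ : K) (d : k) (hθ : θ ^ 2 = algebraMap k K d)
    (hd : ¬ IsSquare d) (σ : K ≃+* K) (hσ : ∀ u : k, σ (algebraMap k K u) = algebraMap k K u) (hσθ : σ θ = -θ)
    (A : Ideal (𝓞 K)) (hA : A ≠ ⊥) :
    (Ideal.relNorm (𝓞 k) A).map (algebraMap (𝓞 k) (𝓞 K)) = A * sig σ A := by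
  have hnA : Ideal.absNorm A ≠ 0 := by rwa [Ne, Ideal.absNorm_eq_zero_iff]
  have e1 : Ideal.absNorm ((Ideal.relNorm (𝓞 k) A).map (algebraMap (𝓞 k) (𝓞 K))) = Ideal.absNorm A ^ 2 := by
    rw [Ideal.absNorm_algebraMap, Ideal.absNorm_relNorm]
    congr 1
    rw [← h2]
    exact IsFractionRing.finrank_eq (𝓞 k) k (𝓞 K) K |>.symm
  apply ideal_eq_of_le
  · rw [Ne, ← Ideal.absNorm_eq_zero_iff, e1]
    exact pow_ne_zero 2 hnA
  · rw [Ideal.map_relNorm, Ideal.span_le]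
    rintro _ ⟨x, hx, rfl⟩
    have : (algebraMap (𝓞 k) (𝓞 K)) (Algebra.intNorm (𝓞 k) (𝓞 K) x) = x * RingOfIntegers.mapRingEquiv σ x := by
      apply FaithfulSMul.algebraMap_injective (𝓞 K) K
      rw [← IsScalarTower.algebraMap_apply, IsScalarTower.algebraMap_apply (𝓞 k) k K,
        Algebra.algebraMap_intNorm (L := K), map_mul]
      change _ = algebraMap (𝓞 K) K x * σ (algebraMap (𝓞 K) K x)
      obtain ⟨u, v, huv⟩ := quad_rep h2 θ d hθ hd (algebraMap (𝓞 K) K x)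
      rw [huv, quad_norm h2 θ d hθ hd, map_add, map_mul, hσ, hσ, hσθ]
      rw [map_sub, map_mul, map_pow, map_pow, ← hθ]; ring
    rw [Function.comp_apply, this]
    exact Ideal.mul_mem_mul hx (Ideal.mem_map_of_mem _ hx)
  · rw [e1, map_mul, absNorm_sig, sq]

lemma exists_sigma {k K : Type*} [Field k] [Field K] [Algebra k K] (h2 : Module.finrank k K = 2) (θ : K) (d : k)
    (hθ : θ ^ 2 = algebraMap k K d) (hd : ¬ IsSquare d) :
    ∃ σ : K ≃ₐ[k] K, σ θ = -θ := by
  have hfd : FiniteDimensional k K := Module.finite_of_finrank_pos (by omega)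
  obtain ⟨b, h0, h1⟩ := quad_basis h2 θ d hθ hd
  have hm : minpoly k θ = Polynomial.X ^ 2 - Polynomial.C d := by
    symm
    apply minpoly.eq_of_irreducible_of_monic
    · rw [X_pow_sub_C_irreducible_iff_of_prime Nat.prime_two]
      intro b hb
      exact hd ⟨b, by rw [← hb, sq]⟩
    · simp [hθ]
    · exact Polynomial.monic_X_pow_sub_C d two_ne_zero
  have htop : IntermediateField.adjoin k {θ} = ⊤ := by
    rw [eq_top_iff]
    intro x _
    obtain ⟨u, v, rfl⟩ := quad_rep h2 θ d hθ hd x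
    have := IntermediateField.mem_adjoin_simple_self k θ
    exact add_mem (IntermediateField.algebraMap_mem _ _) (mul_mem (IntermediateField.algebraMap_mem _ _) this)
  obtain ⟨φ, hφ⟩ := IntermediateField.exists_algHom_of_adjoin_splits_of_aeval (F := k) (E := K) (K := K) (S := {θ})
    (by
      rintro s rfl
      refine ⟨Algebra.IsIntegral.isIntegral _, ?_⟩
      rw [hm]
      have : Polynomial.map (algebraMap k K) (Polynomial.X ^ 2 - Polynomial.C d)
        = (Polynomial.X - Polynomial.C s) * (Polynomial.X - Polynomial.C (-s)) := by
        simp only [Polynomial.map_sub, Polynomial.map_pow, Polynomial.map_X, Polynomial.map_C, map_neg]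
        rw [← hθ, map_pow]; ring
      rw [this]
      exact (Polynomial.Splits.X_sub_C _).mul (Polynomial.Splits.X_sub_C _)) (x := θ) (y := -θ) htop
      (by rw [hm]; simp [hθ])
  exact ⟨AlgEquiv.ofBijective φ (Algebra.IsAlgebraic.algHom_bijective φ), by simpa using hφ⟩

end sigma

section part10
open IsDedekindDomain

lemma quad_emb {L F : Type*} [Field L] [CharZero L] [Field F] [CharZero F] (h2 : Module.finrank ℚ L = 2) (θ : L) (d : ℚ)
    (hθ : θ ^ 2 = algebraMap ℚ L d) (hd : ¬ IsSquare d) (hF : IsSquare (d : F)) : Nonempty (L →ₐ[ℚ] F) := by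
  refine algHom_of_sq (k := ℚ) (E := L) (F := F) {θ} ?_ ?_
  · rw [eq_top_iff]
    intro x _
    obtain ⟨u, v, rfl⟩ := quad_rep h2 θ d hθ hd x
    refine add_mem (IntermediateField.algebraMap_mem _ _) (mul_mem (IntermediateField.algebraMap_mem _ _) ?_)
    exact IntermediateField.mem_adjoin_simple_self ℚ θ
  · rintro x rfl
    exact ⟨d, hθ, by simpa using hF⟩

lemma quad_nonsq {L : Type*} [Field L] [CharZero L] (h2 : Module.finrank ℚ L = 2) (θ : L) (d : ℕ)
    (hθ : θ ^ 2 = d) (hd : ¬ IsSquare (d : ℚ)) (e : ℕ) (he : ¬ IsSquare (e : ℚ)) (hde : ¬ IsSquare ((d * e : ℕ) : ℚ)) :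
    ¬ IsSquare (e : L) := by
  have := nonsq_ext h2 θ d (by rw [hθ, map_natCast]) hd e he (by exact_mod_cast hde)
  rwa [map_natCast] at this

lemma prime_ndvd {p q : ℕ} (hp : p.Prime) (hq : q.Prime) (h : p ≠ q) : ¬ p ∣ q := by
  rwa [Nat.prime_dvd_prime_iff_eq hp hq]

section clF
variable {k K : Type*} [Field k] [Field K] [NumberField k] [NumberField K] [Algebra k K]

lemma eps_not_norm (h2 : Module.finrank k K = 2) (h4 : Module.finrank ℚ k = 4)
    (p q s : ℕ) (hp : p.Prime) (hq : q.Prime) (hs : s.Prime)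
    (hpq : p ≠ q) (hps : p ≠ s) (hqs : q ≠ s) (hp8 : p % 8 = 5) (hq8 : q % 8 = 3) (hs8 : s % 8 = 3)
    (a e : k) (ha : a ^ 2 = 2) (he : e ^ 2 = (q * s : ℕ)) (b : K) (hb : b ^ 2 = (p * q : ℕ)) (z : K) :
    Algebra.norm k z ≠ 1 + a := by
  intro hz
  have hqsQ := nonsq_nat q s hq (prime_ndvd hq hs hqs)
  let E : IntermediateField ℚ k := IntermediateField.adjoin ℚ {e}
  have hE2 : Module.finrank ℚ E = 2 := finrank_adjoin_sq e ((q * s : ℕ) : ℚ) (by rw [he, map_natCast]) hqsQ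
  have hk2 : Module.finrank E k = 2 := by
    have := Module.finrank_mul_finrank ℚ E k
    rw [hE2, h4] at this
    omega
  let e' : E := ⟨e, IntermediateField.mem_adjoin_simple_self ℚ e⟩
  have he' : e' ^ 2 = ((q * s : ℕ) : E) := Subtype.ext (by exact he)
  have h2E : ¬ IsSquare ((2 : ℕ) : E) := quad_nonsq hE2 e' (q * s) he' hqsQ 2 (by exact_mod_cast two_nonsq) (by
    rw [mul_assoc]
    refine nonsq_nat q (s * 2) hq ?_
    rw [hq.dvd_mul]
    rintro (h | h)
    · exact prime_ndvd hq hs hqs h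
    · exact prime_ndvd hq Nat.prime_two (by omega) h)
  have hpqE : ¬ IsSquare ((p * q : ℕ) : E) := quad_nonsq hE2 e' (q * s) he' hqsQ (p * q)
    (nonsq_nat p q hp (prime_ndvd hp hq hpq)) (by
    rw [show q * s * (p * q) = p * (q * s * q) by ring]
    refine nonsq_nat p _ hp ?_
    rw [hp.dvd_mul, hp.dvd_mul]
    rintro ((h | h) | h)
    · exact prime_ndvd hp hq hpq h
    · exact prime_ndvd hp hs hps h
    · exact prime_ndvd hp hq hpq h)
  have h1 : Algebra.norm E (1 + a) = -1 := by
    have := quad_norm hk2 a ((2 : ℕ) : E) (by rw [ha, map_natCast]; simp) h2E 1 1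
    rw [map_one, one_mul] at this
    rw [this]; norm_num
  have : FiniteDimensional k K := Module.finite_of_finrank_pos (by omega)
  have : FiniteDimensional E K := FiniteDimensional.trans E k K
  obtain ⟨X, Y, hXY⟩ := norm_form b ((p * q : ℕ) : E) (by rw [hb, map_natCast]) hpqE z
  rw [← Algebra.norm_norm (R := E) (S := k), hz, h1] at hXY
  obtain ⟨x, hx⟩ : ∃ x, q = 8 * x + 3 := ⟨q / 8, by omega⟩
  obtain ⟨y, hy⟩ : ∃ y, s = 8 * y + 3 := ⟨s / 8, by omega⟩
  obtain ⟨w, hw⟩ : ∃ w, p = 8 * w + 5 := ⟨p / 8, by omega⟩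
  obtain ⟨f⟩ := quad_emb (F := ℚ_[2]) hE2 e' ((q * s : ℕ) : ℚ) (by rw [he', map_natCast]) hqsQ (by
    have := padic_two_sq (q * s) (by
      rw [hx, hy, show (8 * x + 3) * (8 * y + 3) = 8 * (8 * x * y + 3 * x + 3 * y + 1) + 1 by ring]
      omega)
    exact_mod_cast this)
  refine padic_two_no (p * q) (by
      rw [hx, hw, show (8 * w + 5) * (8 * x + 3) = 4 * (16 * x * w + 6 * w + 10 * x + 3) + 3 by ring]
      omega) (f X) (f Y) ?_
  have := congrArg f hXY
  simp only [map_neg, map_one, map_sub, map_mul, map_pow, map_natCast] at this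
  exact this.symm

lemma cl_F [IsTotallyReal K] (h2 : Module.finrank k K = 2) (h4 : Module.finrank ℚ k = 4)
    (p q s : ℕ) (hp : p.Prime) (hq : q.Prime) (hs : s.Prime)
    (hpq : p ≠ q) (hps : p ≠ s) (hqs : q ≠ s) (hp8 : p % 8 = 5) (hq8 : q % 8 = 3) (hs4 : s % 4 = 3)
    (a e : k) (ha : a ^ 2 = 2) (he : e ^ 2 = (q * s : ℕ)) (b c : K) (hb : b ^ 2 = (p * q : ℕ))
    (hc : c ^ 2 = (p * s : ℕ)) (hpqk : ¬ IsSquare ((p * q : ℕ) : k)) (hpsk : ¬ IsSquare ((p * s : ℕ) : k)) :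
    Nat.card {c : ClassGroup (𝓞 K) // c ^ 2 = 1} ≤ 4 := by
  have : IsTotallyReal k := IsTotallyReal.of_algebra k K
  obtain ⟨aI, haI, haI2⟩ := exists_int_sqrt a 2 (by exact_mod_cast ha)
  have haI2' : aI ^ 2 = 2 := by exact_mod_cast haI2
  have hcop : ∀ v : HeightOneSpectrum (𝓞 k), (q : 𝓞 k) ∈ v.asIdeal → (s : 𝓞 k) ∈ v.asIdeal → False := by
    intro v h1 h3
    apply v.isPrime.ne_top
    rw [Ideal.eq_top_iff_one]
    have hc : IsCoprime (q : ℤ) (s : ℤ) := Nat.isCoprime_iff_coprime.2 ((Nat.coprime_primes hq hs).2 hqs)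
    obtain ⟨x, y, hxy⟩ := hc
    have : (x : 𝓞 k) * q + y * s = 1 := by exact_mod_cast congrArg (Int.cast : ℤ → 𝓞 k) hxy
    rw [← this]
    exact add_mem (Ideal.mul_mem_left _ _ h1) (Ideal.mul_mem_left _ _ h3)
  have hS : ∀ v ∉ ov k p ∪ ov k 2, UnramAt k K v := by
    intro v hv
    have hvp : (p : 𝓞 k) ∉ v.asIdeal := fun h => hv (Or.inl h)
    have hv2 : v ∉ ov k 2 := fun h => hv (Or.inr h)
    by_cases hvq : (q : 𝓞 k) ∈ v.asIdeal
    · refine unram_sqrt h2 c (p * s) hc hpsk v hv2 ?_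
      intro h
      rw [Nat.cast_mul] at h
      rcases v.isPrime.mem_or_mem h with h | h
      · exact hvp h
      · exact hcop v hvq h
    · refine unram_sqrt h2 b (p * q) hb hpqk v hv2 ?_
      intro h
      rw [Nat.cast_mul] at h
      rcases v.isPrime.mem_or_mem h with h | h
      · exact hvp h
      · exact hvq h
  have main := ambiguous_bound h2 b ((p * q : ℕ) : k) (by rw [hb, map_natCast]) hpqk
    (cl_k h4 a e ha q s hq hs hqs hq8 hs4 he) (ov k p ∪ ov k 2) ((ov_finite p hp).union (ov_finite 2 Nat.prime_two)) hS
    (normUnits k K) (fun u hu => hu)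
  have hU0 := normUnits_index_ne_zero (k := k) (K := K) h2
  have hcard := Set.ncard_union_le (ov k p) (ov k 2)
  have h1 := ov_card_two (K := k) p hp (no_hom_of_two p aI haI2' (two_nonres p hp (Or.inr hp8)))
  rw [h4] at h1
  by_cases h3 : s % 8 = 3
  · have h5 := ov_two_card (K := k) aI haI2'
    rw [h4] at h5
    let ε : (𝓞 k)ˣ := ⟨1 + aI, aI - 1, by linear_combination haI2', by linear_combination haI2'⟩
    have hε : (((ε : (𝓞 k)ˣ) : 𝓞 k) : k) = 1 + a := by
      change algebraMap (𝓞 k) k (1 + aI) = _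
      rw [map_add, map_one]; exact congrArg (1 + ·) haI
    have hi := index_ge_two (normUnits k K) hU0 ε (by
      rintro ⟨z, hz⟩
      exact eps_not_norm h2 h4 p q s hp hq hs hpq hps hqs hp8 hq8 h3 a e ha he b hb z (by rw [hz, hε]))
    have h6 : 2 ^ (ov k p ∪ ov k 2).ncard ≤ 2 ^ 4 := Nat.pow_le_pow_right (by norm_num) (by omega)
    have := Nat.mul_le_mul_right (Nat.card {c : ClassGroup (𝓞 K) // c ^ 2 = 1}) (Nat.mul_le_mul_left 2 hi)
    omega
  · have h5 := ov_two_card_four (K := k) aI haI2' (by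
      rintro ⟨f⟩
      obtain ⟨x, hx⟩ : ∃ x, q = 8 * x + 3 := ⟨q / 8, by omega⟩
      obtain ⟨y, hy⟩ : ∃ y, s = 8 * y + 7 := ⟨s / 8, by omega⟩
      have hqs8 : (q * s) % 8 = 5 := by
        rw [hx, hy, show (8 * x + 3) * (8 * y + 7) = 8 * (8 * x * y + 7 * x + 3 * y + 2) + 5 by ring]
        omega
      obtain ⟨θ, -, n, hn, hθ⟩ := exists_half e (q * s) he (by omega)
      have hn1 : n % 2 = 1 := by omega
      have := congrArg f hθ
      rw [map_add, map_sub, map_pow, map_intCast, map_zero] at this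
      have hn2 : (n : ZMod 2) = 1 := by
        have := (ZMod.intCast_eq_intCast_iff n 1 2).2 hn1
        exact_mod_cast this
      rw [hn2] at this
      generalize f θ = t at this
      revert this t
      decide)
    rw [h4] at h5
    have h6 : 2 ^ (ov k p ∪ ov k 2).ncard ≤ 2 ^ 3 := Nat.pow_le_pow_right (by norm_num) (by omega)
    have hi : 1 ≤ (normUnits k K).index := Nat.pos_of_ne_zero hU0
    have := Nat.mul_le_mul_right (Nat.card {c : ClassGroup (𝓞 K) // c ^ 2 = 1}) (Nat.mul_le_mul_left 2 hi)
    omega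

end clF

end part10

section part11
open IsDedekindDomain

section step
open nonZeroDivisors
variable {M K : Type*} [Field M] [Field K] [NumberField M] [NumberField K] [Algebra M K]

/-- extension of nonzero ideals -/
noncomputable def extNZ (M K : Type*) [Field M] [Field K] [NumberField M] [NumberField K] [Algebra M K] :
    (Ideal (𝓞 M))⁰ →* (Ideal (𝓞 K))⁰ where
  toFun I := ⟨(I : Ideal (𝓞 M)).map (algebraMap (𝓞 M) (𝓞 K)), by
    rw [mem_nonZeroDivisors_iff_ne_zero, Ideal.zero_eq_bot, Ne,
      Ideal.map_eq_bot_iff_of_injective (FaithfulSMul.algebraMap_injective (𝓞 M) (𝓞 K))]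
    exact nonZeroDivisors.coe_ne_zero I⟩
  map_one' := Subtype.ext (by simp [Ideal.one_eq_top, Ideal.map_top])
  map_mul' I J := Subtype.ext (Ideal.map_mul _ _ _)

lemma extNZ_wd (I J : (Ideal (𝓞 M))⁰) (h : ClassGroup.mk0 I = ClassGroup.mk0 J) :
    ClassGroup.mk0 (extNZ M K I) = ClassGroup.mk0 (extNZ M K J) := by
  rw [ClassGroup.mk0_eq_mk0_iff] at h ⊢
  obtain ⟨x, y, hx, hy, h⟩ := h
  have hinj := FaithfulSMul.algebraMap_injective (𝓞 M) (𝓞 K)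
  refine ⟨algebraMap _ _ x, algebraMap _ _ y, ?_, ?_, ?_⟩
  · rwa [Ne, map_eq_zero_iff _ hinj]
  · rwa [Ne, map_eq_zero_iff _ hinj]
  · have := congrArg (Ideal.map (algebraMap (𝓞 M) (𝓞 K))) h
    rw [Ideal.map_mul, Ideal.map_mul, Ideal.map_span, Ideal.map_span, Set.image_singleton, Set.image_singleton] at this
    exact this

lemma mk0_sq_of_span (D : (Ideal (𝓞 K))⁰) (x : 𝓞 K) (h : (D : Ideal (𝓞 K)) ^ 2 = Ideal.span {x}) :
    ClassGroup.mk0 D ^ 2 = 1 := by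
  rw [← map_pow, ClassGroup.mk0_eq_one_iff]
  exact ⟨⟨x, by rw [SubmonoidClass.coe_pow, h]⟩⟩

lemma rel_step [IsTotallyReal M] (h2 : Module.finrank M K = 2) (h4 : Module.finrank ℚ M = 4)
    (p r : ℕ) [Fact p.Prime] (hp : p.Prime) (hr : r.Prime) (hpr : p ≠ r) (hp8 : p % 8 = 5) (hr4 : r % 4 = 3)
    (hres : IsSquare (r : ZMod p))
    (a b : M) (ha : a ^ 2 = 2) (hb : b ^ 2 = (p * r : ℕ))
    (θ : K) (d : M) (hθ : θ ^ 2 = algebraMap M K d) (hd : ¬ IsSquare d)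
    (σ : K ≃+* K) (hσ : ∀ u : M, σ (algebraMap M K u) = algebraMap M K u) (hσθ : σ θ = -θ)
    (aK : 𝓞 K) (haK : algebraMap (𝓞 K) K aK = algebraMap M K a)
    (D : (Ideal (𝓞 K))⁰) (hD : (D : Ideal (𝓞 K)) ^ 2 = Ideal.span {aK})
    (A A' : (Ideal (𝓞 K))⁰) (hA' : (A' : Ideal (𝓞 K)) = A * sig σ A) :
    ∃ m, Odd m ∧ (nuP K p A = 1 → ClassGroup.mk0 A' ^ m = 1) ∧
      (nuP K p A ≠ 1 → ClassGroup.mk0 A' ^ m = ClassGroup.mk0 D) := by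
  have hM : NormHyp M p := normHyp_of_sqrt (by omega) r (prime_ndvd hp hr hpr) hres b hb
  have hA0 : (A : Ideal (𝓞 K)) ≠ ⊥ := nonZeroDivisors.coe_ne_zero A
  obtain ⟨aI, haI, haI2⟩ := exists_int_sqrt a 2 (by exact_mod_cast ha)
  have haI2' : aI ^ 2 = 2 := by exact_mod_cast haI2
  obtain ⟨w, hw⟩ : ∃ w, p = 8 * w + 5 := ⟨p / 8, by omega⟩
  obtain ⟨y, hy⟩ : ∃ y, r = 4 * y + 3 := ⟨r / 4, by omega⟩
  obtain ⟨DM, hDM⟩ := exists_D a b (p * r) ha hb (by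
    rw [hw, hy, show (8 * w + 5) * (4 * y + 3) = 4 * (8 * w * y + 6 * w + 5 * y + 3) + 3 by ring]
    omega) aI haI
  have haI0 : aI ≠ 0 := by
    rintro rfl; norm_num at haI2'
  have hDM0 : DM ≠ ⊥ := by
    rintro rfl
    rw [← Ideal.zero_eq_bot, zero_pow two_ne_zero, Ideal.zero_eq_bot, eq_comm, Ideal.span_singleton_eq_bot] at hDM
    exact haI0 hDM
  let DM' : (Ideal (𝓞 M))⁰ := ⟨DM, mem_nonZeroDivisors_of_ne_zero hDM0⟩
  have hDMK : extNZ M K DM' = D := by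
    apply Subtype.ext
    apply ideal_sq_inj
    rw [hD]
    change (DM.map _) ^ 2 = _
    rw [← Ideal.map_pow, hDM, Ideal.map_span, Set.image_singleton]
    congr 2
    apply FaithfulSMul.algebraMap_injective (𝓞 K) K
    rw [haK, ← IsScalarTower.algebraMap_apply, IsScalarTower.algebraMap_apply (𝓞 M) M K]
    exact congrArg _ haI
  have hN : Ideal.absNorm DM = 2 := by
    have := absNorm_D aI haI2' DM hDM
    rw [h4] at this
    exact Nat.pow_left_injective (n := 4) (by norm_num) this
  have hχ : psi hM (ClassGroup.mk0 DM') ≠ 1 := by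
    have h20 : (2 : ℚ_[p]) ≠ 0 := two_ne_zero
    rw [psi_mk0, nuP_apply DM' (Units.mk0 2 h20) (by
      change _ = ((Ideal.absNorm DM : ℕ) : ℚ_[p])
      rw [hN]; simp)]
    intro h
    rw [QuotientGroup.eq_one_iff] at h
    have := res_of_NmP p 2 (by
      have := prime_ndvd hp Nat.prime_two (by omega)
      exact_mod_cast this) _ (by simp) h
    exact two_nonres p hp (Or.inr hp8) (by exact_mod_cast this)
  have hI0 : Ideal.relNorm (𝓞 M) (A : Ideal (𝓞 K)) ≠ 0 := by
    intro h
    have h1 := Ideal.absNorm_relNorm (𝓞 M) (𝓞 K) (A : Ideal (𝓞 K))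
    rw [h, map_zero, eq_comm, Ideal.absNorm_eq_zero_iff] at h1
    exact hA0 h1
  let I : (Ideal (𝓞 M))⁰ := ⟨Ideal.relNorm (𝓞 M) (A : Ideal (𝓞 K)), mem_nonZeroDivisors_of_ne_zero hI0⟩
  have hIA : extNZ M K I = A' := by
    apply Subtype.ext
    rw [hA']
    exact map_relNorm_quad h2 θ d hθ hd σ hσ hσθ A hA0
  have hnu : nuP K p A = nuP M p I := by
    have hn0 : ((Ideal.absNorm (A : Ideal (𝓞 K)) : ℕ) : ℚ_[p]) ≠ 0 := by
      rw [Nat.cast_ne_zero, Ideal.absNorm_ne_zero_iff_mem_nonZeroDivisors]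
      exact A.2
    rw [nuP_apply A (Units.mk0 _ hn0) rfl, nuP_apply I (Units.mk0 _ hn0)]
    change _ = ((Ideal.absNorm (Ideal.relNorm (𝓞 M) (A : Ideal (𝓞 K))) : ℕ) : ℚ_[p])
    rw [Ideal.absNorm_relNorm]; rfl
  obtain ⟨m, hm, h3, h5⟩ := two_part (Q := ℚ_[p]ˣ ⧸ NmP p) quotNmP_sq (psi hM)
    (cl_M h4 a b ha p r hp hr hpr hp8 hr4 hb) (ClassGroup.mk0 DM')
    (mk0_sq_of_span DM' aI hDM) hχ (ClassGroup.mk0 I)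
  refine ⟨m, hm, ?_, ?_⟩
  · intro h
    have := h3 (by rw [psi_mk0, ← hnu]; exact h)
    rw [← map_pow, ← map_one ClassGroup.mk0] at this
    have := extNZ_wd (K := K) _ _ this
    rwa [map_pow, map_one, hIA, map_pow, map_one] at this
  · intro h
    have := h5 (by rw [psi_mk0, ← hnu]; exact h)
    rw [← map_pow] at this
    have := extNZ_wd (K := K) _ _ this
    rwa [map_pow, hIA, map_pow, hDMK] at this

/-- step for the field with odd class number -/
lemma rel_step_odd (h2 : Module.finrank M K = 2)
    (hcl : ∀ c : ClassGroup (𝓞 M), c ^ 2 = 1 → c = 1)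
    (θ : K) (d : M) (hθ : θ ^ 2 = algebraMap M K d) (hd : ¬ IsSquare d)
    (σ : K ≃+* K) (hσ : ∀ u : M, σ (algebraMap M K u) = algebraMap M K u) (hσθ : σ θ = -θ)
    (τ : K ≃+* K)
    (A A' : (Ideal (𝓞 K))⁰) (hA' : (A' : Ideal (𝓞 K)) = sig τ (A * sig σ A)) :
    ∃ m, Odd m ∧ ClassGroup.mk0 A' ^ m = 1 := by
  have hA0 : (A : Ideal (𝓞 K)) ≠ ⊥ := nonZeroDivisors.coe_ne_zero A
  have hI0 : Ideal.relNorm (𝓞 M) (A : Ideal (𝓞 K)) ≠ 0 := by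
    intro h
    have h1 := Ideal.absNorm_relNorm (𝓞 M) (𝓞 K) (A : Ideal (𝓞 K))
    rw [h, map_zero, eq_comm, Ideal.absNorm_eq_zero_iff] at h1
    exact hA0 h1
  let I : (Ideal (𝓞 M))⁰ := ⟨Ideal.relNorm (𝓞 M) (A : Ideal (𝓞 K)), mem_nonZeroDivisors_of_ne_zero hI0⟩
  obtain ⟨m, hm, h⟩ := odd_part hcl (ClassGroup.mk0 I)
  refine ⟨m, hm, ?_⟩
  rw [← map_pow, ClassGroup.mk0_eq_one_iff] at h ⊢
  obtain ⟨⟨x, hx⟩⟩ := h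
  replace hx : (Ideal.relNorm (𝓞 M) (A : Ideal (𝓞 K))) ^ m = Ideal.span {x} := hx
  have h3 := congrArg (fun J => sig τ (Ideal.map (algebraMap (𝓞 M) (𝓞 K)) J)) hx
  rw [Ideal.map_pow, map_relNorm_quad h2 θ d hθ hd σ hσ hσθ A hA0, sig_pow, ← hA', Ideal.map_span, Set.image_singleton,
    sig_span] at h3
  exact ⟨⟨_, by rw [SubmonoidClass.coe_pow, h3]⟩⟩

end step

end part11

section part12
open IsDedekindDomain

section deg

lemma nonsq_of (r m : ℕ) (hr : r.Prime) (hm : ¬ r ∣ m) (n : ℕ) (hn : n = r * m) : ¬ IsSquare (n : ℚ) := by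
  rw [hn]; exact nonsq_nat r m hr hm

lemma finrank_pair {K : Type*} [Field K] [NumberField K] (a b : K) (d e : ℕ) (ha : a ^ 2 = d) (hb : b ^ 2 = e)
    (hd : ¬ IsSquare (d : ℚ)) (he : ¬ IsSquare (e : ℚ)) (hde : ¬ IsSquare ((d * e : ℕ) : ℚ)) :
    Module.finrank ℚ (IntermediateField.adjoin ℚ {a, b}) = 4 := by
  let L : IntermediateField ℚ K := IntermediateField.adjoin ℚ {a}
  have hL2 : Module.finrank ℚ L = 2 := finrank_adjoin_sq a (d : ℚ) (by rw [ha, map_natCast]) hd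
  let a' : L := ⟨a, IntermediateField.mem_adjoin_simple_self ℚ a⟩
  have ha' : a' ^ 2 = (d : L) := Subtype.ext (by exact ha)
  have hne := quad_nonsq hL2 a' d ha' hd e he hde
  have hN : Module.finrank L (IntermediateField.adjoin L {b}) = 2 :=
    finrank_adjoin_sq b (e : L) (by rw [hb, map_natCast]) hne
  have h1 := Module.finrank_mul_finrank ℚ L (IntermediateField.adjoin L {b})
  have h3 : (IntermediateField.adjoin L {b}).restrictScalars ℚ = IntermediateField.adjoin ℚ {a, b} := by
    exact IntermediateField.adjoin_adjoin_left ℚ {a} {b}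
  rw [← h3]
  change Module.finrank ℚ (IntermediateField.adjoin L {b}) = 4
  rw [← h1, hL2, hN]

/-- `r * m` is not a square in `ℚ(√d, √e)` -/
lemma biquad_nonsq {K : Type*} [Field K] [NumberField K] (h4 : Module.finrank ℚ K = 4) (a b : K) (d e : ℕ)
    (ha : a ^ 2 = d) (hb : b ^ 2 = e)
    (hd : ¬ IsSquare (d : ℚ)) (he : ¬ IsSquare (e : ℚ)) (hde : ¬ IsSquare ((d * e : ℕ) : ℚ))
    (r m : ℕ) (hr : r.Prime) (hm : ¬ r ∣ m) (hrd : ¬ r ∣ d) (hre : ¬ r ∣ e) :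
    ¬ IsSquare ((r * m : ℕ) : K) := by
  let L : IntermediateField ℚ K := IntermediateField.adjoin ℚ {a}
  have hL2 : Module.finrank ℚ L = 2 := finrank_adjoin_sq a (d : ℚ) (by rw [ha, map_natCast]) hd
  have hK2 : Module.finrank L K = 2 := by
    have := Module.finrank_mul_finrank ℚ L K
    rw [hL2, h4] at this
    omega
  let a' : L := ⟨a, IntermediateField.mem_adjoin_simple_self ℚ a⟩
  have ha' : a' ^ 2 = (d : L) := Subtype.ext (by exact ha)
  have hne := quad_nonsq hL2 a' d ha' hd e he hde
  have h1 := quad_nonsq hL2 a' d ha' hd (r * m) (nonsq_nat r m hr hm)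
    (nonsq_of r (d * m) hr (by rw [hr.dvd_mul]; tauto) _ (by ring))
  have h2 := quad_nonsq hL2 a' d ha' hd (e * (r * m)) (nonsq_of r (e * m) hr (by rw [hr.dvd_mul]; tauto) _ (by ring))
    (nonsq_of r (d * e * m) hr (by rw [hr.dvd_mul, hr.dvd_mul]; tauto) _ (by ring))
  have := nonsq_ext hK2 b (e : L) (by rw [hb, map_natCast]) hne ((r * m : ℕ) : L) h1 (by exact_mod_cast h2)
  rwa [map_natCast] at this

lemma finrank_triple {K : Type*} [Field K] [NumberField K] (a b c : K) (d e : ℕ) (ha : a ^ 2 = d) (hb : b ^ 2 = e)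
    (hd : ¬ IsSquare (d : ℚ)) (he : ¬ IsSquare (e : ℚ)) (hde : ¬ IsSquare ((d * e : ℕ) : ℚ))
    (r m : ℕ) (hr : r.Prime) (hm : ¬ r ∣ m) (hrd : ¬ r ∣ d) (hre : ¬ r ∣ e) (hc : c ^ 2 = (r * m : ℕ))
    (htop : IntermediateField.adjoin ℚ {a, b, c} = ⊤) :
    Module.finrank ℚ K = 8 := by
  let L : IntermediateField ℚ K := IntermediateField.adjoin ℚ {a, b}
  have hL4 : Module.finrank ℚ L = 4 := finrank_pair a b d e ha hb hd he hde
  let a' : L := ⟨a, IntermediateField.subset_adjoin _ _ (by simp)⟩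
  let b' : L := ⟨b, IntermediateField.subset_adjoin _ _ (by simp)⟩
  have hne := biquad_nonsq hL4 a' b' d e (Subtype.ext (by exact ha)) (Subtype.ext (by exact hb)) hd he hde r m hr hm hrd hre
  have hN : Module.finrank L (IntermediateField.adjoin L {c}) = 2 :=
    finrank_adjoin_sq c ((r * m : ℕ) : L) (by rw [hc, map_natCast]) hne
  have h1 := Module.finrank_mul_finrank ℚ L (IntermediateField.adjoin L {c})
  have h3 : (IntermediateField.adjoin L {c}).restrictScalars ℚ = ⊤ := by
    refine (IntermediateField.adjoin_adjoin_left ℚ {a, b} {c}).trans ?_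
    rw [← htop]
    congr 1
    ext x; simp; tauto
  have h4 : Module.finrank ℚ ((IntermediateField.adjoin L {c}).restrictScalars ℚ) = 8 := by
    change Module.finrank ℚ (IntermediateField.adjoin L {c}) = 8
    rw [← h1, hL4, hN]
  rw [h3] at h4
  rw [← h4]
  exact (IntermediateField.finrank_top' (F := ℚ) (E := K)).symm

lemma fix_adjoin {K : Type*} [Field K] [NumberField K] (S : Set K) (σ : K ≃+* K) (h : ∀ x ∈ S, σ x = x)
    (u : IntermediateField.adjoin ℚ S) : σ (algebraMap _ K u) = algebraMap _ K u := by
  obtain ⟨u, hu⟩ := u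
  change σ u = u
  induction hu using IntermediateField.adjoin_induction with
  | mem x hx => exact h x hx
  | algebraMap x => simp
  | add x y _ _ hx hy => rw [map_add, hx, hy]
  | inv x _ hx => rw [map_inv₀, hx]
  | mul x y _ _ hx hy => rw [map_mul, hx, hy]

end deg

section main
open nonZeroDivisors

/-- the standing hypotheses on `K = ℚ(√2, √(pq), √(ps))` -/
structure Setup (K : Type*) [Field K] [NumberField K] (p q s : ℕ) (a b c : K) : Prop where
  hp : p.Prime
  hq : q.Prime
  hs : s.Prime
  hpq : p ≠ q
  hps : p ≠ s
  hqs : q ≠ s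
  hp8 : p % 8 = 5
  hq8 : q % 8 = 3
  hs4 : s % 4 = 3
  rq : IsSquare (q : ZMod p)
  rs : IsSquare (s : ZMod p)
  tr : IsTotallyReal K
  ha : a ^ 2 = 2
  hb : b ^ 2 = (p * q : ℕ)
  hc : c ^ 2 = (p * s : ℕ)
  htop : IntermediateField.adjoin ℚ {a, b, c} = ⊤

variable {K : Type*} [Field K] [NumberField K] {p q s : ℕ} {a b c : K}

namespace Setup

lemma two_ne (H : Setup K p q s a b c) : ¬ p ∣ 2 ∧ ¬ q ∣ 2 ∧ ¬ s ∣ 2 := by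
  have := H.hp8
  have := H.hq8
  have := H.hs4
  exact ⟨prime_ndvd H.hp Nat.prime_two (by omega), prime_ndvd H.hq Nat.prime_two (by omega),
    prime_ndvd H.hs Nat.prime_two (by omega)⟩

lemma ndvd (H : Setup K p q s a b c) : ¬ p ∣ q ∧ ¬ p ∣ s ∧ ¬ q ∣ p ∧ ¬ q ∣ s ∧ ¬ s ∣ p ∧ ¬ s ∣ q :=
  ⟨prime_ndvd H.hp H.hq H.hpq, prime_ndvd H.hp H.hs H.hps, prime_ndvd H.hq H.hp H.hpq.symm,
   prime_ndvd H.hq H.hs H.hqs, prime_ndvd H.hs H.hp H.hps.symm, prime_ndvd H.hs H.hq H.hqs.symm⟩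

lemma rank8 (H : Setup K p q s a b c) : Module.finrank ℚ K = 8 := by
  obtain ⟨h1, h2, h3⟩ := H.two_ne
  obtain ⟨g1, g2, g3, g4, g5, g6⟩ := H.ndvd
  refine finrank_triple a b c 2 (p * q) (by exact_mod_cast H.ha) H.hb (by exact_mod_cast two_nonsq)
    (nonsq_nat p q H.hp g1) (nonsq_of p (2 * q) H.hp (by rw [H.hp.dvd_mul]; tauto) _ (by ring)) s p H.hs g5 h3
    (by rw [H.hs.dvd_mul]; tauto) (by rw [H.hc, mul_comm]) H.htop

/-- the element `√(qs)` -/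
lemma exists_e (H : Setup K p q s a b c) : ∃ e : K, e ^ 2 = (q * s : ℕ) ∧ b * c = p * e := by
  have hp0 : (p : K) ≠ 0 := by exact_mod_cast H.hp.ne_zero
  refine ⟨b * c / p, ?_, by field_simp⟩
  rw [div_pow, mul_pow, H.hb, H.hc]
  push_cast
  field_simp

lemma half {M : IntermediateField ℚ K} (H : Setup K p q s a b c) (h : Module.finrank ℚ M = 4) : Module.finrank M K = 2 := by
  have := Module.finrank_mul_finrank ℚ M K
  rw [H.rank8, h] at this
  omega

lemma rank_k (H : Setup K p q s a b c) (e : K) (he : e ^ 2 = (q * s : ℕ)) :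
    Module.finrank ℚ (IntermediateField.adjoin ℚ {a, e}) = 4 := by
  obtain ⟨h1, h2, h3⟩ := H.two_ne
  obtain ⟨g1, g2, g3, g4, g5, g6⟩ := H.ndvd
  exact finrank_pair a e 2 (q * s) (by exact_mod_cast H.ha) he (by exact_mod_cast two_nonsq)
    (nonsq_nat q s H.hq g4) (nonsq_of q (2 * s) H.hq (by rw [H.hq.dvd_mul]; tauto) _ (by ring))

lemma nonsq_k (H : Setup K p q s a b c) (e : K) (he : e ^ 2 = (q * s : ℕ)) (m : ℕ) (hm : ¬ p ∣ m) :
    ¬ IsSquare ((p * m : ℕ) : IntermediateField.adjoin ℚ {a, e}) := by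
  obtain ⟨h1, h2, h3⟩ := H.two_ne
  obtain ⟨g1, g2, g3, g4, g5, g6⟩ := H.ndvd
  exact biquad_nonsq (H.rank_k e he) ⟨a, IntermediateField.subset_adjoin _ _ (by simp)⟩
    ⟨e, IntermediateField.subset_adjoin _ _ (by simp)⟩ 2 (q * s)
    (Subtype.ext (by change a ^ 2 = ((2 : ℕ) : K); exact_mod_cast H.ha)) (Subtype.ext (by exact he)) (by exact_mod_cast two_nonsq)
    (nonsq_nat q s H.hq g4) (nonsq_of q (2 * s) H.hq (by rw [H.hq.dvd_mul]; tauto) _ (by ring))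
    p m H.hp hm h1 (by rw [H.hp.dvd_mul]; tauto)

lemma cl_le (H : Setup K p q s a b c) : Nat.card {c : ClassGroup (𝓞 K) // c ^ 2 = 1} ≤ 4 := by
  have := H.tr
  obtain ⟨g1, g2, g3, g4, g5, g6⟩ := H.ndvd
  obtain ⟨e, he, hbc⟩ := H.exists_e
  exact cl_F (k := IntermediateField.adjoin ℚ {a, e}) (H.half (H.rank_k e he)) (H.rank_k e he) p q s H.hp H.hq H.hs
    H.hpq H.hps H.hqs H.hp8 H.hq8 H.hs4 ⟨a, IntermediateField.subset_adjoin _ _ (by simp)⟩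
    ⟨e, IntermediateField.subset_adjoin _ _ (by simp)⟩ (Subtype.ext (by exact H.ha)) (Subtype.ext (by exact he))
    b c H.hb H.hc (H.nonsq_k e he q g1) (H.nonsq_k e he s g2)

end Setup

end main

end part12

section part13
open IsDedekindDomain

section expo
open nonZeroDivisors
variable {K : Type*} [Field K] [NumberField K] {p q s : ℕ} {a b c : K}
namespace Setup

lemma exists_DK (H : Setup K p q s a b c) : ∃ (aI : 𝓞 K) (D : (Ideal (𝓞 K))⁰), algebraMap (𝓞 K) K aI = a ∧
    aI ^ 2 = 2 ∧ (D : Ideal (𝓞 K)) ^ 2 = Ideal.span {aI} ∧ Ideal.absNorm (D : Ideal (𝓞 K)) = 4 := by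
  obtain ⟨aI, haI, haI2⟩ := exists_int_sqrt a 2 (by exact_mod_cast H.ha)
  have haI2' : aI ^ 2 = 2 := by exact_mod_cast haI2
  obtain ⟨w, hw⟩ : ∃ w, p = 8 * w + 5 := ⟨p / 8, by have := H.hp8; omega⟩
  obtain ⟨y, hy⟩ : ∃ y, q = 8 * y + 3 := ⟨q / 8, by have := H.hq8; omega⟩
  obtain ⟨D, hD⟩ := exists_D a b (p * q) H.ha H.hb (by
    rw [hw, hy, show (8 * w + 5) * (8 * y + 3) = 4 * (16 * w * y + 6 * w + 10 * y + 3) + 3 by ring]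
    omega) aI haI
  have hN := absNorm_D aI haI2' D hD
  rw [H.rank8] at hN
  have hN4 : Ideal.absNorm D = 4 := Nat.pow_left_injective (n := 4) (by norm_num) (by simpa using hN)
  have hD0 : D ≠ ⊥ := by
    rintro rfl
    simp at hN4
  exact ⟨aI, ⟨D, mem_nonZeroDivisors_of_ne_zero hD0⟩, haI, haI2', hD, hN4⟩

lemma exponent (H : Setup K p q s a b c) (x : ClassGroup (𝓞 K)) : ∃ m, Odd m ∧ (x ^ m) ^ 2 = 1 := by
  have := H.tr
  have : Fact p.Prime := ⟨H.hp⟩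
  obtain ⟨h1, h2, h3⟩ := H.two_ne
  obtain ⟨g1, g2, g3, g4, g5, g6⟩ := H.ndvd
  obtain ⟨e, he, hbc⟩ := H.exists_e
  have hp0 : (p : K) ≠ 0 := by exact_mod_cast H.hp.ne_zero
  have hb0 : b ≠ 0 := by
    rintro h
    have := H.hb
    rw [h, zero_pow two_ne_zero, eq_comm] at this
    have := H.hp.ne_zero
    have := H.hq.ne_zero
    simp_all
  let k := IntermediateField.adjoin ℚ {a, e}
  let Mq := IntermediateField.adjoin ℚ {a, b}
  let Ms := IntermediateField.adjoin ℚ {a, c}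
  have tk : IsTotallyReal k := IsTotallyReal.of_algebra k K
  have tMq : IsTotallyReal Mq := IsTotallyReal.of_algebra Mq K
  have tMs : IsTotallyReal Ms := IsTotallyReal.of_algebra Ms K
  have rk : Module.finrank ℚ k = 4 := H.rank_k e he
  have hk2 := H.half rk
  have ha2 : a ^ 2 = (2 : ℕ) := by exact_mod_cast H.ha
  have n2 : ¬ IsSquare ((2 : ℕ) : ℚ) := by exact_mod_cast two_nonsq
  have npq := nonsq_nat p q H.hp g1
  have nps := nonsq_nat p s H.hp g2
  have n2pq : ¬ IsSquare ((2 * (p * q) : ℕ) : ℚ) := nonsq_of p (2 * q) H.hp (by rw [H.hp.dvd_mul]; tauto) _ (by ring)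
  have n2ps : ¬ IsSquare ((2 * (p * s) : ℕ) : ℚ) := nonsq_of p (2 * s) H.hp (by rw [H.hp.dvd_mul]; tauto) _ (by ring)
  have rMq : Module.finrank ℚ Mq = 4 := finrank_pair a b 2 (p * q) ha2 H.hb n2 npq n2pq
  have rMs : Module.finrank ℚ Ms = 4 := finrank_pair a c 2 (p * s) ha2 H.hc n2 nps n2ps
  have hMq2 := H.half rMq
  have hMs2 := H.half rMs
  have hak : a ∈ k := IntermediateField.subset_adjoin _ _ (by simp)
  have hek : e ∈ k := IntermediateField.subset_adjoin _ _ (by simp)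
  have haMq : a ∈ Mq := IntermediateField.subset_adjoin _ _ (by simp)
  have hbMq : b ∈ Mq := IntermediateField.subset_adjoin _ _ (by simp)
  have haMs : a ∈ Ms := IntermediateField.subset_adjoin _ _ (by simp)
  have hcMs : c ∈ Ms := IntermediateField.subset_adjoin _ _ (by simp)
  have dk := H.nonsq_k e he q g1
  have dMq : ¬ IsSquare ((s * p : ℕ) : Mq) := biquad_nonsq rMq ⟨a, haMq⟩ ⟨b, hbMq⟩ 2 (p * q) (Subtype.ext (by exact ha2))
    (Subtype.ext (by exact H.hb)) n2 npq n2pq s p H.hs g5 h3 (by rw [H.hs.dvd_mul]; tauto)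
  have dMs : ¬ IsSquare ((q * p : ℕ) : Ms) := biquad_nonsq rMs ⟨a, haMs⟩ ⟨c, hcMs⟩ 2 (p * s) (Subtype.ext (by exact ha2))
    (Subtype.ext (by exact H.hc)) n2 nps n2ps q p H.hq g3 h2 (by rw [H.hq.dvd_mul]; tauto)
  have hbk : b ^ 2 = algebraMap k K ((p * q : ℕ) : k) := by rw [H.hb, map_natCast]
  have hcq : c ^ 2 = algebraMap Mq K ((s * p : ℕ) : Mq) := by rw [H.hc, map_natCast, mul_comm]
  have hbs : b ^ 2 = algebraMap Ms K ((q * p : ℕ) : Ms) := by rw [H.hb, map_natCast, mul_comm]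
  obtain ⟨σ1, hσ1⟩ := exists_sigma hk2 b _ hbk dk
  obtain ⟨σ2, hσ2⟩ := exists_sigma hMq2 c _ hcq dMq
  have s1a : σ1 a = a := σ1.commutes ⟨a, hak⟩
  have s1e : σ1 e = e := σ1.commutes ⟨e, hek⟩
  have s2a : σ2 a = a := σ2.commutes ⟨a, haMq⟩
  have s2b : σ2 b = b := σ2.commutes ⟨b, hbMq⟩
  have s1c : σ1 c = -c := by
    have := congrArg σ1 hbc
    rw [map_mul, map_mul, hσ1, s1e, map_natCast, ← hbc] at this
    apply mul_left_cancel₀ hb0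
    linear_combination -this
  let σ3 : K ≃+* K := (σ1 : K ≃+* K).trans (σ2 : K ≃+* K)
  have s3 : ∀ x, σ3 x = σ2 (σ1 x) := fun x => rfl
  have hf3 : ∀ u : Ms, σ3 (algebraMap Ms K u) = algebraMap Ms K u := by
    refine fix_adjoin _ σ3 ?_
    intro x hx
    simp only [Set.mem_insert_iff, Set.mem_singleton_iff] at hx
    rcases hx with rfl | rfl
    · rw [s3, s1a, s2a]
    · rw [s3, s1c, map_neg, hσ2, neg_neg]
  have s3b : σ3 b = -b := by rw [s3, hσ1, map_neg, s2b]
  obtain ⟨aI, D, haI, haI2, hD, hN⟩ := H.exists_DK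
  obtain ⟨A, rfl⟩ := ClassGroup.mk0_surjective x
  have hsig : ∀ (σ : K ≃+* K) (B : Ideal (𝓞 K)), B ≠ 0 → sig σ B ≠ 0 := by
    intro σ B hB h
    have := absNorm_sig σ B
    rw [h, map_zero, eq_comm, Ideal.absNorm_eq_zero_iff] at this
    exact hB this
  have hA0 : (A : Ideal (𝓞 K)) ≠ 0 := nonZeroDivisors.coe_ne_zero A
  have mk : ∀ B : Ideal (𝓞 K), B ≠ 0 → ∃ B' : (Ideal (𝓞 K))⁰, (B' : Ideal (𝓞 K)) = B :=
    fun B hB => ⟨⟨B, mem_nonZeroDivisors_of_ne_zero hB⟩, rfl⟩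
  obtain ⟨A1, hA1⟩ := mk (sig (σ2 : K ≃+* K) (A * sig (σ1 : K ≃+* K) A)) (hsig _ _ (mul_ne_zero hA0 (hsig _ _ hA0)))
  obtain ⟨A2, hA2⟩ := mk (A * sig (σ2 : K ≃+* K) A) (mul_ne_zero hA0 (hsig _ _ hA0))
  obtain ⟨A3, hA3⟩ := mk (A * sig σ3 A) (mul_ne_zero hA0 (hsig _ _ hA0))
  have hrel : A ^ 2 * A1 = A2 * A3 := by
    apply Subtype.ext
    change (A : Ideal (𝓞 K)) ^ 2 * (A1 : Ideal (𝓞 K)) = A2 * A3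
    rw [hA1, hA2, hA3, sig_mul, sig_sig]
    ring
  obtain ⟨m1, o1, e1⟩ := rel_step_odd hk2 (cl_k rk ⟨a, hak⟩ ⟨e, hek⟩ (Subtype.ext (by exact H.ha)) q s H.hq H.hs H.hqs H.hq8
    H.hs4 (Subtype.ext (by exact he))) b _ hbk dk (σ1 : K ≃+* K) (fun u => σ1.commutes u) hσ1 (σ2 : K ≃+* K) A A1 hA1
  obtain ⟨m2, o2, e2, f2⟩ := rel_step hMq2 rMq p q H.hp H.hq H.hpq H.hp8 (by have := H.hq8; omega) H.rq ⟨a, haMq⟩ ⟨b, hbMq⟩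
    (Subtype.ext (by exact H.ha)) (Subtype.ext (by exact H.hb)) c _ hcq dMq (σ2 : K ≃+* K) (fun u => σ2.commutes u) hσ2
    aI haI D hD A A2 hA2
  obtain ⟨m3, o3, e3, f3⟩ := rel_step hMs2 rMs p s H.hp H.hs H.hps H.hp8 H.hs4 H.rs ⟨a, haMs⟩ ⟨c, hcMs⟩
    (Subtype.ext (by exact H.ha)) (Subtype.ext (by exact H.hc)) b _ hbs dMs σ3 hf3 s3b
    aI haI D hD A A3 hA3
  have hd2 : ClassGroup.mk0 D ^ 2 = 1 := mk0_sq_of_span D aI hD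
  have hdodd : ∀ m, Odd m → ClassGroup.mk0 D ^ m = ClassGroup.mk0 D := by
    rintro m ⟨j, rfl⟩
    rw [pow_add, pow_mul, hd2, one_pow, one_mul, pow_one]
  have hcl := congrArg (fun B => ClassGroup.mk0 B ^ (m1 * m2 * m3)) hrel
  simp only [map_mul, map_pow, mul_pow] at hcl
  rw [show ClassGroup.mk0 A1 ^ (m1 * m2 * m3) = 1 by
    rw [mul_assoc, pow_mul, e1, one_pow], mul_one] at hcl
  refine ⟨m1 * m2 * m3, (o1.mul o2).mul o3, ?_⟩
  rw [← pow_mul, mul_comm, pow_mul, hcl]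
  by_cases hnu : nuP K p A = 1
  · rw [show ClassGroup.mk0 A2 ^ (m1 * m2 * m3) = 1 by
      rw [show m1 * m2 * m3 = m2 * (m1 * m3) by ring, pow_mul, e2 hnu, one_pow],
      show ClassGroup.mk0 A3 ^ (m1 * m2 * m3) = 1 by
      rw [show m1 * m2 * m3 = m3 * (m1 * m2) by ring, pow_mul, e3 hnu, one_pow], one_mul]
  · rw [show ClassGroup.mk0 A2 ^ (m1 * m2 * m3) = ClassGroup.mk0 D by
      rw [show m1 * m2 * m3 = m2 * (m1 * m3) by ring, pow_mul, f2 hnu, hdodd _ (o1.mul o3)],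
      show ClassGroup.mk0 A3 ^ (m1 * m2 * m3) = ClassGroup.mk0 D by
      rw [show m1 * m2 * m3 = m3 * (m1 * m2) by ring, pow_mul, f3 hnu, hdodd _ (o1.mul o2)], ← sq, hd2]

end Setup
end expo

end part13

section part14
open IsDedekindDomain

section elem

lemma cop_step (r : ℕ) (hr : r.Prime) (m n z : ℤ) (hc : IsCoprime m n) (h : m * n = r * z) :
    (∃ m', m = r * m' ∧ IsCoprime m' n ∧ m' * n = z) ∨ (∃ n', n = r * n' ∧ IsCoprime m n' ∧ m * n' = z) := by
  have hr0 : (r : ℤ) ≠ 0 := by exact_mod_cast hr.ne_zero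
  have hp : Prime (r : ℤ) := Nat.prime_iff_prime_int.1 hr
  rcases hp.dvd_or_dvd (Dvd.intro _ h.symm) with ⟨m', rfl⟩ | ⟨n', rfl⟩
  · left
    exact ⟨m', rfl, hc.of_mul_left_right, mul_left_cancel₀ hr0 (by rw [← h]; ring)⟩
  · right
    exact ⟨n', rfl, hc.of_mul_right_right, mul_left_cancel₀ hr0 (by rw [← h]; ring)⟩

lemma cop_sq {F : Type*} [Field F] (q s : ℕ) (hq : q.Prime) (hs : s.Prime) (h1 : IsSquare (-1 : F)) (hqF : IsSquare (q : F))
    (hsF : IsSquare (s : F)) (m n w : ℤ) (hc : IsCoprime m n) (h : m * n = q * (s * w ^ 2)) : IsSquare (m : F) := by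
  have key : ∀ m n : ℤ, IsCoprime m n → m * n = w ^ 2 → IsSquare (m : F) := by
    intro m n hc h
    obtain ⟨u, hu | hu⟩ := Int.sq_of_isCoprime hc h
    · rw [hu]; push_cast; exact IsSquare.sq _
    · rw [hu]; push_cast
      rw [← neg_one_mul]; exact h1.mul (IsSquare.sq _)
  have key2 : ∀ m n : ℤ, IsCoprime m n → m * n = s * w ^ 2 → IsSquare (m : F) := by
    intro m n hc h
    rcases cop_step s hs m n _ hc h with ⟨m', rfl, hc', h'⟩ | ⟨n', rfl, hc', h'⟩
    · push_cast; exact hsF.mul (key _ _ hc' h')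
    · exact key _ _ hc' h'
  rcases cop_step q hq m n _ hc h with ⟨m', rfl, hc', h'⟩ | ⟨n', rfl, hc', h'⟩
  · push_cast; exact hqF.mul (key2 _ _ hc' h')
  · exact key2 _ _ hc' h'

lemma pell_sq {F : Type*} [Field F] (q s : ℕ) (hq : q.Prime) (hs : s.Prime) (hq4 : q % 4 = 3) (hs4 : s % 4 = 3)
    (h1 : IsSquare (-1 : F)) (hqF : IsSquare (q : F))
    (hsF : IsSquare (s : F)) (t w : ℤ) (h : t ^ 2 - 4 = q * s * w ^ 2) : IsSquare ((t + 2 : ℤ) : F) := by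
  obtain ⟨x, hx⟩ : ∃ x : ℤ, (q : ℤ) * s = 4 * x + 1 := by
    refine ⟨(q * s) / 4, ?_⟩
    have : (q * s) % 4 = 1 := by rw [Nat.mul_mod, hq4, hs4]
    have := Nat.div_add_mod (q * s) 4
    push_cast
    zify at this
    omega
  rcases Int.even_or_odd' t with ⟨j, rfl | rfl⟩
  · -- even
    have hw : 2 ∣ w := by
      rcases Int.even_or_odd' w with ⟨v, rfl | rfl⟩
      · exact ⟨v, rfl⟩
      · exfalso
        rw [hx] at h
        ring_nf at h
        omega
    obtain ⟨v, rfl⟩ := hw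
    have h' : j ^ 2 - 1 = q * s * v ^ 2 := by linarith [show (4 : ℤ) * (j ^ 2 - 1) = 4 * (q * s * v ^ 2) by linear_combination h]
    rcases Int.even_or_odd' j with ⟨i, rfl | rfl⟩
    · exfalso
      rw [hx] at h'
      rcases Int.even_or_odd' v with ⟨u, rfl | rfl⟩ <;> ring_nf at h' <;> omega
    · have hv : 2 ∣ v := by
        rcases Int.even_or_odd' v with ⟨u, rfl | rfl⟩
        · exact ⟨u, rfl⟩
        · exfalso
          rw [hx] at h'
          ring_nf at h'
          omega
      obtain ⟨u, rfl⟩ := hv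
      have h'' : (i + 1) * i = q * (s * u ^ 2) := by
        linarith [show (4 : ℤ) * ((i + 1) * i) = 4 * (q * (s * u ^ 2)) by linear_combination h']
      have := cop_sq q s hq hs h1 hqF hsF (i + 1) i u ⟨1, -1, by ring⟩ h''
      have e : ((2 * (2 * i + 1) + 2 : ℤ) : F) = 2 ^ 2 * ((i + 1 : ℤ) : F) := by push_cast; ring
      rw [e]
      exact (IsSquare.sq _).mul this
  · refine cop_sq q s hq hs h1 hqF hsF _ (2 * j + 1 - 2) w ?_ (by linear_combination h)
    -- coprime: the two factors
    refine IsCoprime.symm ?_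
    have h4 : IsCoprime (2 * j + 1 - 2) 4 := by
      have : IsCoprime (2 * j + 1 - 2) 2 := ⟨-1, j, by ring⟩
      have := this.mul_right this
      norm_num at this
      exact this
    obtain ⟨u, v, huv⟩ := h4
    exact ⟨u - v, v, by linear_combination huv⟩

lemma rat_int_of_sq (r s : ℕ) (hr : r.Prime) (hs : s.Prime) (hrs : r ≠ s) (w : ℚ) (n : ℤ) (h : (r * s : ℚ) * w ^ 2 = n) :
    ∃ v : ℤ, w = v := by
  have hw0 : (w.den : ℚ) ≠ 0 := by exact_mod_cast w.den_nz
  have h1 : ((r * s : ℕ) : ℤ) * w.num ^ 2 = n * (w.den : ℤ) ^ 2 := by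
    have : (w.num : ℚ) = w * w.den := (Rat.mul_den_eq_num w).symm
    have h3 : (((r * s : ℕ) : ℤ) : ℚ) * (w.num : ℚ) ^ 2 = n * ((w.den : ℤ) : ℚ) ^ 2 := by
      rw [this, ← h]; push_cast; ring
    exact_mod_cast h3
  have h2 : ((w.den : ℤ)) ^ 2 ∣ ((r * s : ℕ) : ℤ) := by
    have hc : IsCoprime ((w.den : ℤ) ^ 2) (w.num ^ 2) := by
      apply IsCoprime.pow
      rw [Int.isCoprime_iff_gcd_eq_one, Int.gcd_comm]
      exact w.reduced
    exact hc.dvd_of_dvd_mul_right (Dvd.intro_left _ h1.symm)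
  have h3 : w.den ^ 2 ∣ r * s := by exact_mod_cast h2
  have hsf : Squarefree (r * s) := by
    rw [Nat.squarefree_mul ((Nat.coprime_primes hr hs).2 hrs)]
    exact ⟨hr.prime.squarefree, hs.prime.squarefree⟩
  have h5 := hsf w.den (by rw [← sq]; exact h3)
  have h6 : w.den = 1 := Nat.isUnit_iff.1 h5
  exact ⟨w.num, ((Rat.den_eq_one_iff w).1 h6).symm⟩

end elem

end part14

section part15
open IsDedekindDomain

section unitsq

lemma int_of_integral (x : ℚ) (h : IsIntegral ℤ x) : ∃ n : ℤ, x = n := by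
  obtain ⟨n, hn⟩ := IsIntegrallyClosed.isIntegral_iff.1 h
  exact ⟨n, by rw [← hn]; simp⟩

lemma unit_sq {E F : Type*} [Field E] [NumberField E] [Field F] (f : E →+* F) (h2 : Module.finrank ℚ E = 2)
    (q s : ℕ) (hq : q.Prime) (hs : s.Prime) (hqs : q ≠ s) (hq4 : q % 4 = 3) (hs4 : s % 4 = 3)
    (h1 : IsSquare (-1 : F)) (hqF : IsSquare (q : F)) (hsF : IsSquare (s : F))
    (e : E) (he : e ^ 2 = (q * s : ℕ)) (η : E) (hη0 : η ≠ 0) (hi : IsIntegral ℤ η) (hi' : IsIntegral ℤ η⁻¹) :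
    IsSquare (f η) := by
  have : Fact q.Prime := ⟨hq⟩
  have hqsQ := nonsq_nat q s hq (prime_ndvd hq hs hqs)
  have he' : e ^ 2 = algebraMap ℚ E ((q * s : ℕ) : ℚ) := by rw [he, map_natCast]
  obtain ⟨x, y, hxy⟩ := quad_rep h2 e _ he' hqsQ η
  have hn : Algebra.norm ℚ η = x ^ 2 - (q * s : ℕ) * y ^ 2 := by rw [hxy, quad_norm h2 e _ he' hqsQ]
  obtain ⟨n, hn1⟩ := int_of_integral _ (Algebra.isIntegral_norm ℚ hi)
  obtain ⟨n', hn2⟩ := int_of_integral _ (Algebra.isIntegral_norm ℚ hi')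
  have hnn : n * n' = 1 := by
    have : (n : ℚ) * n' = 1 := by rw [← hn1, ← hn2, ← map_mul, mul_inv_cancel₀ hη0, map_one]
    exact_mod_cast this
  have hn3 : n = 1 := by
    rcases Int.eq_one_or_neg_one_of_mul_eq_one hnn with h | h
    · exact h
    · exfalso
      rw [hn1, h] at hn
      refine padic_neg_one_no q hq4 s (prime_ndvd hq hs hqs) (x : ℚ_[q]) (y : ℚ_[q]) ?_
      have := congrArg (Rat.cast : ℚ → ℚ_[q]) hn
      push_cast at this
      exact this.symm
  rw [hn1, hn3] at hn
  obtain ⟨σ, hσ⟩ := exists_sigma h2 e _ he' hqsQ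
  have hση : η + σ η = algebraMap ℚ E (2 * x) := by
    rw [hxy, map_add, map_mul, σ.commutes, σ.commutes, hσ, map_mul, map_ofNat]; ring
  have hti : IsIntegral ℤ (2 * x) := by
    have h3 : IsIntegral ℤ (algebraMap ℚ E (2 * x)) := by
      rw [← hση]
      exact hi.add (hi.map (σ : E →ₐ[ℚ] E))
    exact (isIntegral_algebraMap_iff (algebraMap ℚ E).injective).1 h3
  obtain ⟨t, ht⟩ := int_of_integral _ hti
  obtain ⟨w, hw⟩ := rat_int_of_sq q s hq hs hqs (2 * y) (t ^ 2 - 4) (by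
    push_cast at hn ⊢
    rw [← ht]; linear_combination 4 * hn)
  have hpell : t ^ 2 - 4 = q * s * w ^ 2 := by
    have : (t : ℚ) ^ 2 - 4 = q * s * (w : ℚ) ^ 2 := by
      rw [← ht, ← hw]; push_cast at hn; linear_combination -4 * hn
    exact_mod_cast this
  obtain ⟨v, hv⟩ := pell_sq (F := F) q s hq hs hq4 hs4 h1 hqF hsF t w hpell
  have hq1 : (1 + η) ^ 2 = ((t + 2 : ℤ) : E) * η := by
    have h3 : η ^ 2 = (t : E) * η - 1 := by
      have h4 : (t : E) = 2 * algebraMap ℚ E x := by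
        have := congrArg (algebraMap ℚ E) ht
        rw [map_mul, map_ofNat, map_intCast] at this
        exact this.symm
      have h5 : (1 : E) = (algebraMap ℚ E x) ^ 2 - (q * s : ℕ) * (algebraMap ℚ E y) ^ 2 := by
        have := congrArg (algebraMap ℚ E) hn
        simpa using this
      rw [h4, h5, hxy]
      linear_combination (algebraMap ℚ E y) ^ 2 * he
    push_cast; linear_combination h3
  by_cases h0 : (1 + η) = 0
  · have : η = -1 := by linear_combination h0
    rw [this, map_neg, map_one]; exact h1
  · have h3 := congrArg f hq1
    rw [map_pow, map_mul, map_intCast, hv] at h3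
    have h4 : f (1 + η) ≠ 0 := by rwa [Ne, map_eq_zero]
    have hv0 : v ≠ 0 := by
      rintro rfl
      rw [mul_zero, zero_mul] at h3
      exact h4 (pow_eq_zero_iff two_ne_zero |>.1 h3)
    refine ⟨f (1 + η) / v, ?_⟩
    field_simp
    rw [h3]; ring

end unitsq

section nonprin
open nonZeroDivisors
variable {K : Type*} [Field K] [NumberField K] {p q s : ℕ} {a b c : K}
namespace Setup

lemma D_ne_one (H : Setup K p q s a b c) (aI : 𝓞 K) (haI2 : aI ^ 2 = 2) (D : (Ideal (𝓞 K))⁰)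
    (hD : (D : Ideal (𝓞 K)) ^ 2 = Ideal.span {aI}) : ClassGroup.mk0 D ≠ 1 := by
  intro hcl
  have : Fact p.Prime := ⟨H.hp⟩
  obtain ⟨h1, h2, h3⟩ := H.two_ne
  obtain ⟨g1, g2, g3, g4, g5, g6⟩ := H.ndvd
  obtain ⟨e, he, hbc⟩ := H.exists_e
  have hp8 := H.hp8
  have hq8 := H.hq8
  rw [ClassGroup.mk0_eq_one_iff] at hcl
  obtain ⟨⟨α, hα⟩⟩ := hcl
  replace hα : (D : Ideal (𝓞 K)) = Ideal.span {α} := hα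
  rw [hα, Ideal.span_singleton_pow, Ideal.span_singleton_eq_span_singleton] at hD
  obtain ⟨u, hu⟩ := hD
  -- the field ℚ(√qs)
  have hqsQ := nonsq_nat q s H.hq g4
  let E : IntermediateField ℚ K := IntermediateField.adjoin ℚ {e}
  have hE2 : Module.finrank ℚ E = 2 := finrank_adjoin_sq e ((q * s : ℕ) : ℚ) (by rw [he, map_natCast]) hqsQ
  have hK4 : Module.finrank E K = 4 := by
    have := Module.finrank_mul_finrank ℚ E K
    rw [hE2, H.rank8] at this
    omega
  let e' : E := ⟨e, IntermediateField.mem_adjoin_simple_self ℚ e⟩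
  have he' : e' ^ 2 = ((q * s : ℕ) : E) := Subtype.ext (by exact he)
  have hpqE : ¬ IsSquare ((p * q : ℕ) : E) := quad_nonsq hE2 e' (q * s) he' hqsQ (p * q)
    (nonsq_nat p q H.hp g1) (nonsq_of p (q * s * q) H.hp (by
      rw [H.hp.dvd_mul, H.hp.dvd_mul]; tauto) _ (by ring))
  obtain ⟨X, Y, hXY⟩ := norm_form b ((p * q : ℕ) : E) (by rw [H.hb, map_natCast]) hpqE (algebraMap (𝓞 K) K α)
  -- squares
  have sm1 : IsSquare (-1 : ℚ_[p]) := by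
    have := padic_sq_of_res p (by omega) (-1) (by
      intro h
      rw [dvd_neg] at h
      exact H.hp.one_lt.ne' (Nat.dvd_one.1 (by exact_mod_cast h))) (by
        rw [show ((-1 : ℤ) : ZMod p) = -1 by simp]
        rw [ZMod.exists_sq_eq_neg_one_iff]; omega)
    exact_mod_cast this
  have sq' : IsSquare (q : ℚ_[p]) := by
    have := padic_sq_of_res p (by omega) q (by exact_mod_cast g1) (by exact_mod_cast H.rq)
    exact_mod_cast this
  have ss : IsSquare (s : ℚ_[p]) := by
    have := padic_sq_of_res p (by omega) s (by exact_mod_cast g2) (by exact_mod_cast H.rs)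
    exact_mod_cast this
  obtain ⟨f⟩ := quad_emb (F := ℚ_[p]) hE2 e' ((q * s : ℕ) : ℚ) (by rw [he', map_natCast]) hqsQ (by
    push_cast; exact sq'.mul ss)
  -- the unit
  set ν := Algebra.norm E (algebraMap (𝓞 K) K α) with hν
  have hα4 : α ^ 4 * (u : 𝓞 K) ^ 2 = 2 := by
    rw [← haI2, ← hu]; ring
  have hν4 : ν ^ 4 * (Algebra.norm E (algebraMap (𝓞 K) K (u : 𝓞 K))) ^ 2 = 16 := by
    have := congrArg (fun z => Algebra.norm E (algebraMap (𝓞 K) K z)) hα4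
    simp only [map_mul, map_pow] at this
    rw [hν, this, map_ofNat, show (2 : K) = algebraMap E K 2 by rw [map_ofNat], Algebra.norm_algebraMap, hK4]
    norm_num
  have huu : Algebra.norm E (algebraMap (𝓞 K) K (u : 𝓞 K)) * Algebra.norm E (algebraMap (𝓞 K) K ((u⁻¹ : (𝓞 K)ˣ) : 𝓞 K)) = 1 := by
    rw [← map_mul, ← map_mul, Units.mul_inv, map_one, map_one]
  have iu : IsIntegral ℤ (Algebra.norm E (algebraMap (𝓞 K) K (u : 𝓞 K))) :=
    Algebra.isIntegral_norm E (RingOfIntegers.isIntegral_coe _)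
  have iu' : IsIntegral ℤ (Algebra.norm E (algebraMap (𝓞 K) K ((u⁻¹ : (𝓞 K)ˣ) : 𝓞 K))) :=
    Algebra.isIntegral_norm E (RingOfIntegers.isIntegral_coe _)
  generalize Algebra.norm E (algebraMap (𝓞 K) K (u : 𝓞 K)) = U at *
  generalize Algebra.norm E (algebraMap (𝓞 K) K ((u⁻¹ : (𝓞 K)ˣ) : 𝓞 K)) = U' at *
  have hν0 : ν ≠ 0 := by
    rintro h
    rw [h] at hν4
    norm_num at hν4
  have hη := unit_sq (f : E →+* ℚ_[p]) hE2 q s H.hq H.hs H.hqs (by omega) H.hs4 sm1 sq' ss e' he' (ν / 2)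
    (div_ne_zero hν0 two_ne_zero)
    (by
      apply IsIntegral.of_pow (n := 4) (by norm_num)
      have : (ν / 2) ^ 4 = U' ^ 2 := by
        rw [div_pow]
        linear_combination (U' ^ 2 / 16) * hν4 - ν ^ 4 / 16 * (U * U' + 1) * huu
      rw [this]; exact iu'.pow 2)
    (by
      apply IsIntegral.of_pow (n := 4) (by norm_num)
      have : (ν / 2)⁻¹ ^ 4 = U ^ 2 := by
        field_simp
        linear_combination -hν4
      rw [this]; exact iu.pow 2)
  obtain ⟨z, hz⟩ := hη
  replace hz : f (ν / 2) = z * z := hz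
  have hfν : f ν = 2 * (z * z) := by
    rw [← hz, map_div₀, map_ofNat]; field_simp
  have hfν0 : f ν ≠ 0 := by rwa [Ne, map_eq_zero]
  have hz0 : z ≠ 0 := by
    rintro rfl
    apply hfν0; rw [hfν]; simp
  have hmem := NmP_of_norm p (by omega) q sq' (f X) (f Y) (Units.mk0 (f ν) hfν0) (by
    have := congrArg f hXY
    simp only [map_sub, map_mul, map_pow, map_natCast] at this
    rw [Units.val_mk0, this]
    push_cast; ring)
  have h20 : (2 : ℚ_[p]) ≠ 0 := two_ne_zero
  have hmem2 : Units.mk0 (2 : ℚ_[p]) h20 ∈ NmP p := by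
    have hz2 : (Units.mk0 z hz0) ^ 2 ∈ NmP p := ⟨0, z, by simp⟩
    have e1 : Units.mk0 (f ν) hfν0 = Units.mk0 (2 : ℚ_[p]) h20 * (Units.mk0 z hz0) ^ 2 := by
      ext; simp [hfν, sq]
    rw [e1] at hmem
    exact (Subgroup.mul_mem_cancel_right _ hz2).1 hmem
  have := res_of_NmP p 2 (by exact_mod_cast h1) _ (by simp) hmem2
  exact two_nonres p H.hp (Or.inr hp8) (by exact_mod_cast this)

end Setup
end nonprin

end part15

section part16
open IsDedekindDomain

section dirich

lemma exists_nonres (p : ℕ) (hp : p.Prime) (hp2 : p ≠ 2) : ∃ u : ℕ, u.Coprime p ∧ ¬ IsSquare (u : ZMod p) := by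
  have : Fact p.Prime := ⟨hp⟩
  obtain ⟨x, hx⟩ := FiniteField.exists_nonsquare (F := ZMod p) (by rw [ZMod.ringChar_zmod_n]; exact hp2)
  have hx' : ¬ IsSquare ((x.val : ℕ) : ZMod p) := by rwa [ZMod.natCast_zmod_val]
  refine ⟨x.val, ?_, hx'⟩
  rw [Nat.coprime_comm, hp.coprime_iff_not_dvd]
  intro h
  apply hx'
  rw [(ZMod.natCast_eq_zero_iff _ _).2 h]
  exact ⟨0, by simp⟩

lemma exists_crt (m n u v : ℕ) (h : m.Coprime n) (hu : u.Coprime m) (hv : v.Coprime n) :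
    ∃ w : ℕ, w.Coprime (m * n) ∧ w ≡ u [MOD m] ∧ w ≡ v [MOD n] := by
  obtain ⟨w, h1, h2⟩ := Nat.chineseRemainder h u v
  refine ⟨w, Nat.Coprime.mul_right ?_ ?_, h1, h2⟩
  · rw [Nat.Coprime, h1.gcd_eq]; exact hu
  · rw [Nat.Coprime, h2.gcd_eq]; exact hv

lemma exists_ell (p q s : ℕ) (hp : p.Prime) (hq : q.Prime) (hs : s.Prime) (hpq : p ≠ q) (hps : p ≠ s) (hqs : q ≠ s)
    (hp2 : p ≠ 2) (hq2 : q ≠ 2) (hs2 : s ≠ 2) :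
    ∃ l : ℕ, l.Prime ∧ p < l ∧ q < l ∧ s < l ∧ l % 8 = 1 ∧ ¬ IsSquare (l : ZMod p) ∧ ¬ IsSquare (l : ZMod q) ∧
      ¬ IsSquare (l : ZMod s) := by
  obtain ⟨u, hu, hu'⟩ := exists_nonres p hp hp2
  obtain ⟨v, hv, hv'⟩ := exists_nonres q hq hq2
  obtain ⟨w, hw, hw'⟩ := exists_nonres s hs hs2
  have c2 : ∀ r : ℕ, r.Prime → r ≠ 2 → Nat.Coprime 8 r := fun r hr h =>
    Nat.Coprime.pow_left 3 ((Nat.coprime_primes Nat.prime_two hr).2 h.symm)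
  obtain ⟨x, hx, hx1, hx2⟩ := exists_crt 8 p 1 u (c2 p hp hp2) (by norm_num) hu
  obtain ⟨y, hy, hy1, hy2⟩ := exists_crt (8 * p) q x v
    (Nat.Coprime.mul_left (c2 q hq hq2) ((Nat.coprime_primes hp hq).2 hpq)) hx hv
  obtain ⟨z, hz, hz1, hz2⟩ := exists_crt (8 * p * q) s y w
    (Nat.Coprime.mul_left (Nat.Coprime.mul_left (c2 s hs hs2) ((Nat.coprime_primes hp hs).2 hps))
      ((Nat.coprime_primes hq hs).2 hqs)) hy hw
  obtain ⟨l, hl, hlp, hlz⟩ := Nat.forall_exists_prime_gt_and_modEq (p + q + s) (q := 8 * p * q * s) (a := z)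
    (by have := hp.pos; have := hq.pos; have := hs.pos; positivity) hz
  have ls : l ≡ w [MOD s] := (hlz.of_mul_left _).trans hz2
  have l3 : l ≡ y [MOD 8 * p * q] := (hlz.of_mul_right _).trans hz1
  have lq : l ≡ v [MOD q] := (l3.of_mul_left _).trans hy2
  have l2 : l ≡ x [MOD 8 * p] := (l3.of_mul_right _).trans hy1
  have lp : l ≡ u [MOD p] := (l2.of_mul_left _).trans hx2
  have l8 : l ≡ 1 [MOD 8] := (l2.of_mul_right _).trans hx1
  refine ⟨l, hlp, by omega, by omega, by omega, l8, ?_, ?_, ?_⟩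
  · rwa [(ZMod.natCast_eq_natCast_iff _ _ _).2 lp]
  · rwa [(ZMod.natCast_eq_natCast_iff _ _ _).2 lq]
  · rwa [(ZMod.natCast_eq_natCast_iff _ _ _).2 ls]

lemma nonsq_mul_nonsq (l : ℕ) [Fact l.Prime] (x y : ZMod l) (hx : ¬ IsSquare x) (hy : ¬ IsSquare y) :
    IsSquare (x * y) := by
  rw [← quadraticChar_neg_one_iff_not_isSquare] at hx hy
  by_contra h
  rw [← quadraticChar_neg_one_iff_not_isSquare, map_mul, hx, hy] at h
  norm_num at h

end dirich

section cls
open nonZeroDivisors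
variable {K : Type*} [Field K] [NumberField K] {p q s : ℕ} {a b c : K}

lemma exists_ideal_norm (l : ℕ) [Fact l.Prime] (f : K →ₐ[ℚ] ℚ_[l]) :
    ∃ I : (Ideal (𝓞 K))⁰, Ideal.absNorm (I : Ideal (𝓞 K)) = l := by
  have hl : l.Prime := Fact.out
  have hInt : ∀ x : 𝓞 K, ∃ y : ℤ_[l], algebraMap ℤ_[l] ℚ_[l] y = f (x : K) := by
    intro x
    have h1 : IsIntegral ℤ (f (x : K)) := (RingOfIntegers.isIntegral_coe x).map (f.restrictScalars ℤ)
    exact IsIntegrallyClosed.isIntegral_iff.1 (h1.tower_top (A := ℤ_[l]))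
  choose g hg using hInt
  have inj : Function.Injective (algebraMap ℤ_[l] ℚ_[l]) := FaithfulSMul.algebraMap_injective _ _
  let G : 𝓞 K →+* ℤ_[l] :=
    { toFun := g
      map_one' := inj (by rw [hg]; simp)
      map_zero' := inj (by rw [hg]; simp)
      map_mul' := fun x y => inj (by rw [map_mul, hg, hg, hg]; simp)
      map_add' := fun x y => inj (by rw [map_add, hg, hg, hg]; simp) }
  let φ : 𝓞 K →+* ZMod l := (PadicInt.toZMod).comp G
  have hsur : Function.Surjective φ := ZMod.ringHom_surjective φ
  have hc : Ideal.absNorm (RingHom.ker φ) = l := by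
    rw [Ideal.absNorm_apply, Submodule.cardQuot_apply,
      Nat.card_congr (RingHom.quotientKerEquivOfSurjective hsur).toEquiv, Nat.card_zmod]
  refine ⟨⟨RingHom.ker φ, ?_⟩, hc⟩
  rw [← Ideal.absNorm_ne_zero_iff_mem_nonZeroDivisors, hc]
  exact hl.ne_zero

lemma Setup.exists_I (H : Setup K p q s a b c) :
    ∃ l : ℕ, ¬ p ∣ l ∧ ¬ IsSquare (l : ZMod p) ∧ ∃ I : (Ideal (𝓞 K))⁰, Ideal.absNorm (I : Ideal (𝓞 K)) = l := by
  have hp8 := H.hp8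
  have hq8 := H.hq8
  have hs4 := H.hs4
  obtain ⟨l, hl, lp, lq, ls, l8, np, nq, ns⟩ := exists_ell p q s H.hp H.hq H.hs H.hpq H.hps H.hqs (by omega) (by omega) (by omega)
  have : Fact l.Prime := ⟨hl⟩
  have : Fact p.Prime := ⟨H.hp⟩
  have : Fact q.Prime := ⟨H.hq⟩
  have : Fact s.Prime := ⟨H.hs⟩
  have cop : ∀ r : ℕ, r.Prime → r < l → ¬ l ∣ r := fun r hr h h' => by
    have := Nat.le_of_dvd hr.pos h'; omega
  have np' : ¬ IsSquare (p : ZMod l) := fun h => np ((ZMod.exists_sq_eq_prime_iff_of_mod_four_eq_one (p := l) (q := p) (by omega) (by omega)).1 h)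
  have nq' : ¬ IsSquare (q : ZMod l) := fun h => nq ((ZMod.exists_sq_eq_prime_iff_of_mod_four_eq_one (p := l) (q := q) (by omega) (by omega)).1 h)
  have ns' : ¬ IsSquare (s : ZMod l) := fun h => ns ((ZMod.exists_sq_eq_prime_iff_of_mod_four_eq_one (p := l) (q := s) (by omega) (by omega)).1 h)
  have hsq : ∀ d : ℕ, ¬ l ∣ d → IsSquare (d : ZMod l) → IsSquare (algebraMap ℚ ℚ_[l] (d : ℚ)) := by
    intro d hd h
    have := padic_sq_of_res l (by omega) (d : ℤ) (by exact_mod_cast hd) (by simpa using h)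
    simpa using this
  have hdv : ∀ r t : ℕ, r.Prime → t.Prime → r < l → t < l → ¬ l ∣ r * t := by
    intro r t hr ht h1 h2 h
    rcases hl.dvd_mul.1 h with h | h
    · exact cop r hr h1 h
    · exact cop t ht h2 h
  obtain ⟨f⟩ := algHom_of_sq (k := ℚ) (E := K) (F := ℚ_[l]) {a, b, c} H.htop (by
    intro x hx
    rcases hx with rfl | rfl | rfl
    · refine ⟨((2 : ℕ) : ℚ), by rw [H.ha]; simp, hsq 2 (cop 2 Nat.prime_two (by omega)) ?_⟩
      have := (ZMod.exists_sq_eq_two_iff (p := l) (by omega)).2 (Or.inl l8)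
      simpa using this
    · refine ⟨((p * q : ℕ) : ℚ), by rw [H.hb, map_natCast], hsq _ (hdv p q H.hp H.hq lp lq) ?_⟩
      rw [Nat.cast_mul]; exact nonsq_mul_nonsq l _ _ np' nq'
    · refine ⟨((p * s : ℕ) : ℚ), by rw [H.hc, map_natCast], hsq _ (hdv p s H.hp H.hs lp ls) ?_⟩
      rw [Nat.cast_mul]; exact nonsq_mul_nonsq l _ _ np' ns')
  obtain ⟨I, hI⟩ := exists_ideal_norm l f
  exact ⟨l, fun h => by have := (Nat.prime_dvd_prime_iff_eq H.hp hl).1 h; omega, np, I, hI⟩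

lemma Setup.card_eq (H : Setup K p q s a b c) :
    Nat.card (powMonoidHom 2 : ClassGroup (𝓞 K) →* ClassGroup (𝓞 K)).ker = 4 := by
  have hle : Nat.card (powMonoidHom 2 : ClassGroup (𝓞 K) →* ClassGroup (𝓞 K)).ker ≤ 4 := H.cl_le
  refine le_antisymm hle ?_
  have hp8 := H.hp8
  have : Fact p.Prime := ⟨H.hp⟩
  obtain ⟨aI, D, -, haI2, hD, hDn⟩ := H.exists_DK
  have hd1 := H.D_ne_one aI haI2 D hD
  have hd2 : ClassGroup.mk0 D ^ 2 = 1 := mk0_sq_of_span D aI hD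
  obtain ⟨l, hpl, hl, I, hI⟩ := H.exists_I
  have hK : NormHyp K p := normHyp_of_sqrt (by omega) q H.ndvd.1 H.rq b H.hb
  have hl0 : ((l : ℕ) : ℚ_[p]) ≠ 0 := by
    rw [Nat.cast_ne_zero]; rintro rfl; exact hpl (dvd_zero _)
  have hpI : psi hK (ClassGroup.mk0 I) ≠ 1 := by
    rw [psi_mk0, nuP_apply I (Units.mk0 _ hl0) (by rw [hI]; rfl), Ne, QuotientGroup.eq_one_iff]
    intro h
    apply hl
    have := res_of_NmP p (l : ℤ) (by exact_mod_cast hpl) _ (by simp) h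
    simpa using this
  have hpD : psi hK (ClassGroup.mk0 D) = 1 := by
    rw [psi_mk0, nuP_apply D (Units.mk0 (2 : ℚ_[p]) two_ne_zero ^ 2) (by rw [hDn]; push_cast; norm_num), QuotientGroup.mk_pow]
    exact quotNmP_sq _
  obtain ⟨m, hm, hm2⟩ := H.exponent (ClassGroup.mk0 I)
  have hpm : psi hK (ClassGroup.mk0 I ^ m) ≠ 1 := by
    obtain ⟨t, rfl⟩ := hm
    intro h
    apply hpI
    have h2 : psi hK ((ClassGroup.mk0 I ^ t) ^ 2) = 1 := by rw [map_pow]; exact quotNmP_sq _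
    have h3 : ClassGroup.mk0 I ^ (2 * t + 1) = (ClassGroup.mk0 I ^ t) ^ 2 * ClassGroup.mk0 I := by
      rw [pow_succ, mul_comm 2 t, pow_mul]
    rw [h3, map_mul, h2, ← map_one (psi hK), ← map_mul, one_mul, map_one] at h
    exact h
  refine four_le (⟨ClassGroup.mk0 D, hd2⟩ : (powMonoidHom 2 : ClassGroup (𝓞 K) →* ClassGroup (𝓞 K)).ker)
    ⟨ClassGroup.mk0 I ^ m, hm2⟩ ?_ ?_ ?_ ?_
  · intro h; exact hd1 (congrArg Subtype.val h)
  · intro h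
    have h' : ClassGroup.mk0 I ^ m = 1 := congrArg Subtype.val h
    rw [h', map_one] at hpm
    exact hpm rfl
  · intro h
    have h' : ClassGroup.mk0 D * ClassGroup.mk0 I ^ m = 1 := congrArg Subtype.val h
    have h'' : ClassGroup.mk0 I ^ m = ClassGroup.mk0 D := by
      have : ClassGroup.mk0 D * ClassGroup.mk0 I ^ m = ClassGroup.mk0 D * ClassGroup.mk0 D := by
        rw [h', ← sq, hd2]
      exact mul_left_cancel this
    rw [h''] at hpm
    exact hpm hpD
  · apply Subtype.ext
    change ClassGroup.mk0 D * ClassGroup.mk0 D = 1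
    rw [← sq, hd2]

end cls

lemma sylow_klein {G : Type*} [CommGroup G] [Finite G] (hc : Nat.card (powMonoidHom 2 : G →* G).ker = 4)
    (hex : ∀ x : G, ∃ m, Odd m ∧ (x ^ m) ^ 2 = 1) (P : Sylow 2 G) :
    Nonempty ((P : Subgroup G) ≃* (Multiplicative (ZMod 2) × Multiplicative (ZMod 2))) := by
  have hP : (P : Subgroup G) = (powMonoidHom 2 : G →* G).ker := by
    have hle : (P : Subgroup G) ≤ (powMonoidHom 2 : G →* G).ker := by
      intro x hx
      obtain ⟨m, hm, hm2⟩ := hex x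
      obtain ⟨k, hk⟩ := P.2 ⟨x, hx⟩
      have hk' : x ^ 2 ^ k = 1 := congrArg Subtype.val hk
      have h1 : orderOf (x ^ 2) ∣ m := orderOf_dvd_of_pow_eq_one (by rw [← pow_mul, mul_comm, pow_mul]; exact hm2)
      have h2 : orderOf (x ^ 2) ∣ 2 ^ k := orderOf_dvd_of_pow_eq_one (by rw [← pow_mul, mul_comm, pow_mul, hk', one_pow])
      have h3 : Nat.Coprime m (2 ^ k) := (Nat.coprime_two_right.2 hm).pow_right k
      have h4 : orderOf (x ^ 2) = 1 := Nat.dvd_one.1 (h3 ▸ Nat.dvd_gcd h1 h2)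
      exact orderOf_eq_one_iff.1 h4
    have hpg : IsPGroup 2 (powMonoidHom 2 : G →* G).ker := fun x => ⟨1, by
      apply Subtype.ext
      have := x.2
      rw [MonoidHom.mem_ker] at this
      simpa using this⟩
    exact (P.3 hpg hle).symm
  rw [hP]
  have k1 : IsKleinFour (powMonoidHom 2 : G →* G).ker := by
    refine ⟨hc, ?_⟩
    have : Nontrivial (powMonoidHom 2 : G →* G).ker := by
      rw [← Finite.one_lt_card_iff_nontrivial, hc]; norm_num
    have hd : Monoid.exponent (powMonoidHom 2 : G →* G).ker ∣ 2 := Monoid.exponent_dvd_of_forall_pow_eq_one (by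
      intro x
      apply Subtype.ext
      have := x.2
      rw [MonoidHom.mem_ker] at this
      simpa using this)
    rcases (Nat.dvd_prime Nat.prime_two).1 hd with h | h
    · rw [Monoid.exp_eq_one_iff] at h
      exact absurd h (not_subsingleton _)
    · exact h
  have k2 : IsKleinFour (Multiplicative (ZMod 2) × Multiplicative (ZMod 2)) := by
    refine ⟨by simp [Nat.card_eq_fintype_card], ?_⟩
    rw [Monoid.exponent_prod]
    simp
  exact IsKleinFour.nonempty_mulEquiv

end part16

lemma conj_eq_of_sq (z : ℂ) (n : ℕ) (h : z ^ 2 = n) : (starRingEnd ℂ) z = z := by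
  have h1 : ((Real.sqrt n : ℝ) : ℂ) ^ 2 = n := by
    rw [← Complex.ofReal_pow, Real.sq_sqrt (Nat.cast_nonneg n)]; simp
  rw [← h1] at h
  rcases sq_eq_sq_iff_eq_or_eq_neg.1 h with h | h <;> rw [h] <;> simp

lemma totReal_of_gens {K : Type*} [Field K] [NumberField K] (S : Set K) (hS : IntermediateField.adjoin ℚ S = ⊤)
    (h : ∀ x ∈ S, ∃ n : ℕ, x ^ 2 = n) : IsTotallyReal K := by
  refine ⟨fun v => ?_⟩
  rw [InfinitePlace.isReal_iff, ComplexEmbedding.isReal_iff]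
  ext x
  have hx : x ∈ IntermediateField.adjoin ℚ S := by rw [hS]; trivial
  rw [ComplexEmbedding.conjugate_coe_eq]
  induction hx using IntermediateField.adjoin_induction with
  | mem x hx =>
    obtain ⟨n, hn⟩ := h x hx
    exact conj_eq_of_sq _ n (by rw [← map_pow, hn, map_natCast])
  | algebraMap x => simp
  | add x y _ _ hx hy => rw [map_add, map_add, hx, hy]
  | mul x y _ _ hx hy => rw [map_mul, map_mul, hx, hy]
  | inv x _ hx => rw [map_inv₀, map_inv₀, hx]

lemma adjoin_top_of_sub {k E : Type*} [Field k] [Field E] [Algebra k E] (T : Set E) (F : IntermediateField k E)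
    (hF : F = IntermediateField.adjoin k T) : IntermediateField.adjoin k {x : F | (x : E) ∈ T} = ⊤ := by
  rw [eq_top_iff]
  rintro ⟨x, hx⟩ -
  have hx' := hx
  rw [hF] at hx'
  have hT : T ⊆ F := by rw [hF]; exact IntermediateField.subset_adjoin k T
  have : x ∈ (IntermediateField.adjoin k {x : F | (x : E) ∈ T}).map F.val := by
    revert hx'
    suffices IntermediateField.adjoin k T ≤ (IntermediateField.adjoin k {x : F | (x : E) ∈ T}).map F.val from fun h => this h
    rw [IntermediateField.adjoin_le_iff]
    intro t ht
    exact ⟨⟨t, hT ht⟩, IntermediateField.subset_adjoin k _ ht, rfl⟩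
  obtain ⟨y, hy, rfl⟩ := this
  exact hy

lemma adjoin_top_of_sub_rat (T : Set ℂ) (F : IntermediateField ℚ ℂ)
    (hF : F = IntermediateField.adjoin ℚ T) : IntermediateField.adjoin ℚ {x : F | (x : ℂ) ∈ T} = ⊤ := by
  have h := adjoin_top_of_sub T F hF
  have e : F.algebra' = (DivisionRing.toRatAlgebra : Algebra ℚ F) := Subsingleton.elim _ _
  rw [e] at h
  exact h

lemma sqrt_cast_sq (r : ℝ) (n : ℕ) (h : r = n) : ((Real.sqrt r : ℝ) : ℂ) ^ 2 = n := by
  subst h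
  rw [← Complex.ofReal_pow, Real.sq_sqrt (Nat.cast_nonneg n)]; simp

lemma fieldF1_numberField (p q s : ℕ) : NumberField (fieldF1 p q s) := by
  have : FiniteDimensional ℚ (fieldF1 p q s) := by
    unfold fieldF1
    apply IntermediateField.finiteDimensional_adjoin
    have key : ∀ (r : ℝ) (n : ℕ), r = n → IsIntegral ℚ ((Real.sqrt r : ℝ) : ℂ) := by
      intro r n h
      refine IsIntegral.of_pow (n := 2) (by norm_num) ?_
      rw [sqrt_cast_sq r n h]
      exact isIntegral_algebraMap (x := (n : ℚ)) |> fun h => by simpa using h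
    intro x hx
    rcases hx with rfl | rfl | rfl
    · exact key _ (p * q) (by simp)
    · exact key _ (p * s) (by simp)
    · exact key _ 2 (by simp)
  exact { }

theorem two_class_group_of_F1
    (p q s : ℕ) (hp : p.Prime) (hq : q.Prime) (hs : s.Prime)
    (hpq : p ≠ q) (hps : p ≠ s) (hqs : q ≠ s)
    (hp8 : p % 8 = 5) (hq8 : q % 8 = 3) (hs4 : s % 4 = 3)
    (hQRq : IsSquare (p : ZMod q)) (hQRs : IsSquare (p : ZMod s)) :
    ∀ P : Sylow 2 (ClassGroup (𝓞 (fieldF1 p q s))),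
      Nonempty ((P : Subgroup (ClassGroup (𝓞 (fieldF1 p q s)))) ≃*
        (Multiplicative (ZMod 2) × Multiplicative (ZMod 2))) := by
  have : NumberField (fieldF1 p q s) := fieldF1_numberField p q s
  have : Fact p.Prime := ⟨hp⟩
  have : Fact q.Prime := ⟨hq⟩
  have : Fact s.Prime := ⟨hs⟩
  have htop := adjoin_top_of_sub_rat _ (fieldF1 p q s) rfl
  have mem : ∀ x ∈ ({((Real.sqrt (p * q) : ℝ) : ℂ), ((Real.sqrt (p * s) : ℝ) : ℂ),
     ((Real.sqrt 2 : ℝ) : ℂ)} : Set ℂ), x ∈ fieldF1 p q s := IntermediateField.subset_adjoin ℚ _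
  let b : fieldF1 p q s := ⟨((Real.sqrt (p * q) : ℝ) : ℂ), mem _ (by simp)⟩
  let c : fieldF1 p q s := ⟨((Real.sqrt (p * s) : ℝ) : ℂ), mem _ (by simp)⟩
  let a : fieldF1 p q s := ⟨((Real.sqrt 2 : ℝ) : ℂ), mem _ (by simp)⟩
  have hset : {x : fieldF1 p q s | (x : ℂ) ∈ ({((Real.sqrt (p * q) : ℝ) : ℂ), ((Real.sqrt (p * s) : ℝ) : ℂ),
     ((Real.sqrt 2 : ℝ) : ℂ)} : Set ℂ)} = {a, b, c} := by
    ext x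
    simp only [Set.mem_ofPred_eq, Set.mem_insert_iff, Set.mem_singleton_iff, Subtype.ext_iff, a, b, c]
    tauto
  rw [hset] at htop
  have ha : a ^ 2 = ((2 : ℕ) : fieldF1 p q s) := Subtype.ext (by
    push_cast; exact sqrt_cast_sq 2 2 (by simp))
  have hb : b ^ 2 = ((p * q : ℕ) : fieldF1 p q s) := Subtype.ext (by
    have := sqrt_cast_sq (p * q) (p * q) (by simp)
    push_cast at this ⊢; exact this)
  have hc : c ^ 2 = ((p * s : ℕ) : fieldF1 p q s) := Subtype.ext (by
    have := sqrt_cast_sq (p * s) (p * s) (by simp)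
    push_cast at this ⊢; exact this)
  have H : Setup (fieldF1 p q s) p q s a b c :=
    { hp := hp, hq := hq, hs := hs, hpq := hpq, hps := hps, hqs := hqs, hp8 := hp8, hq8 := hq8, hs4 := hs4
      rq := (ZMod.exists_sq_eq_prime_iff_of_mod_four_eq_one (p := p) (q := q) (by omega) (by omega)).2 hQRq
      rs := (ZMod.exists_sq_eq_prime_iff_of_mod_four_eq_one (p := p) (q := s) (by omega) (by omega)).2 hQRs
      tr := totReal_of_gens {a, b, c} htop (by
        rintro x (rfl | rfl | rfl)
        · exact ⟨_, ha⟩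
        · exact ⟨_, hb⟩
        · exact ⟨_, hc⟩)
      ha := by rw [ha]; simp
      hb := hb
      hc := hc
      htop := htop }
  exact fun P => sylow_klein H.card_eq H.exponent P
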